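/- arXiv:1201.1022 — 11 statements merged into one kernel-verified Lean document; each statement's English description precedes it below -/
import Mathlib

section
/- Let v : ℝ³ ∖ {0} → ℝ be a smooth function that is positively homogeneous of order 1. Let y ∈ S² be a point at which the Hessian quadratic form D²v(y) changes sign (is indefinite), let a ∈ S² be linearly independent from y, and let G ⊆ ℝ³ ∖ {0} be an open set containing y. Then sup_{x ∈ G} ∂_a v(x) > ∂_a v(y), i.e. the directional derivative v_a does not attain its supremum over G at y. -/
/-- Lemma 0: for a smooth positively 1-homogeneous function `v` on `ℝ³ ∖ {0}`,
if the Hessian quadratic form of `v` at a unit vector `y` is indefinite, `a` is a unit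
vector linearly independent from `y`, and `G` is an open neighbourhood of `y` inside
`ℝ³ ∖ {0}`, then the directional derivative `∂ₐv` does not attain its supremum over `G`
at `y`: some point of `G` has a strictly larger value. -/
theorem directional_derivative_no_sup_at_indefinite_point
    (v : EuclideanSpace ℝ (Fin 3) → ℝ)
    (h_sm : ContDiffOn ℝ (⊤ : ℕ∞) v {x | x ≠ 0})
    (h_hom : ∀ t : ℝ, 0 < t → ∀ x : EuclideanSpace ℝ (Fin 3), x ≠ 0 →
      v (t • x) = t * v x)
    (y a : EuclideanSpace ℝ (Fin 3)) (hy : ‖y‖ = 1) (ha : ‖a‖ = 1)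
    (h_ind : LinearIndependent ℝ ![y, a])
    (h_pos : ∃ p : EuclideanSpace ℝ (Fin 3), 0 < iteratedFDeriv ℝ 2 v y ![p, p])
    (h_neg : ∃ q : EuclideanSpace ℝ (Fin 3), iteratedFDeriv ℝ 2 v y ![q, q] < 0)
    (G : Set (EuclideanSpace ℝ (Fin 3))) (hG_open : IsOpen G) (hyG : y ∈ G)
    (hG_sub : G ⊆ {x | x ≠ 0}) :
    ∃ x ∈ G, fderiv ℝ v y a < fderiv ℝ v x a := by
  obtain ⟨p, hp⟩ := h_pos
  obtain ⟨q, hq⟩ := h_neg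
  rw [iteratedFDeriv_two_apply] at hp hq
  simp only [Matrix.cons_val_zero, Matrix.cons_val_one] at hp hq
  by_contra! hmax
  have hopen : IsOpen {x : EuclideanSpace ℝ (Fin 3) | x ≠ 0} := isOpen_ne
  have hcd : ∀ x : EuclideanSpace ℝ (Fin 3), x ≠ 0 → ContDiffAt ℝ (⊤ : ℕ∞) v x :=
    fun x hx => h_sm.contDiffAt (hopen.mem_nhds hx)
  have hdiff : ∀ x : EuclideanSpace ℝ (Fin 3), x ≠ 0 → DifferentiableAt ℝ v x :=
    fun x hx => (hcd x hx).differentiableAt (by simp)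
  have hy0 : y ≠ 0 := hG_sub hyG
  have hd2 : DifferentiableAt ℝ (fderiv ℝ v) y := by
    have h1 : ContDiffAt ℝ 1 (fderiv ℝ v) y :=
      (hcd y hy0).fderiv_right (m := 1) (by
        have h : ((2 : ℕ∞) : WithTop ℕ∞) ≤ ((⊤ : ℕ∞) : WithTop ℕ∞) := by
          exact_mod_cast le_top
        convert h using 1
        norm_num)
    exact h1.differentiableAt (by simp)
  set B := fderiv ℝ (fderiv ℝ v) y with hB
  have hsymm : ∀ b c, B b c = B c b := by
    have h : IsSymmSndFDerivAt ℝ v y :=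
      (hcd y hy0).isSymmSndFDerivAt (by
        simp only [minSmoothness_of_isRCLikeNormedField]
        have h : ((2 : ℕ∞) : WithTop ℕ∞) ≤ ((⊤ : ℕ∞) : WithTop ℕ∞) := by
          exact_mod_cast le_top
        exact h)
    exact fun b c => h b c
  -- the gradient of the directional derivative vanishes at a local maximum
  have hBa : ∀ b, B b a = 0 := by
    intro b
    have hloc : IsLocalMax (fun x => fderiv ℝ v x a) y := by
      filter_upwards [hG_open.mem_nhds hyG] with x hx using hmax x hx
    have h0 := hloc.fderiv_eq_zero
    have h1 : HasFDerivAt (fun x => fderiv ℝ v x a) _ y :=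
      hd2.hasFDerivAt.clm_apply (hasFDerivAt_const a y)
    rw [h1.fderiv] at h0
    have h2 := congrArg (fun L => L b) h0
    simpa using h2
  -- Euler identity
  have heuler : ∀ x : EuclideanSpace ℝ (Fin 3), x ≠ 0 → fderiv ℝ v x x = v x := by
    intro x hx
    have h1 : HasDerivAt (fun t : ℝ => t • x) ((1 : ℝ) • x) 1 :=
      (hasDerivAt_id (1 : ℝ)).smul_const x
    have h2 : HasFDerivAt v (fderiv ℝ v x) ((1 : ℝ) • x) := by
      rw [one_smul]; exact (hdiff x hx).hasFDerivAt
    have h3 := h2.comp_hasDerivAt (1 : ℝ) h1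
    have h4 : HasDerivAt (fun t : ℝ => t * v x) (1 * v x) 1 :=
      (hasDerivAt_id (1 : ℝ)).mul_const (v x)
    have h5 : (fun t : ℝ => t * v x) =ᶠ[nhds 1] (v ∘ fun t : ℝ => t • x) := by
      filter_upwards [lt_mem_nhds (zero_lt_one : (0 : ℝ) < 1)] with t ht
      exact (h_hom t ht x hx).symm
    have h6 := (h3.congr_of_eventuallyEq h5).unique h4
    simpa using h6
  have hBy : ∀ b, B b y = 0 := by
    intro b
    have h1 : HasFDerivAt (fun x => fderiv ℝ v x x) _ y :=
      hd2.hasFDerivAt.clm_apply (hasFDerivAt_id y)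
    have h2 : v =ᶠ[nhds y] (fun x => fderiv ℝ v x x) := by
      filter_upwards [hopen.mem_nhds hy0] with x hx
      exact (heuler x hx).symm
    have h3 := (h1.congr_of_eventuallyEq h2).unique (hdiff y hy0).hasFDerivAt
    have h4 := congrArg (fun L => L b) h3
    simpa using h4
  have hp_notin : p ∉ Submodule.span ℝ (Set.range ![y, a]) := by
    intro hmem
    rw [Matrix.range_cons, Matrix.range_cons, Matrix.range_empty, Set.union_empty,
      Set.singleton_union, Submodule.mem_span_pair] at hmem
    obtain ⟨s, t, hst⟩ := hmem
    have : B p p = 0 := by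
      conv_lhs => rw [← hst]
      rw [hst, ← hst, map_add, map_smul, map_smul, hBa, hBy]
      simp
    linarith
  have hli : LinearIndependent ℝ ![p, y, a] :=
    linearIndependent_finCons.mpr ⟨h_ind, hp_notin⟩
  have hspan := hli.span_eq_top_of_card_eq_finrank (by simp)
  have hqm : q ∈ Submodule.span ℝ (Set.range ![p, y, a]) := by rw [hspan]; trivial
  obtain ⟨c, hc⟩ := (Submodule.mem_span_range_iff_exists_fun ℝ).mp hqm
  simp only [Fin.sum_univ_three, Matrix.cons_val] at hc
  have key : ∀ b, B b q = c 0 * B b p := by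
    intro b
    rw [← hc, map_add, map_add, map_smul, map_smul, map_smul, hBa, hBy]
    simp
  have : B q q = c 0 * (c 0 * B p p) := by
    rw [key q, hsymm q p, key p]
  nlinarith [mul_nonneg (mul_self_nonneg (c 0)) hp.le]
end

section
/- Let v : ℝ⁴ ∖ {0} → ℝ be real analytic and positively homogeneous of order 1, and suppose v satisfies a linear uniformly elliptic equation Σ_{i,j} a_{ij}(x/|x|) ∂²v/∂x_i∂x_j = 0 on ℝ⁴ ∖ {0}, where the coefficients a_{ij} are smooth functions on S³ and there is C ≥ 1 with (1/C)|ξ|² ≤ Σ a_{ij}(θ)ξ_iξ_j ≤ C|ξ|² for all θ ∈ S³, ξ ∈ ℝ⁴. If the Hessian D²v(x) has rank at most 2 at every point x ∈ ℝ⁴ ∖ {0} (equivalently, the gradient map ∇v : S³ → ℝ⁴ has rank at most 2), then v is a linear function. -/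
open Filter Topology

/-- The standard basis vectors of `ℝ⁴`. -/
noncomputable def bb (i : Fin 4) : EuclideanSpace ℝ (Fin 4) := EuclideanSpace.single i 1

/-- The trace `Σ Aᵢⱼ B(eᵢ,eⱼ)`. -/
noncomputable def trA (A : Fin 4 → Fin 4 → ℝ)
    (B : EuclideanSpace ℝ (Fin 4) →L[ℝ] EuclideanSpace ℝ (Fin 4) →L[ℝ] ℝ) : ℝ :=
  ∑ i, ∑ j, A i j * B (bb i) (bb j)

/-- Lower ellipticity bound. -/
def Ell (A : Fin 4 → Fin 4 → ℝ) (c : ℝ) : Prop :=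
  0 < c ∧ ∀ ξ : EuclideanSpace ℝ (Fin 4), c * ‖ξ‖ ^ 2 ≤ ∑ i, ∑ j, A i j * ξ i * ξ j

lemma vec_eq_sum (x : EuclideanSpace ℝ (Fin 4)) : x = ∑ i, x i • bb i := by
  ext j
  simp [bb, Fin.sum_univ_four]
  fin_cases j <;> simp

lemma bil_eq_sum (B : EuclideanSpace ℝ (Fin 4) →L[ℝ] EuclideanSpace ℝ (Fin 4) →L[ℝ] ℝ)
    (x y : EuclideanSpace ℝ (Fin 4)) :
    B x y = ∑ i, ∑ j, x i * y j * B (bb i) (bb j) := by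
  conv_lhs => rw [vec_eq_sum x, vec_eq_sum y]
  simp only [map_sum, map_smul, sum_apply, smul_apply,
    smul_eq_mul, Finset.mul_sum]
  rw [Finset.sum_comm]
  refine Finset.sum_congr rfl fun i _ => Finset.sum_congr rfl fun j _ => by ring

lemma trA_psd {A : Fin 4 → Fin 4 → ℝ} {c : ℝ} (hA : Ell A c)
    {B : EuclideanSpace ℝ (Fin 4) →L[ℝ] EuclideanSpace ℝ (Fin 4) →L[ℝ] ℝ}
    (hs : ∀ x y, B x y = B y x) (hp : ∀ x, 0 ≤ B x x) :
    0 ≤ trA A B ∧ (trA A B = 0 → B = 0) := by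
  let M : Matrix (Fin 4) (Fin 4) ℝ := Matrix.of fun i j => B (bb i) (bb j)
  have hM : M.PosSemidef := by
    rw [Matrix.posSemidef_iff_dotProduct_mulVec]
    refine ⟨?_, fun x => ?_⟩
    · ext i j
      simp [M, hs (bb i) (bb j)]
    · have := hp (WithLp.toLp 2 x)
      rw [bil_eq_sum] at this
      refine this.trans_eq ?_
      simp only [dotProduct, Matrix.mulVec, M, Matrix.of_apply, star_trivial, Finset.mul_sum]
      refine Finset.sum_congr rfl fun i _ => Finset.sum_congr rfl fun j _ => by ring
  obtain ⟨D, hD⟩ : ∃ D : Matrix (Fin 4) (Fin 4) ℝ, M = D.conjTranspose * D := by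
    open scoped MatrixOrder in
    exact CStarAlgebra.nonneg_iff_eq_star_mul_self.mp hM.nonneg
  have hBD : ∀ i j, B (bb i) (bb j) = ∑ k, D k i * D k j := by
    intro i j
    have := congrFun (congrFun hD i) j
    simpa [M, Matrix.mul_apply] using this
  let d : Fin 4 → EuclideanSpace ℝ (Fin 4) := fun k => WithLp.toLp 2 (D k)
  have htr : trA A B = ∑ k, ∑ i, ∑ j, A i j * d k i * d k j := by
    simp only [trA, hBD, Finset.mul_sum, d]
    rw [Finset.sum_comm' (t' := Finset.univ) (s' := fun _ => Finset.univ) (by simp)]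
    have : ∀ j : Fin 4, ∑ i, ∑ k, A i j * (D k i * D k j) = ∑ k, ∑ i, A i j * (D k i * D k j) :=
      fun j => Finset.sum_comm
    simp only [this]
    rw [Finset.sum_comm]
    refine Finset.sum_congr rfl fun k _ => ?_
    rw [Finset.sum_comm]
    refine Finset.sum_congr rfl fun i _ => Finset.sum_congr rfl fun j _ => by ring
  have hk : ∀ k, c * ‖d k‖ ^ 2 ≤ ∑ i, ∑ j, A i j * d k i * d k j := fun k => hA.2 (d k)
  have hk0 : ∀ k, 0 ≤ ∑ i, ∑ j, A i j * d k i * d k j := fun k =>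
    (mul_nonneg hA.1.le (sq_nonneg _)).trans (hk k)
  refine ⟨htr ▸ Finset.sum_nonneg fun k _ => hk0 k, fun h0 => ?_⟩
  rw [htr, Finset.sum_eq_zero_iff_of_nonneg (fun k _ => hk0 k)] at h0
  have hd : ∀ k, d k = 0 := by
    intro k
    have h1 := hk k
    rw [h0 k (Finset.mem_univ k)] at h1
    have h2 : ‖d k‖ ^ 2 = 0 := le_antisymm (by nlinarith [hA.1, sq_nonneg ‖d k‖]) (sq_nonneg _)
    simpa using h2
  have hD0 : ∀ k i, D k i = 0 := by
    intro k i
    have := congrArg (fun z : EuclideanSpace ℝ (Fin 4) => z i) (hd k)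
    simpa [d] using this
  ext x y
  rw [bil_eq_sum]
  simp [hBD, hD0]

lemma trA_neg (A : Fin 4 → Fin 4 → ℝ)
    (B : EuclideanSpace ℝ (Fin 4) →L[ℝ] EuclideanSpace ℝ (Fin 4) →L[ℝ] ℝ) :
    trA A (-B) = - trA A B := by
  simp [trA]

lemma exists_minor {A : Fin 4 → Fin 4 → ℝ} {c : ℝ} (hA : Ell A c)
    {B : EuclideanSpace ℝ (Fin 4) →L[ℝ] EuclideanSpace ℝ (Fin 4) →L[ℝ] ℝ}
    (hs : ∀ x y, B x y = B y x) (h0 : trA A B = 0) (hB : B ≠ 0) :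
    ∃ u w, B u u * B w w - B u w * B u w ≠ 0 := by
  have h1 : ∃ u, B u u < 0 := by
    by_contra! h
    exact hB ((trA_psd hA hs h).2 h0)
  have h2 : ∃ u, 0 < B u u := by
    by_contra! h
    have := (trA_psd hA (B := -B) (fun x y => by simp [hs x y]) (fun x => by simpa using h x)).2
      (by rw [trA_neg, h0, neg_zero])
    refine hB ?_
    ext x y
    have h3 := congrArg (fun T => T x y) this
    simpa using h3
  obtain ⟨u, hu⟩ := h1
  obtain ⟨w, hw⟩ := h2
  exact ⟨u, w, by nlinarith [mul_pos_of_neg_of_neg hu (neg_lt_zero.mpr hw), sq_nonneg (B u w)]⟩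

/-- The 3×3 minors vanish. -/
lemma minor_of_rank
    {B : EuclideanSpace ℝ (Fin 4) →L[ℝ] EuclideanSpace ℝ (Fin 4) →L[ℝ] ℝ}
    (hr : Matrix.rank (Matrix.of fun i j => B (bb i) (bb j)) ≤ 2)
    (p q : Fin 3 → EuclideanSpace ℝ (Fin 4)) :
    Matrix.det (Matrix.of fun i j => B (p i) (q j)) = 0 := by
  let M : Matrix (Fin 4) (Fin 4) ℝ := Matrix.of fun i j => B (bb i) (bb j)
  let R : Matrix (Fin 3) (Fin 4) ℝ := Matrix.of fun i j => p i j
  let S : Matrix (Fin 4) (Fin 3) ℝ := Matrix.of fun i j => q j i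
  have h : (Matrix.of fun i j => B (p i) (q j)) = R * M * S := by
    ext i j
    simp only [Matrix.of_apply, Matrix.mul_apply, R, M, S, Finset.sum_mul]
    rw [bil_eq_sum, Finset.sum_comm]
    refine Finset.sum_congr rfl fun i _ => Finset.sum_congr rfl fun j _ => by ring
  by_contra hdet
  have h3 : (R * M * S).rank = 3 := by
    rw [← h, Matrix.rank_of_isUnit _ ((Matrix.isUnit_iff_isUnit_det _).mpr (isUnit_iff_ne_zero.mpr hdet))]
    simp
  have h4 : (R * M * S).rank ≤ M.rank :=
    (Matrix.rank_mul_le_left _ _).trans (Matrix.rank_mul_le_right _ _)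
  have h5 : M.rank ≤ 2 := hr
  omega

lemma snd_deriv_nonneg_of_isLocalMin {h hp : ℝ → ℝ} {hpp : ℝ} 
    (h1 : ∀ t, HasDerivAt h (hp t) t) (h2 : HasDerivAt hp hpp 0) (hm : IsLocalMin h 0) :
    0 ≤ hpp := by
  have hd : deriv h = hp := funext fun t => (h1 t).deriv
  by_contra! hneg
  have hmax : IsLocalMax h 0 := isLocalMax_of_deriv_deriv_neg (by rw [hd, h2.deriv]; exact hneg)
    hm.deriv_eq_zero (h1 0).continuousAt
  have hc : h =ᶠ[𝓝 0] fun _ => h 0 := by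
    filter_upwards [hm, hmax] with t a b using le_antisymm b a
  have h3 : deriv h =ᶠ[𝓝 0] fun _ => 0 := by
    filter_upwards [hc.eventuallyEq_nhds] with t ht
    rw [ht.deriv_eq]; simp
  rw [hd] at h3
  have := h3.deriv_eq
  rw [h2.deriv] at this
  simp at this
  linarith

lemma hess_psd_of_isLocalMin {f : EuclideanSpace ℝ (Fin 4) → ℝ} (hf : ContDiff ℝ 2 f)
    {y : EuclideanSpace ℝ (Fin 4)} (hm : IsLocalMin f y) (p : EuclideanSpace ℝ (Fin 4)) :
    0 ≤ fderiv ℝ (fderiv ℝ f) y p p := by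
  have hl : ∀ t : ℝ, HasDerivAt (fun t : ℝ => y + t • p) p t := fun t => by
    simpa using ((hasDerivAt_id t).smul_const p).const_add y
  have hd1 : Differentiable ℝ f := hf.differentiable (by norm_num)
  have hd2 : Differentiable ℝ (fderiv ℝ f) :=
    (hf.fderiv_right (m := 1) (by norm_num)).differentiable (by norm_num)
  refine snd_deriv_nonneg_of_isLocalMin (h := fun t => f (y + t • p))
    (hp := fun t => fderiv ℝ f (y + t • p) p) (fun t => ?_) ?_ ?_
  · exact ((hd1 (y + t • p)).hasFDerivAt.comp_hasDerivAt t (hl t))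
  · have h2 := (hd2 (y + (0:ℝ) • p)).hasFDerivAt.comp_hasDerivAt (0:ℝ) (hl 0)
    have h3 := h2.clm_apply (hasDerivAt_const (0:ℝ) p)
    simpa using h3
  · have hc : ContinuousAt (fun t : ℝ => y + t • p) 0 := (hl 0).continuousAt
    have : Tendsto (fun t : ℝ => y + t • p) (𝓝 0) (𝓝 y) := by simpa [ContinuousAt] using hc
    have := this.eventually hm
    simpa [IsLocalMin, IsMinFilter] using this

/-- Gaussian barrier centred at `c`. -/
noncomputable def gs (α : ℝ) (c y : EuclideanSpace ℝ (Fin 4)) : ℝ := Real.exp (-α * ‖y - c‖ ^ 2)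

lemma gs_fderiv (α : ℝ) (c y : EuclideanSpace ℝ (Fin 4)) :
    HasFDerivAt (gs α c) ((gs α c y * (-2 * α)) • innerSL ℝ (y - c)) y := by
  have h1 : HasFDerivAt (fun y => ‖y - c‖ ^ 2) (2 • (innerSL ℝ (y - c))) y := by
    have := ((hasFDerivAt_id (𝕜 := ℝ) y).sub_const c).norm_sq
    simpa using this
  have := (h1.const_mul (-α)).exp
  refine this.congr_fderiv ?_
  ext p
  simp [gs]
  ring

lemma gs_fderiv2 (α : ℝ) (c y p q : EuclideanSpace ℝ (Fin 4)) :
    fderiv ℝ (fderiv ℝ (gs α c)) y p q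
      = gs α c y * (4 * α ^ 2 * (inner ℝ (y - c) p * inner ℝ (y - c) q) - 2 * α * inner ℝ p q) := by
  have h0 : fderiv ℝ (gs α c) = fun y => (gs α c y * (-2 * α)) • innerSL ℝ (y - c) :=
    funext fun y => (gs_fderiv α c y).fderiv
  rw [h0]
  have h1 := (gs_fderiv α c y).mul_const (-2 * α)
  have h2 : HasFDerivAt (fun y => innerSL ℝ (y - c)) (innerSL ℝ (E := EuclideanSpace ℝ (Fin 4))) y := by
    have h3 := ((innerSL ℝ (E := EuclideanSpace ℝ (Fin 4))).hasFDerivAt (x := y - c))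
    have := h3.comp y ((hasFDerivAt_id (𝕜 := ℝ) y).sub_const c)
    exact this.congr_fderiv (by ext; simp)
  have h4 : fderiv ℝ (fun y => (gs α c y * (-2 * α)) • innerSL ℝ (y - c)) y = _ :=
    (h1.smul h2).fderiv
  rw [h4]
  simp only [add_apply, smul_apply, ContinuousLinearMap.smulRight_apply, innerSL_apply_apply,
    smul_eq_mul]
  have h5 : (innerSL ℝ (E := EuclideanSpace ℝ (Fin 4)) :
    EuclideanSpace ℝ (Fin 4) →L[ℝ] EuclideanSpace ℝ (Fin 4) →L[ℝ] ℝ) p q = inner ℝ p q := rfl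
  rw [h5]
  ring

lemma gs_contDiff (α : ℝ) (c : EuclideanSpace ℝ (Fin 4)) : ContDiff ℝ 2 (gs α c) := by
  unfold gs
  exact (contDiff_const.mul ((contDiff_id.sub contDiff_const).norm_sq ℝ)).exp

lemma inner_bb (z : EuclideanSpace ℝ (Fin 4)) (i : Fin 4) : inner ℝ z (bb i) = z i := by
  simp [bb, EuclideanSpace.inner_single_right]

/-- Strong maximum principle for entire nonnegative solutions vanishing at the origin. -/
lemma max_principle {A : Fin 4 → Fin 4 → ℝ} {κ : ℝ} (hA : Ell A κ)
    {f : EuclideanSpace ℝ (Fin 4) → ℝ} (hf : ContDiff ℝ 2 f) (hpos : ∀ y, 0 ≤ f y)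
    (h0 : f 0 = 0) (heq : ∀ y, trA A (fderiv ℝ (fderiv ℝ f) y) = 0) (c) : f c = 0 := by
  by_contra hc
  have hc' : 0 < f c := lt_of_le_of_ne (hpos c) (Ne.symm hc)
  set m := f c / 2 with hm
  have hm0 : 0 < m := by positivity
  obtain ⟨ρ, hρ, hball⟩ : ∃ ρ > 0, ∀ y, ‖y - c‖ < ρ → m < f y := by
    have : ∀ᶠ y in 𝓝 c, m < f y := hf.continuous.continuousAt.eventually (lt_mem_nhds (by linarith))
    obtain ⟨ρ, hρ, h⟩ := Metric.eventually_nhds_iff.mp this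
    exact ⟨ρ, hρ, fun y hy => h (by rwa [dist_eq_norm])⟩
  set τ := ∑ i, ∑ j, A i j * inner ℝ (bb i) (bb j) with hτ
  obtain ⟨α, hα, hαρ⟩ : ∃ α : ℝ, 0 < α ∧ τ < 2 * α * (κ * ρ ^ 2) := by
    have : 0 < κ * ρ ^ 2 := mul_pos hA.1 (by positivity)
    refine ⟨(|τ| + 1) / (κ * ρ ^ 2), by positivity, ?_⟩
    rw [mul_assoc, div_mul_cancel₀ _ this.ne']
    linarith [le_abs_self τ, abs_nonneg τ]
  set R := ‖c‖ + 1 with hR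
  set K := Real.exp (-α * R ^ 2) with hK
  let h : EuclideanSpace ℝ (Fin 4) → ℝ := fun y => f y - m * (gs α c y - K)
  have hh : ContDiff ℝ 2 h := hf.sub (contDiff_const.mul ((gs_contDiff α c).sub contDiff_const))
  obtain ⟨y, hyB, hymin⟩ := (isCompact_closedBall c R).exists_isMinOn
    ⟨c, Metric.mem_closedBall_self (by positivity)⟩ hh.continuous.continuousOn
  have hneg : h y < 0 := by
    have h1 : h y ≤ h 0 := hymin (by simp [hR])
    have h2 : K < gs α c 0 := by
      simp only [hK, gs, Real.exp_lt_exp, zero_sub, norm_neg, hR]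
      nlinarith [norm_nonneg c]
    have : h 0 < 0 := by simp only [h, h0]; nlinarith
    linarith
  have hg1 : gs α c y ≤ 1 := by
    simp only [gs, Real.exp_le_one_iff]
    nlinarith [sq_nonneg ‖y - c‖]
  have hKpos : 0 < K := Real.exp_pos _
  have hyρ : ρ ≤ ‖y - c‖ := by
    by_contra! hlt
    have := hball y hlt
    have : 0 < h y := by simp only [h]; nlinarith
    linarith
  have hyR : ‖y - c‖ < R := by
    rcases lt_or_eq_of_le (by simpa [dist_eq_norm] using hyB : ‖y - c‖ ≤ R) with h1 | h1
    · exact h1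
    · exfalso
      have : h y = f y := by simp [h, gs, h1, hK]
      linarith [hpos y]
  have hloc : IsLocalMin h y :=
    hymin.isLocalMin (mem_of_superset (Metric.isOpen_ball.mem_nhds
      (by simpa [dist_eq_norm] using hyR : y ∈ Metric.ball c R)) Metric.ball_subset_closedBall)
  have hsym : ∀ p q, fderiv ℝ (fderiv ℝ h) y p q = fderiv ℝ (fderiv ℝ h) y q p :=
    hh.contDiffAt.isSymmSndFDerivAt (by simp)
  have h1 := (trA_psd hA hsym (hess_psd_of_isLocalMin hh hloc)).1
  have hd : ∀ p q, fderiv ℝ (fderiv ℝ h) y p q = fderiv ℝ (fderiv ℝ f) y p q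
      - m * fderiv ℝ (fderiv ℝ (gs α c)) y p q := by
    have e1 : fderiv ℝ h = fun y => fderiv ℝ f y - m • fderiv ℝ (gs α c) y := by
      funext y
      have a1 := (hf.differentiable (by norm_num) y).hasFDerivAt
      have a2 := ((gs_contDiff α c).differentiable (by norm_num) y).hasFDerivAt
      exact (a1.sub ((a2.sub_const K).const_mul m)).fderiv
    have b1 := ((hf.fderiv_right (m := 1) (by norm_num)).differentiable (by norm_num) y).hasFDerivAt
    have b2 := (((gs_contDiff α c).fderiv_right (m := 1) (by norm_num)).differentiable
      (by norm_num) y).hasFDerivAt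
    intro p q
    have b3 : fderiv ℝ (fun y => fderiv ℝ f y - m • fderiv ℝ (gs α c) y) y = _ :=
      (b1.sub (b2.const_smul m)).fderiv
    rw [e1, b3]
    simp
  have hq : κ * ρ ^ 2 ≤ ∑ i, ∑ j, A i j * (y - c) i * (y - c) j := by
    refine le_trans ?_ (hA.2 (y - c))
    have := hA.1
    gcongr
  have htr : trA A (fderiv ℝ (fderiv ℝ h) y) = trA A (fderiv ℝ (fderiv ℝ f) y)
      - m * (gs α c y * (4 * α ^ 2 * (∑ i, ∑ j, A i j * (y - c) i * (y - c) j) - 2 * α * τ)) := by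
    simp only [trA, hd, gs_fderiv2, hτ, inner_bb, Finset.mul_sum, ← Finset.sum_sub_distrib]
    refine Finset.sum_congr rfl fun i _ => Finset.sum_congr rfl fun j _ => by ring
  rw [htr, heq, zero_sub] at h1
  have hgp : 0 < gs α c y := Real.exp_pos _
  have : 0 < 4 * α ^ 2 * (∑ i, ∑ j, A i j * (y - c) i * (y - c) j) - 2 * α * τ := by
    have : 4 * α ^ 2 * (κ * ρ ^ 2) ≤ 4 * α ^ 2 * (∑ i, ∑ j, A i j * (y - c) i * (y - c) j) := by
      gcongr
    nlinarith
  have := mul_pos hm0 (mul_pos hgp this)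
  linarith

section Taylor

set_option linter.unusedSectionVars false

variable {X Y : Type*} [NormedAddCommGroup X] [NormedSpace ℝ X]
  [NormedAddCommGroup Y] [NormedSpace ℝ Y] [CompleteSpace Y]

/-- The homogeneous Taylor term of degree `k` of `f` at `x₀`. -/
noncomputable def tay (x₀ : X) (k : ℕ) (f : X → Y) (y : X) : Y :=
  ((k.factorial : ℝ)⁻¹) • iteratedFDeriv ℝ k f x₀ (fun _ => y)

lemma tay_contDiff (x₀ : X) (k : ℕ) (f : X → Y) {n : WithTop ℕ∞} : ContDiff ℝ n (tay x₀ k f) := by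
  unfold tay
  have h : ContDiff ℝ n (fun y : X => (fun _ : Fin k => y)) := contDiff_pi.mpr fun _ => contDiff_id
  exact contDiff_const.smul ((iteratedFDeriv ℝ k f x₀).contDiff.comp h)

lemma tay_hasFDerivAt {x₀ : X} {f : X → Y} (hf : AnalyticAt ℝ f x₀) (k : ℕ) (y : X) :
    HasFDerivAt (tay x₀ (k + 1) f) (tay x₀ k (fderiv ℝ f) y) y := by
  set M := iteratedFDeriv ℝ (k + 1) f x₀ with hM
  have h1 : HasFDerivAt (fun y : X => (fun _ : Fin (k + 1) => y))
      (ContinuousLinearMap.pi fun _ => ContinuousLinearMap.id ℝ X) y :=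
    hasFDerivAt_pi.mpr fun _ => hasFDerivAt_id y
  have h2 := ((M.hasFDerivAt (fun _ => y)).comp y h1).const_smul (((k + 1).factorial : ℝ)⁻¹)
  refine HasFDerivAt.congr_fderiv h2 ?_
  ext e
  have hsymm : ∀ i : Fin (k + 1), M (Function.update (fun _ => y) i e)
      = iteratedFDeriv ℝ k (fderiv ℝ f) x₀ (fun _ => y) e := by
    intro i
    have h3 : Function.update (fun _ : Fin (k + 1) => y) i e
        = Function.update (fun _ => y) (Fin.last k) e ∘ Equiv.swap i (Fin.last k) := by
      funext j
      by_cases hj : j = i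
      · subst hj; simp
      · by_cases hl : j = Fin.last k
        · subst hl
          simp [Function.update, hj, Ne.symm hj]
        · simp [Function.update, hj, hl, Equiv.swap_apply_of_ne_of_ne hj hl]
    have hc : ContDiffAt ℝ ⊤ f x₀ := hf.contDiffAt
    rw [h3, hM, hc.iteratedFDeriv_comp_perm, iteratedFDeriv_succ_apply_right]
    congr 2
    · funext j
      exact Function.update_of_ne (Fin.castSucc_lt_last j).ne _ _
    · simp
  simp only [tay, ContinuousLinearMap.comp_apply, smul_apply,
    ContinuousMultilinearMap.linearDeriv_apply, ContinuousLinearMap.pi_apply,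
    ContinuousLinearMap.id_apply, hsymm, Finset.sum_const, Finset.card_univ, Fintype.card_fin]
  rw [← Nat.cast_smul_eq_nsmul ℝ, smul_smul, Nat.factorial_succ]
  congr 1
  have : ((k.factorial : ℝ)) ≠ 0 := by exact_mod_cast k.factorial_ne_zero
  push_cast
  field_simp

lemma tay_smul (x₀ : X) (k : ℕ) (f : X → Y) (t : ℝ) (y : X) :
    tay x₀ k f (t • y) = t ^ k • tay x₀ k f y := by
  have := (iteratedFDeriv ℝ k f x₀).map_smul_univ (fun _ => t) (fun _ => y)
  simp only [Finset.prod_const, Finset.card_univ, Fintype.card_fin] at this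
  rw [tay, tay, this, smul_comm]

lemma exists_series {x₀ : X} {f : X → Y} (hf : AnalyticAt ℝ f x₀) :
    ∃ p : FormalMultilinearSeries ℝ X Y, HasFPowerSeriesAt f p x₀ ∧
      ∀ k y, p k (fun _ => y) = tay x₀ k f y := by
  obtain ⟨p, r, hp⟩ := hf
  refine ⟨p, ⟨r, hp⟩, fun k y => ?_⟩
  have : ((k.factorial : ℝ)) ≠ 0 := by exact_mod_cast k.factorial_ne_zero
  rw [tay, ← hp.factorial_smul, ← Nat.cast_smul_eq_nsmul ℝ, smul_smul, inv_mul_cancel₀ this, one_smul]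

lemma tay_zero {x₀ : X} {f : X → Y} (hf : AnalyticAt ℝ f x₀) (h : ∀ k y, tay x₀ k f y = 0) :
    f =ᶠ[𝓝 x₀] fun _ => 0 := by
  obtain ⟨p, hp, hpt⟩ := exists_series hf
  have h1 := hp.eventually_hasSum_sub
  filter_upwards [h1] with y hy
  simp only [hpt, h] at hy
  exact hy.unique hasSum_zero

lemma tay_tendsto {x₀ : X} {f : X → Y} (hf : AnalyticAt ℝ f x₀) {k : ℕ}
    (h : ∀ j < k, ∀ y, tay x₀ j f y = 0) (y : X) :
    Tendsto (fun t : ℝ => (t ^ k)⁻¹ • f (x₀ + t • y)) (𝓝[>] 0) (𝓝 (tay x₀ k f y)) := by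
  obtain ⟨p, hp, hpt⟩ := exists_series hf
  have h1 := hp.isBigO_sub_partialSum_pow (k + 1)
  have hl : Tendsto (fun t : ℝ => t • y) (𝓝[>] 0) (𝓝 0) := by
    have : Tendsto (fun t : ℝ => t • y) (𝓝 0) (𝓝 ((0:ℝ) • y)) :=
      (continuous_id.smul continuous_const).tendsto 0
    rw [zero_smul] at this
    exact this.mono_left nhdsWithin_le_nhds
  have hps : ∀ z, p.partialSum (k + 1) z = tay x₀ k f z := by
    intro z
    rw [FormalMultilinearSeries.partialSum, Finset.sum_range_succ, Finset.sum_eq_zero, zero_add, hpt]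
    intro j hj
    rw [hpt, h j (Finset.mem_range.mp hj)]
  obtain ⟨K, hK⟩ := (h1.comp_tendsto hl).bound
  rw [tendsto_iff_norm_sub_tendsto_zero]
  have hlim : Tendsto (fun t : ℝ => K * ‖y‖ ^ (k + 1) * t) (𝓝[>] 0) (𝓝 0) := by
    have : Tendsto (fun t : ℝ => K * ‖y‖ ^ (k + 1) * t) (𝓝 0) (𝓝 (K * ‖y‖ ^ (k + 1) * 0)) :=
      (continuous_const.mul continuous_id).tendsto 0
    rw [mul_zero] at this
    exact this.mono_left nhdsWithin_le_nhds
  refine squeeze_zero' (Eventually.of_forall fun t => norm_nonneg _) ?_ hlim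
  filter_upwards [hK, self_mem_nhdsWithin] with t ht htpos
  have htp : (0:ℝ) < t := htpos
  simp only [Function.comp, hps, tay_smul] at ht
  have e : (t ^ k)⁻¹ • f (x₀ + t • y) - tay x₀ k f y
      = (t ^ k)⁻¹ • (f (x₀ + t • y) - t ^ k • tay x₀ k f y) := by
    rw [smul_sub, smul_smul, inv_mul_cancel₀ (by positivity), one_smul]
  rw [e, norm_smul, norm_inv, Real.norm_of_nonneg (by positivity)]
  rw [inv_mul_le_iff₀ (by positivity)]
  refine ht.trans_eq ?_
  rw [norm_pow, norm_norm, norm_smul, Real.norm_of_nonneg htp.le, mul_pow]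
  ring

end Taylor

/-- The standing hypotheses, in terms of `fderiv`. -/
structure Hyp (v : EuclideanSpace ℝ (Fin 4) → ℝ)
    (a : Fin 4 → Fin 4 → EuclideanSpace ℝ (Fin 4) → ℝ) (c : ℝ) : Prop where
  an : AnalyticOnNhd ℝ v {x | x ≠ 0}
  hom : ∀ t : ℝ, 0 < t → ∀ x : EuclideanSpace ℝ (Fin 4), x ≠ 0 → v (t • x) = t * v x
  ca : ∀ i j, ContinuousOn (a i j) {x | x ≠ 0}
  ell : ∀ θ : EuclideanSpace ℝ (Fin 4), ‖θ‖ = 1 → Ell (fun i j => a i j θ) c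
  eq : ∀ x : EuclideanSpace ℝ (Fin 4), x ≠ 0 →
    trA (fun i j => a i j (‖x‖⁻¹ • x)) (fderiv ℝ (fderiv ℝ v) x) = 0
  minor : ∀ x : EuclideanSpace ℝ (Fin 4), x ≠ 0 → ∀ p q : Fin 3 → EuclideanSpace ℝ (Fin 4),
    Matrix.det (Matrix.of fun i j => fderiv ℝ (fderiv ℝ v) x (p i) (q j)) = 0

namespace Hyp

variable {v : EuclideanSpace ℝ (Fin 4) → ℝ}
    {a : Fin 4 → Fin 4 → EuclideanSpace ℝ (Fin 4) → ℝ} {c : ℝ}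

lemma ev_ne {x : EuclideanSpace ℝ (Fin 4)} (hx : x ≠ 0) : ∀ᶠ y in 𝓝 x, y ≠ 0 :=
  isOpen_ne.mem_nhds hx

lemma G_hom (h : Hyp v a c) {t : ℝ} (ht : 0 < t) {x : EuclideanSpace ℝ (Fin 4)} (hx : x ≠ 0) :
    fderiv ℝ v (t • x) = fderiv ℝ v x := by
  have htx : t • x ≠ 0 := smul_ne_zero ht.ne' hx
  have h1 : HasFDerivAt v (fderiv ℝ v (t • x)) (t • x) := (h.an _ htx).differentiableAt.hasFDerivAt
  have h2 := (h.an _ hx).differentiableAt.hasFDerivAt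
  have h3 := h1.comp x ((hasFDerivAt_id (𝕜 := ℝ) x).const_smul t)
  have h4 : (v ∘ (t • id)) =ᶠ[𝓝 x] fun y => t * v y := by
    filter_upwards [ev_ne hx] with y hy using h.hom t ht y hy
  have h5 := (h4.hasFDerivAt_iff.mp h3).unique (h2.const_mul t)
  ext p
  have h6 := congrArg (fun L => L p) h5
  simp at h6
  rcases h6 with h6 | h6
  · exact h6
  · exact absurd h6 ht.ne'

lemma euler (h : Hyp v a c) {x : EuclideanSpace ℝ (Fin 4)} (hx : x ≠ 0) :
    fderiv ℝ v x x = v x := by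
  have h1 : HasFDerivAt v (fderiv ℝ v ((1:ℝ) • x)) ((1:ℝ) • x) := by
    rw [one_smul]; exact (h.an _ hx).differentiableAt.hasFDerivAt
  have h3 := h1.comp_hasDerivAt (1:ℝ) ((hasDerivAt_id (1:ℝ)).smul_const x)
  have h4 : (v ∘ fun s : ℝ => id s • x) =ᶠ[𝓝 1] fun s => s * v x := by
    filter_upwards [lt_mem_nhds (zero_lt_one' ℝ)] with s hs using h.hom s hs x hx
  have h5 := (h4.hasDerivAt_iff.mp h3).unique ((hasDerivAt_id (1:ℝ)).mul_const (v x))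
  simpa using h5

lemma H_sym (h : Hyp v a c) {x : EuclideanSpace ℝ (Fin 4)} (hx : x ≠ 0)
    (p q : EuclideanSpace ℝ (Fin 4)) :
    fderiv ℝ (fderiv ℝ v) x p q = fderiv ℝ (fderiv ℝ v) x q p :=
  (h.an x hx).contDiffAt.isSymmSndFDerivAt (n := ⊤) (by simp) p q

lemma T_sym12 (h : Hyp v a c) {x : EuclideanSpace ℝ (Fin 4)} (hx : x ≠ 0)
    (p q : EuclideanSpace ℝ (Fin 4)) :
    fderiv ℝ (fderiv ℝ (fderiv ℝ v)) x p q = fderiv ℝ (fderiv ℝ (fderiv ℝ v)) x q p :=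
  (h.an.fderiv x hx).contDiffAt.isSymmSndFDerivAt (n := ⊤) (by simp) p q

lemma H_hasFDerivAt (h : Hyp v a c) {x : EuclideanSpace ℝ (Fin 4)} (hx : x ≠ 0)
    (p q : EuclideanSpace ℝ (Fin 4)) :
    HasFDerivAt (fun y => fderiv ℝ (fderiv ℝ v) y p q)
      ((ContinuousLinearMap.apply ℝ ℝ q).comp ((ContinuousLinearMap.apply ℝ _ p).comp
        (fderiv ℝ (fderiv ℝ (fderiv ℝ v)) x))) x := by
  have h1 := (h.an.fderiv.fderiv x hx).differentiableAt.hasFDerivAt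
  refine ((h1.clm_apply (hasFDerivAt_const p x)).clm_apply (hasFDerivAt_const q x)).congr_fderiv ?_
  ext z
  simp

lemma T_sym23 (h : Hyp v a c) {x : EuclideanSpace ℝ (Fin 4)} (hx : x ≠ 0)
    (w p q : EuclideanSpace ℝ (Fin 4)) :
    fderiv ℝ (fderiv ℝ (fderiv ℝ v)) x w p q = fderiv ℝ (fderiv ℝ (fderiv ℝ v)) x w q p := by
  have h1 : (fun y => fderiv ℝ (fderiv ℝ v) y p q) =ᶠ[𝓝 x] fun y => fderiv ℝ (fderiv ℝ v) y q p := by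
    filter_upwards [ev_ne hx] with y hy using h.H_sym hy p q
  have h2 := (h1.hasFDerivAt_iff.mp (h.H_hasFDerivAt hx p q)).unique (h.H_hasFDerivAt hx q p)
  exact congrArg (fun L => L w) h2

lemma minor3 (h : Hyp v a c) {x : EuclideanSpace ℝ (Fin 4)} (hx : x ≠ 0)
    (u w p q : EuclideanSpace ℝ (Fin 4)) (B) (hB : B = fderiv ℝ (fderiv ℝ v) x) :
    B u u * B w w * B p q - B u u * B w q * B p w - B u w * B w u * B p q
      + B u w * B w q * B p u + B u q * B w u * B p w - B u q * B w w * B p u = 0 := by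
  have := h.minor x hx ![u, w, p] ![u, w, q]
  rw [Matrix.det_fin_three] at this
  subst hB
  simpa using this

/-- A vector killed by `B(u,·)` and `B(w,·)` is in the kernel. -/
lemma ker_of_two (h : Hyp v a c) {x : EuclideanSpace ℝ (Fin 4)} (hx : x ≠ 0)
    {u w q : EuclideanSpace ℝ (Fin 4)} {B} (hB : B = fderiv ℝ (fderiv ℝ v) x)
    (hd : B u u * B w w - B u w * B u w ≠ 0) (h1 : B u q = 0) (h2 : B w q = 0)
    (p : EuclideanSpace ℝ (Fin 4)) : B p q = 0 := by
  have h3 := h.minor3 hx u w p q B hB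
  have h4 : B w u = B u w := by subst hB; exact h.H_sym hx w u
  rw [h1, h2, h4] at h3
  have : (B u u * B w w - B u w * B u w) * B p q = 0 := by linarith
  exact (mul_eq_zero.mp this).resolve_left hd

/-- The third derivative vanishes on pairs of kernel vectors. -/
lemma T_ker (h : Hyp v a c) {x : EuclideanSpace ℝ (Fin 4)} (hx : x ≠ 0)
    {u w p q : EuclideanSpace ℝ (Fin 4)} {B} (hB : B = fderiv ℝ (fderiv ℝ v) x)
    (hd : B u u * B w w - B u w * B u w ≠ 0) (hp : ∀ r, B r p = 0) (hq : ∀ r, B r q = 0)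
    (z : EuclideanSpace ℝ (Fin 4)) :
    fderiv ℝ (fderiv ℝ (fderiv ℝ v)) x z p q = 0 := by
  let K : EuclideanSpace ℝ (Fin 4) → EuclideanSpace ℝ (Fin 4) → ℝ → ℝ :=
    fun p q t => fderiv ℝ (fderiv ℝ v) (x + t • z) p q
  have hK : ∀ p q, HasDerivAt (K p q) (fderiv ℝ (fderiv ℝ (fderiv ℝ v)) x z p q) 0 := by
    intro p q
    have hl : HasDerivAt (fun t : ℝ => x + t • z) z 0 := by
      simpa using ((hasDerivAt_id (0:ℝ)).smul_const z).const_add x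
    have h0 : x + (0:ℝ) • z = x := by simp
    have h1 := h.H_hasFDerivAt hx p q
    rw [← h0] at h1
    have h2 := h1.comp_hasDerivAt (0:ℝ) hl
    have h3 : HasDerivAt (K p q) _ 0 := h2
    exact h3.congr_deriv (by simp)
  have hK0 : ∀ p q, K p q 0 = B p q := by intro p q; simp [K, hB]
  have hsym : ∀ p q, B p q = B q p := by subst hB; exact h.H_sym hx
  have hev : (fun t => K u u t * K w w t * K p q t - K u u t * K w q t * K p w t
      - K u w t * K w u t * K p q t
      + K u w t * K w q t * K p u t + K u q t * K w u t * K p w t - K u q t * K w w t * K p u t)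
      =ᶠ[𝓝 0] fun _ => 0 := by
    have hc : Tendsto (fun t : ℝ => x + t • z) (𝓝 0) (𝓝 x) := by
      have : Continuous (fun t : ℝ => x + t • z) := by fun_prop
      simpa using this.tendsto 0
    filter_upwards [hc.eventually (ev_ne hx)] with t ht using h.minor3 ht u w p q _ rfl
  have hder := (((((((hK u u).mul (hK w w)).mul (hK p q)).sub
    (((hK u u).mul (hK w q)).mul (hK p w))).sub (((hK u w).mul (hK w u)).mul (hK p q))).add
    (((hK u w).mul (hK w q)).mul (hK p u))).add (((hK u q).mul (hK w u)).mul (hK p w))).sub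
    (((hK u q).mul (hK w w)).mul (hK p u))
  have h1 := (hev.hasDerivAt_iff.mp hder).unique (hasDerivAt_const (0:ℝ) (0:ℝ))
  have e1 : B p u = 0 := by rw [hsym]; exact hp u
  have e2 : B p w = 0 := by rw [hsym]; exact hp w
  simp only [Pi.mul_apply, hK0, hq, e1, e2, hsym w u] at h1
  have : (B u u * B w w - B u w * B u w) * fderiv ℝ (fderiv ℝ (fderiv ℝ v)) x z p q = 0 := by
    linarith
  exact (mul_eq_zero.mp this).resolve_left hd

/-- Pointwise bound on the third derivative in a direction `ξ`. -/
lemma T_bound (h : Hyp v a c) {x : EuclideanSpace ℝ (Fin 4)} (hx : x ≠ 0)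
    (u w ξ : EuclideanSpace ℝ (Fin 4)) {B T} (hB : B = fderiv ℝ (fderiv ℝ v) x)
    (hT : T = fderiv ℝ (fderiv ℝ (fderiv ℝ v)) x)
    {D : ℝ} (hD : D = B u u * B w w - B u w * B u w) (hd : D ≠ 0)
    {c₁ c₂ : ℝ} (hc₁ : c₁ = (B w w * B ξ u - B u w * B ξ w) / D)
    (hc₂ : c₂ = (B u u * B ξ w - B u w * B ξ u) / D) :
    T ξ ξ = c₁ • T u ((2:ℝ) • ξ - c₁ • u - c₂ • w) + c₂ • T w ((2:ℝ) • ξ - c₁ • u - c₂ • w) := by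
  have hsym : ∀ p q, B p q = B q p := by subst hB; exact h.H_sym hx
  have s12 : ∀ p q, T p q = T q p := by subst hT; exact h.T_sym12 hx
  have s23 : ∀ p q r, T p q r = T p r q := by subst hT; exact h.T_sym23 hx
  set X := ξ - c₁ • u - c₂ • w with hX
  have hXk : ∀ r, B r X = 0 := by
    refine h.ker_of_two hx hB (hD ▸ hd) ?_ ?_
    · simp only [hX, map_sub, map_smul, smul_eq_mul, hc₁, hc₂, hsym ξ]
      field_simp
      rw [hD]; ring
    · simp only [hX, map_sub, map_smul, smul_eq_mul, hc₁, hc₂, hsym ξ, hsym w u]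
      field_simp
      rw [hD]; ring
  ext z
  have hTX : T z X X = 0 := by
    subst hT; exact h.T_ker hx hB (hD ▸ hd) hXk hXk z
  have e0 : ξ = X + (c₁ • u + c₂ • w) := by rw [hX]; abel
  have e1 : ∀ p q, T p q z = T z p q := by
    intro p q
    rw [s12 z p, s23 p z q]
  have e2 : (2:ℝ) • ξ - c₁ • u - c₂ • w = ξ + X := by rw [hX, two_smul]; abel
  rw [e2]
  simp only [add_apply, smul_apply, e1, smul_eq_mul]
  have e3 : c₁ * T z u (ξ + X) + c₂ * T z w (ξ + X) = T z (c₁ • u + c₂ • w) (ξ + X) := by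
    simp
  rw [e3]
  have e4 : c₁ • u + c₂ • w = ξ - X := by rw [hX]; abel
  rw [e4]
  simp only [map_add, map_sub, sub_apply, s23 z X ξ, hTX]
  ring

end Hyp

namespace Hyp

variable {v : EuclideanSpace ℝ (Fin 4) → ℝ}
    {a : Fin 4 → Fin 4 → EuclideanSpace ℝ (Fin 4) → ℝ} {c : ℝ}

set_option synthInstance.maxHeartbeats 200000 in
set_option maxHeartbeats 1000000 in
/-- The gradient is constant along kernel planes. -/
lemma leaf (h : Hyp v a c) {x ξ : EuclideanSpace ℝ (Fin 4)} (hli : LinearIndependent ℝ ![x, ξ])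
    {u w : EuclideanSpace ℝ (Fin 4)}
    (hd : fderiv ℝ (fderiv ℝ v) x u u * fderiv ℝ (fderiv ℝ v) x w w
      - fderiv ℝ (fderiv ℝ v) x u w * fderiv ℝ (fderiv ℝ v) x u w ≠ 0)
    (hker : ∀ p, fderiv ℝ (fderiv ℝ v) x p ξ = 0) :
    fderiv ℝ v ξ = fderiv ℝ v x := by
  have hne : ∀ s r : ℝ, s ≠ 0 ∨ r ≠ 0 → s • x + r • ξ ≠ 0 := by
    intro s r hsr h0
    have := LinearIndependent.pair_iff.mp hli s r h0
    tauto
  have hx : x ≠ 0 := by simpa using hne 1 0 (by simp)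
  have hξ : ξ ≠ 0 := by simpa using hne 0 1 (by simp)
  have hls : ∀ s : ℝ, x + s • ξ ≠ 0 := fun s => by simpa using hne 1 s (by simp)
  have hl : ∀ s : ℝ, HasDerivAt (fun s : ℝ => x + s • ξ) ξ s := fun s => by
    simpa using ((hasDerivAt_id s).smul_const ξ).const_add x
  let F : ℝ → (EuclideanSpace ℝ (Fin 4) →L[ℝ] ℝ) := fun s => fderiv ℝ (fderiv ℝ v) (x + s • ξ) ξ
  have hla : ∀ s : ℝ, AnalyticAt ℝ (fun s : ℝ => x + s • ξ) s := fun s => by fun_prop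
  have hHa : ∀ s, AnalyticAt ℝ (fun s : ℝ => fderiv ℝ (fderiv ℝ v) (x + s • ξ)) s := fun s =>
    AnalyticAt.fun_comp (h.an.fderiv.fderiv _ (hls s)) (hla s)
  have hFa : AnalyticOnNhd ℝ F Set.univ := fun s _ =>
    ((ContinuousLinearMap.apply ℝ (EuclideanSpace ℝ (Fin 4) →L[ℝ] ℝ) ξ).analyticAt _).fun_comp (hHa s)
  have hF' : ∀ s, HasDerivAt F (fderiv ℝ (fderiv ℝ (fderiv ℝ v)) (x + s • ξ) ξ ξ) s := by
    intro s
    have h1 := (h.an.fderiv.fderiv _ (hls s)).differentiableAt.hasFDerivAt.comp_hasDerivAt s (hl s)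
    have h2 := h1.clm_apply (hasDerivAt_const s ξ)
    simpa using h2
  have hF0 : F 0 = 0 := by
    ext p
    simp only [F, zero_smul, add_zero, zero_apply]
    rw [h.H_sym hx]; exact hker p
  -- coefficients
  let B : ℝ → EuclideanSpace ℝ (Fin 4) →L[ℝ] EuclideanSpace ℝ (Fin 4) →L[ℝ] ℝ :=
    fun s => fderiv ℝ (fderiv ℝ v) (x + s • ξ)
  let T := fun s : ℝ => fderiv ℝ (fderiv ℝ (fderiv ℝ v)) (x + s • ξ)
  let D : ℝ → ℝ := fun s => B s u u * B s w w - B s u w * B s u w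
  let c₁ : ℝ → ℝ := fun s => (B s w w * B s ξ u - B s u w * B s ξ w) / D s
  let c₂ : ℝ → ℝ := fun s => (B s u u * B s ξ w - B s u w * B s ξ u) / D s
  let V := fun s : ℝ => (2:ℝ) • ξ - c₁ s • u - c₂ s • w
  let κ : ℝ → ℝ := fun s =>
    (|B s w w| * ‖u‖ + |B s u w| * ‖w‖) / |D s| * ‖T s u (V s)‖
    + (|B s u u| * ‖w‖ + |B s u w| * ‖u‖) / |D s| * ‖T s w (V s)‖
  have hBc : ContinuousAt B 0 := (hHa 0).continuousAt
  have hTc : ContinuousAt T 0 :=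
    ContinuousAt.comp' (f := fun s : ℝ => x + s • ξ) (h.an.fderiv.fderiv.fderiv _ (hls 0)).continuousAt
      (hla 0).continuousAt
  have hBpq : ∀ p q, ContinuousAt (fun s => B s p q) 0 := fun p q =>
    (hBc.clm_apply continuousAt_const).clm_apply continuousAt_const
  have hDc : ContinuousAt D 0 :=
    ((hBpq u u).mul (hBpq w w)).sub ((hBpq u w).mul (hBpq u w))
  have hD0 : D 0 ≠ 0 := by simpa [D, B] using hd
  have hc₁ : ContinuousAt c₁ 0 :=
    (((hBpq w w).mul (hBpq ξ u)).sub ((hBpq u w).mul (hBpq ξ w))).div hDc hD0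
  have hc₂ : ContinuousAt c₂ 0 :=
    (((hBpq u u).mul (hBpq ξ w)).sub ((hBpq u w).mul (hBpq ξ u))).div hDc hD0
  have hVc : ContinuousAt V 0 :=
    (continuousAt_const.sub (hc₁.smul continuousAt_const)).sub (hc₂.smul continuousAt_const)
  have hκc : ContinuousAt κ 0 := by
    refine ContinuousAt.add (ContinuousAt.mul (ContinuousAt.div ?_ hDc.abs (abs_ne_zero.mpr hD0)) ?_)
      (ContinuousAt.mul (ContinuousAt.div ?_ hDc.abs (abs_ne_zero.mpr hD0)) ?_)
    · exact ((hBpq w w).abs.mul continuousAt_const).add ((hBpq u w).abs.mul continuousAt_const)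
    · exact ((hTc.clm_apply continuousAt_const).clm_apply hVc).norm
    · exact ((hBpq u u).abs.mul continuousAt_const).add ((hBpq u w).abs.mul continuousAt_const)
    · exact ((hTc.clm_apply continuousAt_const).clm_apply hVc).norm
  have hbound : ∀ᶠ s in 𝓝 (0:ℝ), ‖T s ξ ξ‖ ≤ (κ 0 + 1) * ‖F s‖ := by
    filter_upwards [hDc.eventually (isOpen_ne.mem_nhds hD0),
      hκc.eventually (gt_mem_nhds (lt_add_one (κ 0)))] with s hs hκs
    have hs' : D s ≠ 0 := hs
    have hDp : 0 < |D s| := abs_pos.mpr hs'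
    have e : T s ξ ξ = c₁ s • T s u (V s) + c₂ s • T s w (V s) :=
      h.T_bound (hls s) u w ξ (B := B s) (T := T s) rfl rfl (D := D s) rfl hs' rfl rfl
    have hFu : |B s ξ u| ≤ ‖F s‖ * ‖u‖ := (F s).le_opNorm u
    have hFw : |B s ξ w| ≤ ‖F s‖ * ‖w‖ := (F s).le_opNorm w
    have b1 : |c₁ s| ≤ (|B s w w| * ‖u‖ + |B s u w| * ‖w‖) / |D s| * ‖F s‖ := by
      simp only [c₁]
      rw [abs_div, div_mul_eq_mul_div]
      gcongr
      calc _ ≤ |B s w w * B s ξ u| + |B s u w * B s ξ w| := abs_sub _ _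
        _ = |B s w w| * |B s ξ u| + |B s u w| * |B s ξ w| := by rw [abs_mul, abs_mul]
        _ ≤ |B s w w| * (‖F s‖ * ‖u‖) + |B s u w| * (‖F s‖ * ‖w‖) := by gcongr
        _ = _ := by ring
    have b2 : |c₂ s| ≤ (|B s u u| * ‖w‖ + |B s u w| * ‖u‖) / |D s| * ‖F s‖ := by
      simp only [c₂]
      rw [abs_div, div_mul_eq_mul_div]
      gcongr
      calc _ ≤ |B s u u * B s ξ w| + |B s u w * B s ξ u| := abs_sub _ _
        _ = |B s u u| * |B s ξ w| + |B s u w| * |B s ξ u| := by rw [abs_mul, abs_mul]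
        _ ≤ |B s u u| * (‖F s‖ * ‖w‖) + |B s u w| * (‖F s‖ * ‖u‖) := by gcongr
        _ = _ := by ring
    calc ‖T s ξ ξ‖ ≤ |c₁ s| * ‖T s u (V s)‖ + |c₂ s| * ‖T s w (V s)‖ := by
          rw [e]
          refine (norm_add_le _ _).trans_eq ?_
          rw [norm_smul, norm_smul]; rfl
      _ ≤ (|B s w w| * ‖u‖ + |B s u w| * ‖w‖) / |D s| * ‖F s‖ * ‖T s u (V s)‖
          + (|B s u u| * ‖w‖ + |B s u w| * ‖u‖) / |D s| * ‖F s‖ * ‖T s w (V s)‖ := by gcongr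
      _ = κ s * ‖F s‖ := by simp only [κ]; ring
      _ ≤ _ := by gcongr
  obtain ⟨δ, hδ, hδb⟩ := Metric.eventually_nhds_iff.mp hbound
  have hFzero : ∀ s ∈ Set.Icc 0 (δ / 2), F s = 0 := by
    refine eq_zero_of_abs_deriv_le_mul_abs_self_of_eq_zero_right (K := κ 0 + 1)
      (f' := fun s => T s ξ ξ) (fun s _ => (hF' s).continuousAt.continuousWithinAt)
      (fun s _ => (hF' s).hasDerivWithinAt) hF0 (fun s hs => hδb ?_)
    rw [Real.dist_eq, sub_zero, abs_of_nonneg hs.1]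
    linarith [hs.2]
  have hfreq : ∃ᶠ s in 𝓝[≠] (0:ℝ), F s = 0 := by
    have h1 : ∀ᶠ s in 𝓝[>] (0:ℝ), F s = 0 := by
      filter_upwards [Ioo_mem_nhdsGT (half_pos hδ)] with s hs using hFzero s ⟨hs.1.le, hs.2.le⟩
    exact h1.frequently.filter_mono (nhdsWithin_mono _ fun s hs => ne_of_gt hs)
  have hFall : ∀ s, F s = 0 := fun s =>
    hFa.eqOn_of_preconnected_of_frequently_eq (g := fun _ => 0) (fun _ _ => analyticAt_const)
      isPreconnected_univ (Set.mem_univ 0) hfreq (Set.mem_univ s)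
  have hG : ∀ s : ℝ, HasDerivAt (fun s : ℝ => fderiv ℝ v (x + s • ξ)) 0 s := by
    intro s
    have h1 := (h.an.fderiv _ (hls s)).differentiableAt.hasFDerivAt.comp_hasDerivAt s (hl s)
    exact HasDerivAt.congr_deriv h1 (hFall s)
  have hconst : ∀ s : ℝ, fderiv ℝ v (x + s • ξ) = fderiv ℝ v x := by
    intro s
    have := is_const_of_deriv_eq_zero (fun s => (hG s).differentiableAt) (fun s => (hG s).deriv) s 0
    simpa using this
  have hlim : Tendsto (fun t : ℝ => fderiv ℝ v (t • x + ξ)) (𝓝[>] 0) (𝓝 (fderiv ℝ v ξ)) := by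
    have h1 : ContinuousAt (fderiv ℝ v) ξ := (h.an.fderiv ξ hξ).continuousAt
    have h2 : Tendsto (fun t : ℝ => t • x + ξ) (𝓝 0) (𝓝 ξ) := by
      have : Continuous (fun t : ℝ => t • x + ξ) := by fun_prop
      simpa using this.tendsto 0
    exact (h1.tendsto.comp h2).mono_left nhdsWithin_le_nhds
  refine tendsto_nhds_unique (hlim.congr' ?_) tendsto_const_nhds
  filter_upwards [self_mem_nhdsWithin] with t ht
  have ht' : (0:ℝ) < t := ht
  have : t • x + ξ = t • (x + t⁻¹ • ξ) := by
    rw [smul_add, smul_smul, mul_inv_cancel₀ ht'.ne', one_smul]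
  rw [this, h.G_hom ht' (hls _), hconst]

end Hyp

lemma tendsto_clm_apply {E F : Type*} [NormedAddCommGroup E] [NormedSpace ℝ E]
    [NormedAddCommGroup F] [NormedSpace ℝ F] {l : Filter ℝ} {f : ℝ → E →L[ℝ] F} {L : E →L[ℝ] F}
    (hL : Tendsto f l (𝓝 L)) (p : E) : Tendsto (fun t => f t p) l (𝓝 (L p)) :=
  ((ContinuousLinearMap.apply ℝ F p).continuous.tendsto L).comp hL

namespace Hyp

variable {v : EuclideanSpace ℝ (Fin 4) → ℝ}
    {a : Fin 4 → Fin 4 → EuclideanSpace ℝ (Fin 4) → ℝ} {c : ℝ}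

lemma ray_tendsto (x₀ y : EuclideanSpace ℝ (Fin 4)) :
    Tendsto (fun t : ℝ => x₀ + t • y) (𝓝[>] 0) (𝓝 x₀) := by
  have : Continuous (fun t : ℝ => x₀ + t • y) := by fun_prop
  have h := this.tendsto 0
  simp only [zero_smul, add_zero] at h
  exact h.mono_left nhdsWithin_le_nhds

lemma not_flat (h : Hyp v a c) (hv : ∃ x, x ≠ 0 ∧ v x ≠ 0) {x₀ : EuclideanSpace ℝ (Fin 4)}
    (hx : x₀ ≠ 0) : ∃ k, ∃ y, tay x₀ k v y ≠ 0 := by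
  by_contra! hk
  obtain ⟨x, hx0, hvx⟩ := hv
  have hc : IsPreconnected {x : EuclideanSpace ℝ (Fin 4) | x ≠ 0} := by
    have : 1 < Module.rank ℝ (EuclideanSpace ℝ (Fin 4)) := by
      rw [← Module.finrank_eq_rank]; simp
    exact (isConnected_compl_singleton_of_one_lt_rank this 0).isPreconnected
  exact hvx (h.an.eqOn_of_preconnected_of_eventuallyEq (g := fun _ => 0)
    (fun _ _ => analyticAt_const) hc hx (tay_zero (h.an _ hx) hk) hx0)

lemma blowup (h : Hyp v a c) (hv : ∃ x, x ≠ 0 ∧ v x ≠ 0) {x₀ : EuclideanSpace ℝ (Fin 4)}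
    (hx : x₀ ≠ 0) (hG : fderiv ℝ v x₀ = 0) :
    ∃ (m : ℕ) (P : EuclideanSpace ℝ (Fin 4) → ℝ), ContDiff ℝ ⊤ P ∧ (∃ y, P y ≠ 0) ∧ P 0 = 0 ∧
      fderiv ℝ P 0 = 0 ∧ (∀ y, fderiv ℝ P y y = (m + 2) * P y) ∧
      (∀ y, Tendsto (fun t : ℝ => (t ^ (m + 2))⁻¹ • v (x₀ + t • y)) (𝓝[>] 0) (𝓝 (P y))) ∧
      (∀ y, Tendsto (fun t : ℝ => (t ^ (m + 1))⁻¹ • fderiv ℝ v (x₀ + t • y)) (𝓝[>] 0)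
        (𝓝 (fderiv ℝ P y))) ∧
      (∀ y, Tendsto (fun t : ℝ => (t ^ m)⁻¹ • fderiv ℝ (fderiv ℝ v) (x₀ + t • y)) (𝓝[>] 0)
        (𝓝 (fderiv ℝ (fderiv ℝ P) y))) ∧
      (∀ y, trA (fun i j => a i j (‖x₀‖⁻¹ • x₀)) (fderiv ℝ (fderiv ℝ P) y) = 0) := by
  classical
  have hex := h.not_flat hv hx
  let k := Nat.find hex
  have hkne : ∃ y, tay x₀ k v y ≠ 0 := Nat.find_spec hex
  have hklt : ∀ j < k, ∀ y, tay x₀ j v y = 0 := fun j hj y => by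
    have := Nat.find_min hex hj
    push Not at this
    exact this y
  have a0 := h.an _ hx
  have a1 := h.an.fderiv _ hx
  have a2 := h.an.fderiv.fderiv _ hx
  have hvx : v x₀ = 0 := by rw [← h.euler hx, hG]; simp
  have hk0 : k ≠ 0 := by
    intro h0
    obtain ⟨y, hy⟩ := hkne
    rw [h0] at hy
    exact hy (by simp [tay, hvx])
  have hk1 : k ≠ 1 := by
    intro h0
    obtain ⟨y, hy⟩ := hkne
    rw [h0] at hy
    exact hy (by simp [tay, hG])
  obtain ⟨m, hm⟩ : ∃ m, k = m + 2 := ⟨k - 2, by omega⟩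
  rw [hm] at hkne hklt
  have f1 : ∀ j, fderiv ℝ (tay x₀ (j + 1) v) = tay x₀ j (fderiv ℝ v) := fun j =>
    funext fun y => (tay_hasFDerivAt a0 j y).fderiv
  have f2 : ∀ j, fderiv ℝ (tay x₀ (j + 1) (fderiv ℝ v)) = tay x₀ j (fderiv ℝ (fderiv ℝ v)) :=
    fun j => funext fun y => (tay_hasFDerivAt a1 j y).fderiv
  have z1 : ∀ j < m + 1, ∀ y, tay x₀ j (fderiv ℝ v) y = 0 := by
    intro j hj y
    rw [← f1, show tay x₀ (j + 1) v = fun _ => 0 from funext (hklt (j + 1) (by omega))]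
    simp
  have z2 : ∀ j < m, ∀ y, tay x₀ j (fderiv ℝ (fderiv ℝ v)) y = 0 := by
    intro j hj y
    rw [← f2, show tay x₀ (j + 1) (fderiv ℝ v) = fun _ => 0 from funext (z1 (j + 1) (by omega))]
    simp
  have l2 : ∀ y, Tendsto (fun t : ℝ => (t ^ m)⁻¹ • fderiv ℝ (fderiv ℝ v) (x₀ + t • y)) (𝓝[>] 0)
        (𝓝 (fderiv ℝ (fderiv ℝ (tay x₀ (m + 2) v)) y)) := by
    intro y
    rw [f1, f2]; exact tay_tendsto a2 z2 y
  refine ⟨m, tay x₀ (m + 2) v, tay_contDiff _ _ _, hkne, ?_, ?_, ?_, ?_, ?_, l2, ?_⟩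
  · have := tay_smul x₀ (m + 2) v 0 0
    simpa using this
  · rw [f1]
    have := tay_smul x₀ (m + 1) (fderiv ℝ v) 0 0
    simpa using this
  · intro y
    have hd : HasFDerivAt (tay x₀ (m + 2) v) (fderiv ℝ (tay x₀ (m + 2) v) ((1:ℝ) • y)) ((1:ℝ) • y) :=
      ((tay_contDiff x₀ (m + 2) v (n := ⊤)).differentiable (by simp) _).hasFDerivAt
    have h3 := hd.comp_hasDerivAt (1:ℝ) ((hasDerivAt_id (1:ℝ)).smul_const y)
    have h4 : (tay x₀ (m + 2) v ∘ fun s : ℝ => id s • y) = fun s => s ^ (m + 2) * tay x₀ (m + 2) v y :=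
      funext fun s => tay_smul _ _ _ _ _
    rw [h4] at h3
    have h5 := h3.unique ((hasDerivAt_pow (m + 2) (1:ℝ)).mul_const (tay x₀ (m + 2) v y))
    simpa using h5
  · intro y; exact tay_tendsto a0 hklt y
  · intro y; rw [f1]; exact tay_tendsto a1 z1 y
  · intro y
    have hray := ray_tendsto x₀ y
    have hthe : Tendsto (fun t : ℝ => ‖x₀ + t • y‖⁻¹ • (x₀ + t • y)) (𝓝[>] 0) (𝓝 (‖x₀‖⁻¹ • x₀)) :=
      (hray.norm.inv₀ (norm_ne_zero_iff.mpr hx)).smul hray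
    have hθ : ‖x₀‖⁻¹ • x₀ ≠ 0 := smul_ne_zero (inv_ne_zero (norm_ne_zero_iff.mpr hx)) hx
    have ha : ∀ i j, Tendsto (fun t : ℝ => a i j (‖x₀ + t • y‖⁻¹ • (x₀ + t • y))) (𝓝[>] 0)
        (𝓝 (a i j (‖x₀‖⁻¹ • x₀))) := fun i j =>
      ((h.ca i j).continuousAt (isOpen_ne.mem_nhds hθ)).tendsto.comp hthe
    have hl : Tendsto (fun t : ℝ => trA (fun i j => a i j (‖x₀ + t • y‖⁻¹ • (x₀ + t • y)))
        ((t ^ m)⁻¹ • fderiv ℝ (fderiv ℝ v) (x₀ + t • y))) (𝓝[>] 0)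
        (𝓝 (trA (fun i j => a i j (‖x₀‖⁻¹ • x₀)) (fderiv ℝ (fderiv ℝ (tay x₀ (m + 2) v)) y))) := by
      unfold trA
      refine tendsto_finsetSum _ fun i _ => tendsto_finsetSum _ fun j _ => (ha i j).mul ?_
      exact tendsto_clm_apply (tendsto_clm_apply (l2 y) _) _
    refine tendsto_nhds_unique (hl.congr' ?_) tendsto_const_nhds
    filter_upwards [hray.eventually (ev_ne hx)] with t ht
    have h1 := h.eq _ ht
    have h2 : ∀ (A : Fin 4 → Fin 4 → ℝ) (s : ℝ) B, trA A (s • B) = s * trA A B := by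
      intro A s B
      simp only [trA, smul_apply, smul_eq_mul, Finset.mul_sum]
      refine Finset.sum_congr rfl fun i _ => Finset.sum_congr rfl fun j _ => by ring
    rw [h2, h1, mul_zero]

lemma ell_at (h : Hyp v a c) {x₀ : EuclideanSpace ℝ (Fin 4)} (hx : x₀ ≠ 0) :
    Ell (fun i j => a i j (‖x₀‖⁻¹ • x₀)) c := by
  refine h.ell _ ?_
  rw [norm_smul, norm_inv, norm_norm, inv_mul_cancel₀ (norm_ne_zero_iff.mpr hx)]

/-- No maximum of `v_e` on the line spanned by `e`. -/
lemma no_max_parallel (h : Hyp v a c) (hv : ∃ x, x ≠ 0 ∧ v x ≠ 0) {x₀ : EuclideanSpace ℝ (Fin 4)}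
    (hx : x₀ ≠ 0) (hG : fderiv ℝ v x₀ = 0) {s : ℝ} (hs : s ≠ 0)
    (hmax : ∀ x, x ≠ 0 → fderiv ℝ v x (s • x₀) ≤ 0) : False := by
  obtain ⟨m, P, hP, ⟨y₀, hy₀⟩, hP0, -, hE, l0, l1, -, hpde⟩ := h.blowup hv hx hG
  have key : ∀ y, 0 ≤ s * P y := by
    intro y
    have hl : Tendsto (fun t : ℝ => (t ^ (m + 2))⁻¹ * fderiv ℝ v (x₀ + t • y) (s • x₀)) (𝓝[>] 0)
        (𝓝 (s * (P y - fderiv ℝ P y y))) := by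
      have := ((l0 y).sub (tendsto_clm_apply (l1 y) y)).const_mul s
      refine this.congr' ?_
      filter_upwards [(ray_tendsto x₀ y).eventually (ev_ne hx), self_mem_nhdsWithin] with t ht htp
      have htp' : (0:ℝ) < t := htp
      have h1 := h.euler ht
      have h2 : fderiv ℝ v (x₀ + t • y) x₀
          = v (x₀ + t • y) - t * fderiv ℝ v (x₀ + t • y) y := by
        rw [map_add, map_smul, smul_eq_mul] at h1
        linarith
      rw [map_smul, h2]
      simp only [smul_apply, smul_eq_mul]
      field_simp
      ring
    have hle : s * (P y - fderiv ℝ P y y) ≤ 0 := by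
      refine le_of_tendsto hl ?_
      filter_upwards [(ray_tendsto x₀ y).eventually (ev_ne hx), self_mem_nhdsWithin] with t ht htp
      have htp' : (0:ℝ) < t := htp
      exact mul_nonpos_of_nonneg_of_nonpos (by positivity) (hmax _ ht)
    rw [hE] at hle
    have hm : (0:ℝ) ≤ m := Nat.cast_nonneg m
    have : 0 ≤ (m + 1) * (s * P y) := by nlinarith
    exact nonneg_of_mul_nonneg_right this (by positivity)
  have hP2 : ContDiff ℝ 2 P := hP.of_le le_top
  have hz := max_principle (h.ell_at hx) (f := fun y => s * P y) (contDiff_const.mul hP2) key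
    (by simp [hP0]) (fun y => by
      have e1 : fderiv ℝ (fun y => s * P y) = fun y => s • fderiv ℝ P y := by
        funext y
        exact ((hP2.differentiable (by norm_num) y).hasFDerivAt.const_mul s).fderiv
      have e2 : fderiv ℝ (fun y => s • fderiv ℝ P y) y = s • fderiv ℝ (fderiv ℝ P) y :=
        (((hP2.fderiv_right (m := 1) (by norm_num)).differentiable
          (by norm_num) y).hasFDerivAt.const_smul s).fderiv
      rw [e1, e2]
      have h3 : trA (fun i j => a i j (‖x₀‖⁻¹ • x₀)) (s • fderiv ℝ (fderiv ℝ P) y)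
          = s * trA (fun i j => a i j (‖x₀‖⁻¹ • x₀)) (fderiv ℝ (fderiv ℝ P) y) := by
        simp only [trA, smul_apply, smul_eq_mul, Finset.mul_sum]
        refine Finset.sum_congr rfl fun i _ => Finset.sum_congr rfl fun j _ => by ring
      rw [h3, hpde, mul_zero]) y₀
  exact (mul_ne_zero hs hy₀) hz

end Hyp

/-- Directional derivatives of solutions are solutions. -/
lemma trA_dir {A : Fin 4 → Fin 4 → ℝ} {P : EuclideanSpace ℝ (Fin 4) → ℝ} (hP : ContDiff ℝ ⊤ P)
    (hpde : ∀ y, trA A (fderiv ℝ (fderiv ℝ P) y) = 0) (e y : EuclideanSpace ℝ (Fin 4)) :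
    trA A (fderiv ℝ (fderiv ℝ (fun y => - fderiv ℝ P y e)) y) = 0 := by
  have c1 : ContDiff ℝ ⊤ (fderiv ℝ P) := hP.fderiv_right (by simp)
  have c2 : ContDiff ℝ ⊤ (fderiv ℝ (fderiv ℝ P)) := c1.fderiv_right (by simp)
  have d1 : Differentiable ℝ (fderiv ℝ P) := c1.differentiable (by simp)
  have d2 : Differentiable ℝ (fderiv ℝ (fderiv ℝ P)) := c2.differentiable (by simp)
  have e1 : fderiv ℝ (fun y => - fderiv ℝ P y e) = fun y => - fderiv ℝ (fderiv ℝ P) y e := by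
    funext y
    have h1 := ((d1 y).hasFDerivAt.clm_apply (hasFDerivAt_const e y)).neg
    refine HasFDerivAt.fderiv (h1.congr_fderiv ?_)
    ext p
    have := hP.contDiffAt.isSymmSndFDerivAt (x := y) (by simp) p e
    simpa using this
  have e2 : ∀ p q, fderiv ℝ (fun y => - fderiv ℝ (fderiv ℝ P) y e) y p q
      = - fderiv ℝ (fderiv ℝ (fderiv ℝ P)) y e p q := by
    intro p q
    have h1 := ((d2 y).hasFDerivAt.clm_apply (hasFDerivAt_const e y)).neg
    have h2 : fderiv ℝ (fun y => - fderiv ℝ (fderiv ℝ P) y e) y = _ := h1.fderiv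
    have := c1.contDiffAt.isSymmSndFDerivAt (x := y) (by simp) p e
    rw [h2]
    simp [this]
  have h3 : HasFDerivAt (fun y => trA A (fderiv ℝ (fderiv ℝ P) y))
      (∑ i, ∑ j, A i j • ((ContinuousLinearMap.apply ℝ ℝ (bb j)).comp
        ((ContinuousLinearMap.apply ℝ _ (bb i)).comp (fderiv ℝ (fderiv ℝ (fderiv ℝ P)) y)))) y := by
    unfold trA
    refine HasFDerivAt.fun_sum fun i _ => HasFDerivAt.fun_sum fun j _ => HasFDerivAt.const_mul ?_ _
    refine (((d2 y).hasFDerivAt.clm_apply (hasFDerivAt_const (bb i) y)).clm_apply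
      (hasFDerivAt_const (bb j) y)).congr_fderiv ?_
    ext z
    simp
  have h4 : (fun y => trA A (fderiv ℝ (fderiv ℝ P) y)) = fun _ => 0 := funext hpde
  rw [h4] at h3
  have h5 := congrArg (fun L => L e) (h3.unique (hasFDerivAt_const (0:ℝ) y))
  simp only [sum_apply, smul_apply, ContinuousLinearMap.comp_apply, ContinuousLinearMap.apply_apply,
    smul_eq_mul, zero_apply] at h5
  rw [e1]
  simp only [trA, e2, mul_neg, Finset.sum_neg_distrib]
  rw [h5, neg_zero]

lemma cramer₁ {k1 k2 k3 p q : ℝ} (hD : k1 * k3 - k2 * k2 ≠ 0) :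
    p - (k3 * p - k2 * q) / (k1 * k3 - k2 * k2) * k1
      - (k1 * q - k2 * p) / (k1 * k3 - k2 * k2) * k2 = 0 := by
  rw [div_mul_eq_mul_div, div_mul_eq_mul_div, sub_sub, ← add_div, sub_eq_zero, eq_div_iff hD]
  ring

lemma cramer₂ {k1 k2 k3 p q : ℝ} (hD : k1 * k3 - k2 * k2 ≠ 0) :
    q - (k3 * p - k2 * q) / (k1 * k3 - k2 * k2) * k2
      - (k1 * q - k2 * p) / (k1 * k3 - k2 * k2) * k3 = 0 := by
  rw [div_mul_eq_mul_div, div_mul_eq_mul_div, sub_sub, ← add_div, sub_eq_zero, eq_div_iff hD]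
  ring

namespace Hyp

variable {v : EuclideanSpace ℝ (Fin 4) → ℝ}
    {a : Fin 4 → Fin 4 → EuclideanSpace ℝ (Fin 4) → ℝ} {c : ℝ}

lemma G_tendsto (h : Hyp v a c) {x : EuclideanSpace ℝ (Fin 4)} (hx : x ≠ 0) :
    Tendsto (fderiv ℝ v) (𝓝 x) (𝓝 (fderiv ℝ v x)) :=
  (h.an.fderiv x hx).continuousAt

/-- A maximum of `v_e` with vanishing gradient off the line of `e` propagates to `e`. -/
lemma G_e_eq_zero (h : Hyp v a c) (hv : ∃ x, x ≠ 0 ∧ v x ≠ 0) {x₀ e : EuclideanSpace ℝ (Fin 4)}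
    (hx : x₀ ≠ 0) (hG : fderiv ℝ v x₀ = 0) (hli : LinearIndependent ℝ ![x₀, e])
    (hmax : ∀ x, x ≠ 0 → fderiv ℝ v x e ≤ 0) : fderiv ℝ v e = 0 := by
  have he : e ≠ 0 := hli.ne_zero 1
  obtain ⟨m, P, hP, ⟨y₀, hy₀⟩, hP0, hdP0, hE, l0, l1, l2, hpde⟩ := h.blowup hv hx hG
  have c1 : ContDiff ℝ ⊤ (fderiv ℝ P) := hP.fderiv_right (by simp)
  have d1 : Differentiable ℝ (fderiv ℝ P) := c1.differentiable (by simp)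
  have hneg : ∀ y, 0 ≤ - fderiv ℝ P y e := by
    intro y
    have : fderiv ℝ P y e ≤ 0 := by
      refine le_of_tendsto (tendsto_clm_apply (l1 y) e) ?_
      filter_upwards [(ray_tendsto x₀ y).eventually (ev_ne hx), self_mem_nhdsWithin] with t ht htp
      have htp' : (0:ℝ) < t := htp
      rw [smul_apply, smul_eq_mul]
      exact mul_nonpos_of_nonneg_of_nonpos (by positivity) (hmax _ ht)
    linarith
  have hcf : ContDiff ℝ 2 (fun y => - fderiv ℝ P y e) :=
    ((c1.clm_apply contDiff_const).neg).of_le le_top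
  have hz : ∀ y, fderiv ℝ P y e = 0 := by
    intro y
    have := max_principle (h.ell_at hx) hcf hneg (by simp [hdP0]) (trA_dir hP hpde e) y
    simpa using this
  obtain ⟨η, hη⟩ : ∃ η, fderiv ℝ (fderiv ℝ P) η ≠ 0 := by
    by_contra! hall
    have hc := is_const_of_fderiv_eq_zero d1 hall
    have h1 := hE y₀
    rw [hc y₀ 0, hdP0] at h1
    have : ((m:ℝ) + 2) ≠ 0 := by positivity
    simp [this, hy₀] at h1
  set Q := fderiv ℝ (fderiv ℝ P) η with hQ
  have hQs : ∀ p q, Q p q = Q q p := fun p q =>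
    hP.contDiffAt.isSymmSndFDerivAt (x := η) (by simp) p q
  have hQe : ∀ p, Q p e = 0 := by
    intro p
    have h1 := (d1 η).hasFDerivAt.clm_apply (hasFDerivAt_const e η)
    have h2 : (fun y => fderiv ℝ P y e) = fun _ => 0 := funext hz
    rw [h2] at h1
    have h3 := congrArg (fun L => L p) (h1.unique (hasFDerivAt_const (0:ℝ) η))
    simpa using h3
  obtain ⟨u, w, huw⟩ := exists_minor (h.ell_at hx) hQs (hpde η) hη
  set K : ℝ → EuclideanSpace ℝ (Fin 4) →L[ℝ] EuclideanSpace ℝ (Fin 4) →L[ℝ] ℝ :=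
    fun t => (t ^ m)⁻¹ • fderiv ℝ (fderiv ℝ v) (x₀ + t • η) with hK
  have lK : ∀ p q, Tendsto (fun t => K t p q) (𝓝[>] 0) (𝓝 (Q p q)) := fun p q =>
    tendsto_clm_apply (tendsto_clm_apply (l2 η) p) q
  have lD : Tendsto (fun t => K t u u * K t w w - K t u w * K t u w) (𝓝[>] 0)
      (𝓝 (Q u u * Q w w - Q u w * Q u w)) :=
    ((lK u u).mul (lK w w)).sub ((lK u w).mul (lK u w))
  let c₁ : ℝ → ℝ := fun t => (K t w w * K t u e - K t u w * K t w e) /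
    (K t u u * K t w w - K t u w * K t u w)
  let c₂ : ℝ → ℝ := fun t => (K t u u * K t w e - K t u w * K t u e) /
    (K t u u * K t w w - K t u w * K t u w)
  have lc₁ : Tendsto c₁ (𝓝[>] 0) (𝓝 0) := by
    have := ((((lK w w).mul (lK u e)).sub ((lK u w).mul (lK w e))).div lD huw)
    simp only [hQe, mul_zero, sub_zero, zero_div] at this
    exact this
  have lc₂ : Tendsto c₂ (𝓝[>] 0) (𝓝 0) := by
    have := ((((lK u u).mul (lK w e)).sub ((lK u w).mul (lK u e))).div lD huw)
    simp only [hQe, mul_zero, sub_zero, zero_div] at this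
    exact this
  let et : ℝ → EuclideanSpace ℝ (Fin 4) := fun t => e - c₁ t • u - c₂ t • w
  have let_lim : Tendsto et (𝓝[>] 0) (𝓝 e) := by
    have := ((tendsto_const_nhds (x := e)).sub (lc₁.smul_const u)).sub (lc₂.smul_const w)
    simpa using this
  have hray := ray_tendsto x₀ η
  have lli : ∀ᶠ t in 𝓝[>] (0:ℝ), LinearIndependent ℝ ![x₀ + t • η, et t] := by
    have hopen := isOpen_setOfPred_linearIndependent (𝕜 := ℝ) (E := EuclideanSpace ℝ (Fin 4)) (ι := Fin 2)
    have ht : Tendsto (fun t => ![x₀ + t • η, et t]) (𝓝[>] 0) (𝓝 ![x₀, e]) := by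
      rw [tendsto_pi_nhds]
      intro i
      fin_cases i
      · simpa using hray
      · simpa using let_lim
    exact ht.eventually (hopen.mem_nhds hli)
  have hev : ∀ᶠ t in 𝓝[>] (0:ℝ), fderiv ℝ v (et t) = fderiv ℝ v (x₀ + t • η) := by
    filter_upwards [lli, hray.eventually (ev_ne hx), self_mem_nhdsWithin, lD.eventually_ne huw]
      with t h1 h2 h3 h4
    have htp : (0:ℝ) < t := h3
    have htm : t ^ m ≠ 0 := by positivity
    have hKp : ∀ p q, fderiv ℝ (fderiv ℝ v) (x₀ + t • η) p q = t ^ m * K t p q := by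
      intro p q
      simp only [hK, smul_apply, smul_eq_mul]
      field_simp
    have hsym : K t w u = K t u w := by
      have := h.H_sym h2 w u
      rw [hKp, hKp] at this
      exact mul_left_cancel₀ htm this
    have hd : fderiv ℝ (fderiv ℝ v) (x₀ + t • η) u u * fderiv ℝ (fderiv ℝ v) (x₀ + t • η) w w
        - fderiv ℝ (fderiv ℝ v) (x₀ + t • η) u w * fderiv ℝ (fderiv ℝ v) (x₀ + t • η) u w ≠ 0 := by
      simp only [hKp]
      have : t ^ m * K t u u * (t ^ m * K t w w) - t ^ m * K t u w * (t ^ m * K t u w)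
        = (t ^ m * t ^ m) * (K t u u * K t w w - K t u w * K t u w) := by ring
      rw [this]
      exact mul_ne_zero (mul_ne_zero htm htm) h4
    refine h.leaf h1 hd (h.ker_of_two h2 rfl hd ?_ ?_)
    · rw [hKp]
      simp only [et, map_sub, map_smul, smul_eq_mul, c₁, c₂]
      rw [cramer₁ h4, mul_zero]
    · rw [hKp]
      simp only [et, map_sub, map_smul, smul_eq_mul, c₁, c₂, hsym]
      rw [cramer₂ h4, mul_zero]
  have A1 := (h.G_tendsto he).comp let_lim
  have A2 := (h.G_tendsto hx).comp hray
  rw [← hG]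
  refine tendsto_nhds_unique A1 (A2.congr' ?_)
  filter_upwards [hev] with t ht using ht.symm

lemma core (h : Hyp v a c) {x₀ e : EuclideanSpace ℝ (Fin 4)}
    (hx : x₀ ≠ 0) (he : e ≠ 0) (hG : fderiv ℝ v x₀ = 0)
    (hmax : ∀ x, x ≠ 0 → fderiv ℝ v x e ≤ 0) : ∀ x, x ≠ 0 → v x = 0 := by
  by_contra! hv
  by_cases hli : LinearIndependent ℝ ![x₀, e]
  · have h1 := h.G_e_eq_zero hv hx hG hli hmax
    exact h.no_max_parallel hv he h1 one_ne_zero (by simpa using hmax)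
  · rw [LinearIndependent.pair_iff' hx] at hli
    push Not at hli
    obtain ⟨s, hs⟩ := hli
    have hs0 : s ≠ 0 := by rintro rfl; exact he (by simpa using hs.symm)
    exact h.no_max_parallel hv hx hG hs0 (by rw [hs]; exact hmax)

lemma fderiv_sub_lin (h : Hyp v a c) (l : EuclideanSpace ℝ (Fin 4) →L[ℝ] ℝ)
    {x : EuclideanSpace ℝ (Fin 4)} (hx : x ≠ 0) :
    fderiv ℝ (fun y => v y - l y) x = fderiv ℝ v x - l :=
  ((h.an _ hx).differentiableAt.hasFDerivAt.sub l.hasFDerivAt).fderiv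

lemma hess_sub_lin (h : Hyp v a c) (l : EuclideanSpace ℝ (Fin 4) →L[ℝ] ℝ)
    {x : EuclideanSpace ℝ (Fin 4)} (hx : x ≠ 0) :
    fderiv ℝ (fderiv ℝ (fun y => v y - l y)) x = fderiv ℝ (fderiv ℝ v) x := by
  have h1 : fderiv ℝ (fun y => v y - l y) =ᶠ[𝓝 x] fun y => fderiv ℝ v y - l := by
    filter_upwards [ev_ne hx] with y hy using h.fderiv_sub_lin l hy
  rw [h1.fderiv_eq, fderiv_sub_const]

lemma sub_lin (h : Hyp v a c) (l : EuclideanSpace ℝ (Fin 4) →L[ℝ] ℝ) :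
    Hyp (fun y => v y - l y) a c where
  an := fun x hx => (h.an x hx).sub (l.analyticAt x)
  hom := fun t ht x hx => by
    simp only [h.hom t ht x hx, map_smul, smul_eq_mul]; ring
  ca := h.ca
  ell := h.ell
  eq := fun x hx => by rw [h.hess_sub_lin l hx]; exact h.eq x hx
  minor := fun x hx p q => by rw [h.hess_sub_lin l hx]; exact h.minor x hx p q

lemma linear (h : Hyp v a c) : ∃ l : EuclideanSpace ℝ (Fin 4) →L[ℝ] ℝ, ∀ x, x ≠ 0 → v x = l x := by
  let e : EuclideanSpace ℝ (Fin 4) := bb 0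
  have hen : ‖e‖ = 1 := by simp [e, bb]
  have he : e ≠ 0 := norm_ne_zero_iff.mp (by rw [hen]; exact one_ne_zero)
  have hsph : ∀ x ∈ Metric.sphere (0 : EuclideanSpace ℝ (Fin 4)) 1, x ≠ 0 := by
    intro x hx h0
    simp [h0] at hx
  have hcont : ContinuousOn (fun x => fderiv ℝ v x e) (Metric.sphere 0 1) := fun x hx =>
    (((ContinuousLinearMap.apply ℝ ℝ e).continuous.tendsto _).comp
      (h.G_tendsto (hsph x hx))).mono_left nhdsWithin_le_nhds
  obtain ⟨x₀, hx₀, hm⟩ := (isCompact_sphere (0 : EuclideanSpace ℝ (Fin 4)) 1).exists_isMaxOn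
    ⟨e, by simpa using hen⟩ hcont
  have hx := hsph x₀ hx₀
  refine ⟨fderiv ℝ v x₀, fun x hx1 => ?_⟩
  have h1 := (h.sub_lin (fderiv ℝ v x₀)).core hx he
    (by rw [h.fderiv_sub_lin _ hx, sub_self]) (fun y hy => by
      rw [h.fderiv_sub_lin _ hy, sub_apply]
      have hy' : 0 < ‖y‖⁻¹ := inv_pos.mpr (norm_pos_iff.mpr hy)
      have h2 : ‖y‖⁻¹ • y ∈ Metric.sphere (0 : EuclideanSpace ℝ (Fin 4)) 1 := by
        rw [mem_sphere_zero_iff_norm, norm_smul, norm_inv, norm_norm,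
          inv_mul_cancel₀ (norm_ne_zero_iff.mpr hy)]
      have h3 := hm h2
      simp only [Set.mem_ofPred_eq, h.G_hom hy' hy] at h3
      linarith) x hx1
  linarith

end Hyp

/-- Lemma 2: let `v` be real analytic and positively 1-homogeneous on `ℝ⁴ ∖ {0}`,
solving a linear uniformly elliptic equation `Σ aᵢⱼ(x/|x|) ∂²v/∂xᵢ∂xⱼ = 0` with
coefficients smooth away from the origin. If the Hessian of `v` has rank at most `2`
at every point of `ℝ⁴ ∖ {0}`, then `v` is linear. -/
theorem homogeneous_order_one_low_rank_hessian_is_linear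
    (v : EuclideanSpace ℝ (Fin 4) → ℝ)
    (h_an : AnalyticOnNhd ℝ v {x | x ≠ 0})
    (h_hom : ∀ t : ℝ, 0 < t → ∀ x : EuclideanSpace ℝ (Fin 4), x ≠ 0 →
      v (t • x) = t * v x)
    (a : Fin 4 → Fin 4 → EuclideanSpace ℝ (Fin 4) → ℝ)
    (h_sm : ∀ i j, ContDiffOn ℝ (⊤ : ℕ∞) (a i j) {x | x ≠ 0})
    (C : ℝ) (hC : 1 ≤ C)
    (h_ell : ∀ θ : EuclideanSpace ℝ (Fin 4), ‖θ‖ = 1 →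
      ∀ ξ : EuclideanSpace ℝ (Fin 4),
        (1 / C) * ‖ξ‖ ^ 2 ≤ ∑ i, ∑ j, a i j θ * ξ i * ξ j ∧
        ∑ i, ∑ j, a i j θ * ξ i * ξ j ≤ C * ‖ξ‖ ^ 2)
    (h_eq : ∀ x : EuclideanSpace ℝ (Fin 4), x ≠ 0 →
      ∑ i, ∑ j, a i j (‖x‖⁻¹ • x) *
        iteratedFDeriv ℝ 2 v x ![EuclideanSpace.single i 1, EuclideanSpace.single j 1] = 0)
    (h_rank : ∀ x : EuclideanSpace ℝ (Fin 4), x ≠ 0 →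
      Matrix.rank (Matrix.of fun i j =>
        iteratedFDeriv ℝ 2 v x ![EuclideanSpace.single i 1, EuclideanSpace.single j 1]) ≤ 2) :
    ∃ ℓ : EuclideanSpace ℝ (Fin 4) →ₗ[ℝ] ℝ,
      ∀ x : EuclideanSpace ℝ (Fin 4), x ≠ 0 → v x = ℓ x := by
  have hit : ∀ (x : EuclideanSpace ℝ (Fin 4)) (i j : Fin 4),
      iteratedFDeriv ℝ 2 v x ![EuclideanSpace.single i 1, EuclideanSpace.single j 1]
        = fderiv ℝ (fderiv ℝ v) x (bb i) (bb j) := by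
    intro x i j
    rw [iteratedFDeriv_two_apply]
    rfl
  simp only [hit] at h_eq h_rank
  have h : Hyp v a (1 / C) :=
    { an := h_an
      hom := h_hom
      ca := fun i j => (h_sm i j).continuousOn
      ell := fun θ hθ => ⟨by positivity, fun ξ => (h_ell θ hθ ξ).1⟩
      eq := h_eq
      minor := fun x hx p q => minor_of_rank (h_rank x hx) p q }
  obtain ⟨l, hl⟩ := h.linear
  exact ⟨l, hl⟩
end

section
/- Let Q(x,y,z) ∈ ℝ[x,y,z] be a cubic form such that for every e ∈ S² the quadratic form Q_e = ∂_e Q is degenerate (its 3×3 symmetric matrix is singular). Then Q is a function of two variables in some linear coordinate system; equivalently, there exists a nonzero vector w ∈ ℝ³ with ∂_w Q ≡ 0. -/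
open MvPolynomial

/-- Directional derivative `∂ₑQ` of a polynomial `Q` in direction `e`. -/
noncomputable def dirDeriv (e : Fin 3 → ℝ) (Q : MvPolynomial (Fin 3) ℝ) :
    MvPolynomial (Fin 3) ℝ :=
  ∑ i, MvPolynomial.C (e i) * MvPolynomial.pderiv i Q

/-- Determinant of the 3×3 Hessian matrix (of second partial derivatives) of a
polynomial `R`; for a quadratic form `R` this vanishes iff its associated symmetric
matrix is singular. -/
noncomputable def hessDet (R : MvPolynomial (Fin 3) ℝ) : ℝ :=
  Matrix.det (Matrix.of fun i j =>
    MvPolynomial.eval (0 : Fin 3 → ℝ) (MvPolynomial.pderiv i (MvPolynomial.pderiv j R)))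


/-- The trilinear form with coefficients `t`. -/
noncomputable def triForm (t : Fin 3 → Fin 3 → Fin 3 → ℝ) (x y z : Fin 3 → ℝ) : ℝ :=
  ∑ i, ∑ j, ∑ k, t i j k * x i * y j * z k

lemma triForm_add (t : Fin 3 → Fin 3 → Fin 3 → ℝ) (x x' y z : Fin 3 → ℝ) :
    triForm t (x + x') y z = triForm t x y z + triForm t x' y z := by
  simp only [triForm, ← Finset.sum_add_distrib, Pi.add_apply]
  refine Finset.sum_congr rfl fun i _ => Finset.sum_congr rfl fun j _ =>
    Finset.sum_congr rfl fun k _ => by ring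

lemma triForm_smul (t : Fin 3 → Fin 3 → Fin 3 → ℝ) (c : ℝ) (x y z : Fin 3 → ℝ) :
    triForm t (c • x) y z = c * triForm t x y z := by
  simp only [triForm, Finset.mul_sum, Pi.smul_apply, smul_eq_mul]
  refine Finset.sum_congr rfl fun i _ => Finset.sum_congr rfl fun j _ =>
    Finset.sum_congr rfl fun k _ => by ring

lemma triForm_swap (t : Fin 3 → Fin 3 → Fin 3 → ℝ) (h1 : ∀ i j k, t i j k = t j i k)
    (x y z : Fin 3 → ℝ) : triForm t x y z = triForm t y x z := by
  simp only [triForm]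
  rw [Finset.sum_comm]
  refine Finset.sum_congr rfl fun i _ => Finset.sum_congr rfl fun j _ =>
    Finset.sum_congr rfl fun k _ => by rw [h1]; ring

lemma triForm_swap' (t : Fin 3 → Fin 3 → Fin 3 → ℝ) (h2 : ∀ i j k, t i j k = t i k j)
    (x y z : Fin 3 → ℝ) : triForm t x y z = triForm t x z y := by
  simp only [triForm]
  refine Finset.sum_congr rfl fun i _ => ?_
  rw [Finset.sum_comm]
  refine Finset.sum_congr rfl fun j _ =>
    Finset.sum_congr rfl fun k _ => by rw [h2]; ring

/-- The matrix of the quadratic form obtained by contracting with `e`. -/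
noncomputable def triMat (t : Fin 3 → Fin 3 → Fin 3 → ℝ) (e : Fin 3 → ℝ) :
    Matrix (Fin 3) (Fin 3) ℝ :=
  Matrix.of fun i j => ∑ k, e k * t k i j

lemma triMat_gram (t : Fin 3 → Fin 3 → Fin 3 → ℝ) (e : Fin 3 → ℝ)
    (P : Matrix (Fin 3) (Fin 3) ℝ) (a b : Fin 3) :
    (P * triMat t e * P.transpose) a b = triForm t e (P a) (P b) := by
  simp only [Matrix.mul_apply, triMat, triForm, Matrix.of_apply, Matrix.transpose_apply,
    Fin.sum_univ_three]
  ring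

lemma triForm_mulVec (t : Fin 3 → Fin 3 → Fin 3 → ℝ) (e x v : Fin 3 → ℝ) :
    triForm t e x v = ∑ i, x i * (triMat t e).mulVec v i := by
  simp only [Matrix.mulVec, dotProduct, triMat, triForm, Matrix.of_apply,
    Fin.sum_univ_three]
  ring

lemma triForm_single (t : Fin 3 → Fin 3 → Fin 3 → ℝ) (e : Fin 3 → ℝ) (i j : Fin 3) :
    triForm t e (Pi.single i 1) (Pi.single j 1) = triMat t e i j := by
  simp [triForm, triMat, Pi.single_apply, mul_comm]

lemma tri_core (t : Fin 3 → Fin 3 → Fin 3 → ℝ) (h1 : ∀ i j k, t i j k = t j i k)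
    (h2 : ∀ i j k, t i j k = t i k j) (hd : ∀ e, (triMat t e).det = 0) :
    ∃ w : Fin 3 → ℝ, w ≠ 0 ∧ triMat t w = 0 := by
  have A1 := triForm_add t
  have S1 := triForm_smul t
  have W1 := triForm_swap t h1
  have W2 := triForm_swap' t h2
  have A2 : ∀ x y y' z, triForm t x (y + y') z = triForm t x y z + triForm t x y' z := by
    intro x y y' z; rw [W1, A1, W1 y, W1 y']
  have A3 : ∀ x y z z', triForm t x y (z + z') = triForm t x y z + triForm t x y z' := by
    intro x y z z'; rw [W2, A2, W2 x z, W2 x z']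
  have S2 : ∀ c x y z, triForm t x (c • y) z = c * triForm t x y z := by
    intro c x y z; rw [W1, S1, W1 y]
  have S3 : ∀ c x y z, triForm t x y (c • z) = c * triForm t x y z := by
    intro c x y z; rw [W2, S2, W2 x z]
  by_cases hz : ∀ p, triForm t p p p = 0
  · -- polarization
    have hpp : ∀ x y, triForm t x x y = 0 := by
      intro x y
      have e1 := hz (x + y)
      have e2 := hz (x + (-1 : ℝ) • y)
      simp only [A1, A2, A3, S1, S2, S3, hz] at e1 e2
      have := W1 y x x
      have := W2 x y x
      have := W1 y x y
      have := W2 y y x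
      linarith
    have hall : ∀ x y z, triForm t x y z = 0 := by
      intro x y z
      have e1 := hpp (x + y) z
      simp only [A1, A2, hpp] at e1
      have := W1 y x z
      linarith
    refine ⟨Pi.single 0 1, by simp, ?_⟩
    ext i j
    rw [← triForm_single, hall]; rfl
  push Not at hz
  obtain ⟨p, hp⟩ := hz
  obtain ⟨v, hv0, hv⟩ := Matrix.exists_mulVec_eq_zero_iff.mpr (hd p)
  have hpv : ∀ x, triForm t p x v = 0 := by
    intro x; rw [triForm_mulVec, hv]; simp
  obtain ⟨u, hu, hli⟩ : ∃ u, triForm t p p u = 0 ∧ (Matrix.of ![p, u, v]).det ≠ 0 := by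
    set u0 : Fin 3 → ℝ := crossProduct v p with hu0
    refine ⟨u0 + (-(triForm t p p u0) / triForm t p p p) • p, ?_, ?_⟩
    · rw [A3, S3]; field_simp; ring
    · have hdet : (Matrix.of ![p, u0 + (-(triForm t p p u0) / triForm t p p p) • p, v]).det
          = u0 0 ^ 2 + u0 1 ^ 2 + u0 2 ^ 2 := by
        generalize (-(triForm t p p u0) / triForm t p p p) = c
        simp only [Matrix.det_fin_three, hu0, cross_apply, Matrix.of_apply, Pi.add_apply, Pi.smul_apply,
          smul_eq_mul, Matrix.cons_val]
        ring
      rw [hdet]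
      intro h0
      have z0 : u0 0 = 0 := by nlinarith [sq_nonneg (u0 0), sq_nonneg (u0 1), sq_nonneg (u0 2)]
      have z1 : u0 1 = 0 := by nlinarith [sq_nonneg (u0 0), sq_nonneg (u0 1), sq_nonneg (u0 2)]
      have z2 : u0 2 = 0 := by nlinarith [sq_nonneg (u0 0), sq_nonneg (u0 1), sq_nonneg (u0 2)]
      simp [hu0, cross_apply] at z0 z1 z2
      obtain ⟨i, hi⟩ : ∃ i, v i ≠ 0 := by
        by_contra hcon
        push Not at hcon
        exact hv0 (funext hcon)
      have hpar : v i • p = p i • v := by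
        ext j
        fin_cases i <;> fin_cases j <;> simp <;> linarith
      have e1 : triForm t p p (v i • p) = triForm t p p (p i • v) := by rw [hpar]
      rw [S3, S3, hpv] at e1
      have : v i * triForm t p p p = 0 := by linarith
      exact (mul_ne_zero hi hp) this
  set P := Matrix.of ![p, u, v] with hP
  have hPu : IsUnit P.det := isUnit_iff_ne_zero.mpr hli
  -- vanishing on the basis implies vanishing
  have hvan : ∀ w, (∀ a b, triForm t w (P a) (P b) = 0) → triMat t w = 0 := by
    intro w hw
    have hg : P * triMat t w * P.transpose = 0 := by
      ext a b; rw [triMat_gram, hw]; rfl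
    have hPu' : IsUnit P.transpose.det := by rwa [Matrix.det_transpose]
    have h3 : P * triMat t w = 0 := by
      have := congrArg (· * P.transpose⁻¹) hg
      simpa [Matrix.mul_nonsing_inv_cancel_right _ _ hPu'] using this
    have := congrArg (P⁻¹ * ·) h3
    simpa [Matrix.nonsing_inv_mul_cancel_left _ _ hPu] using this
  have hu0 : u ≠ 0 := by
    rintro rfl
    apply hli; simp [hP, Matrix.det_fin_three]
  -- values
  have P0 : P 0 = p := rfl
  have P1 : P 1 = u := rfl
  have P2 : P 2 = v := rfl
  have q1 : triForm t p u p = 0 := by rw [W2, hu]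
  have q2 : triForm t u p p = 0 := by rw [W1, q1]
  have q3 : ∀ x, triForm t p v x = 0 := fun x => by rw [W2, hpv]
  have q4 : ∀ x, triForm t v p x = 0 := fun x => by rw [W1, q3]
  have q5 : ∀ x, triForm t x p v = 0 := fun x => by rw [W1, hpv]
  have q6 : ∀ x, triForm t x v p = 0 := fun x => by rw [W2, q5]
  have q7 : ∀ x, triForm t v x p = 0 := fun x => by rw [W2, q4]
  have r1 : triForm t u p u = triForm t p u u := W1 _ _ _
  have r2 : triForm t u u p = triForm t p u u := by rw [W2, r1]
  have r3 : triForm t u v u = triForm t u u v := W2 _ _ _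
  have r4 : triForm t v u u = triForm t u u v := by rw [W1, r3]
  have r5 : triForm t v u v = triForm t u v v := W1 _ _ _
  have r6 : triForm t v v u = triForm t u v v := by rw [W2, r5]
  have key : ∀ x y z : ℝ, (P * triMat t (x • p + y • u + z • v) * P.transpose).det = 0 := by
    intro x y z
    rw [Matrix.det_mul, Matrix.det_mul, hd]; ring
  simp only [Matrix.det_fin_three, triMat_gram, P0, P1, P2, A1, S1, hpv, hu, q1, q2, q3, q4, q5,
    q6, q7, r1, r2, r3, r4, r5, r6] at key
  generalize hl : triForm t p p p = l at *
  generalize ha : triForm t p u u = a at *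
  generalize hc0 : triForm t u u u = c0 at *
  generalize hc1 : triForm t u u v = c1 at *
  generalize hc2 : triForm t u v v = c2 at *
  generalize hc3 : triForm t v v v = c3 at *
  have fin : ∀ α β : ℝ, α • u + β • v ≠ 0 → α * a = 0 → α * c0 + β * c1 = 0 →
      α * c1 + β * c2 = 0 → α * c2 + β * c3 = 0 → ∃ w : Fin 3 → ℝ, w ≠ 0 ∧ triMat t w = 0 := by
    intro α β hne k0 k1 k2 k3
    refine ⟨_, hne, hvan _ ?_⟩
    intro i j
    fin_cases i <;> fin_cases j <;>
      simp [P0, P1, P2, A1, S1, hpv, hu, q1, q2, q3, q4, q5, q6, q7, r1, r2, r3, r4, r5, r6,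
        hc0, hc1, hc2, hc3, ha] <;> first | linarith | simpa using k0
  have hindep : ∀ α β : ℝ, α • u + β • v = 0 → α = 0 := by
    intro α β h
    have : α * P.det = 0 := by
      have : α * P.det = (Matrix.of ![p, α • u + β • v, v]).det := by
        simp [hP, Matrix.det_fin_three]; ring
      rw [this, h]; simp [Matrix.det_fin_three]
    exact (mul_eq_zero.mp this).resolve_right hli
  by_cases ha0 : a = 0
  · subst ha0
    have k1 := key 1 1 0
    have k2 := key 1 0 1
    have k3 := key 1 1 1
    have e1 : c0 * c2 - c1 ^ 2 = 0 := by
      apply mul_left_cancel₀ hp; linarith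
    have e2 : c1 * c3 - c2 ^ 2 = 0 := by
      apply mul_left_cancel₀ hp; linarith
    have e3 : c0 * c3 - c1 * c2 = 0 := by
      have : (c0 + c1) * (c2 + c3) - (c1 + c2) ^ 2 = 0 := by
        apply mul_left_cancel₀ hp; linarith
      linarith
    by_cases h1 : c1 = 0
    · subst h1
      have : c2 = 0 := by nlinarith
      subst this
      by_cases h0 : c0 = 0
      · subst h0
        by_cases h3 : c3 = 0
        · subst h3
          exact fin 1 0 (fun h => one_ne_zero (hindep _ _ h)) (by simp) (by simp) (by simp) (by simp)
        · exact fin 1 0 (fun h => one_ne_zero (hindep _ _ h)) (by simp) (by simp) (by simp) (by simp)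
      · have h3 : c3 = 0 := by
          apply mul_left_cancel₀ h0; linarith
        exact fin 0 1 (by simpa using hv0) (by simp) (by simp) (by simp) (by simp [h3])
    · exact fin c1 (-c0) (fun h => h1 (hindep _ _ h)) (by simp) (by ring) (by linarith)
        (by linarith)
  · have k1 := key 0 1 0
    have k2 := key 0 1 1
    have k3 := key 1 1 0
    have e2 : c2 = 0 := by
      apply mul_left_cancel₀ (pow_ne_zero 2 ha0); linarith
    subst e2
    have e3 : c3 = 0 := by
      apply mul_left_cancel₀ (pow_ne_zero 2 ha0); linarith
    subst e3
    have e1 : c1 = 0 := by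
      have : c1 ^ 2 = 0 := by
        apply mul_left_cancel₀ hp; linarith
      simpa using this
    subst e1
    exact fin 0 1 (by simpa using hv0) (by simp) (by simp) (by simp) (by simp)

lemma pderiv_pderiv_comm3 (i j : Fin 3) (R : MvPolynomial (Fin 3) ℝ) :
    pderiv i (pderiv j R) = pderiv j (pderiv i R) := by
  by_cases hij : i = j
  · rw [hij]
  ext m
  simp only [coeff_pderiv, Finsupp.add_apply, Finsupp.single_apply, if_neg hij,
    if_neg (Ne.symm hij), add_zero]
  rw [add_right_comm]
  ring

lemma homog_zero_of_pderiv (n : ℕ) (hn : n ≠ 0) (R : MvPolynomial (Fin 3) ℝ)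
    (hR : R.IsHomogeneous n) (h : ∀ i, pderiv i R = 0) : R = 0 := by
  have := hR.sum_X_mul_pderiv
  simp [h] at this
  tauto

/-- Lemma 3: a cubic form `Q` on `ℝ³` such that the quadratic form `Q_e = ∂ₑQ` is
degenerate for every unit vector `e ∈ S²` is a function of two variables in suitable
linear coordinates; equivalently, some nonzero directional derivative of `Q`
vanishes identically. -/
theorem cubic_form_all_directional_hessians_degenerate
    (Q : MvPolynomial (Fin 3) ℝ) (hQ : Q.IsHomogeneous 3)
    (h_deg : ∀ e : Fin 3 → ℝ, (∑ i, e i ^ 2) = 1 → hessDet (dirDeriv e Q) = 0) :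
    ∃ w : Fin 3 → ℝ, w ≠ 0 ∧ dirDeriv w Q = 0 := by
  set t : Fin 3 → Fin 3 → Fin 3 → ℝ := fun k i j =>
    eval (0 : Fin 3 → ℝ) (pderiv i (pderiv j (pderiv k Q))) with ht
  have hM : ∀ e i j, eval (0 : Fin 3 → ℝ) (pderiv i (pderiv j (dirDeriv e Q)))
      = triMat t e i j := by
    intro e i j
    simp [dirDeriv, triMat, ht, map_sum, Derivation.leibniz]
  have hH : ∀ e, hessDet (dirDeriv e Q) = (triMat t e).det := by
    intro e
    unfold hessDet
    congr 1
    ext i j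
    exact hM e i j
  have hd : ∀ e, (triMat t e).det = 0 := by
    intro e
    by_cases he : ∑ i, e i ^ 2 = 0
    · have : e = 0 := by
        ext i
        have := (Finset.sum_eq_zero_iff_of_nonneg (fun i _ => sq_nonneg (e i))).mp he i
          (Finset.mem_univ i)
        simpa using this
      have h0 : triMat t e = 0 := by ext i j; simp [triMat, this]
      rw [h0]; simp
    · set s := Real.sqrt (∑ i, e i ^ 2) with hs
      have hpos : 0 < ∑ i, e i ^ 2 :=
        lt_of_le_of_ne (Finset.sum_nonneg fun i _ => sq_nonneg _) (Ne.symm he)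
      have hs2 : s ^ 2 = ∑ i, e i ^ 2 := Real.sq_sqrt hpos.le
      have hs0 : s ≠ 0 := (Real.sqrt_pos.mpr hpos).ne'
      have h1 := h_deg (s⁻¹ • e) (by
        simp only [Pi.smul_apply, smul_eq_mul, mul_pow, ← Finset.mul_sum]
        rw [← hs2]; field_simp)
      rw [hH] at h1
      have h2 : triMat t (s⁻¹ • e) = s⁻¹ • triMat t e := by
        ext i j; simp [triMat, Finset.mul_sum, mul_assoc]
      rw [h2, Matrix.det_smul] at h1
      simpa [hs0] using h1
  obtain ⟨w, hw, hw0⟩ := tri_core t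
    (by intro i j k
        simp only [ht]
        rw [pderiv_pderiv_comm3 j k, pderiv_pderiv_comm3 i k, pderiv_pderiv_comm3 j i])
    (by intro i j k
        simp only [ht]
        rw [pderiv_pderiv_comm3 j k]) hd
  refine ⟨w, hw, ?_⟩
  have hR : (dirDeriv w Q).IsHomogeneous 2 := by
    unfold dirDeriv
    refine IsHomogeneous.sum _ _ _ fun i _ => ?_
    simpa using (isHomogeneous_C _ (w i)).mul (hQ.pderiv (i := i))
  refine homog_zero_of_pderiv 2 (by norm_num) _ hR fun j => ?_
  have hRj : (pderiv j (dirDeriv w Q)).IsHomogeneous 1 := by simpa using hR.pderiv (i := j)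
  refine homog_zero_of_pderiv 1 (by norm_num) _ hRj fun i => ?_
  have hRij : (pderiv i (pderiv j (dirDeriv w Q))).IsHomogeneous 0 := by
    simpa using hRj.pderiv (i := i)
  have h0 := hM w i j
  rw [hw0] at h0
  have hc := totalDegree_eq_zero_iff_eq_C.mp (Nat.le_zero.mp hRij.totalDegree_le)
  rw [hc] at h0 ⊢
  simpa using h0
end

section
/- Let Q(x,y,z) ∈ ℝ[x,y,z] be a cubic form and let C ⊆ S² be a curve (the image of a nonconstant continuous injective map from [0,1] into S²) such that for all a ≠ b in C the linear form Q_{ab} = ∂_a∂_b Q vanishes identically. Then Q is a function of two variables in some linear coordinate system; equivalently, there exists a nonzero vector w ∈ ℝ³ with ∂_w Q ≡ 0. -/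
open MvPolynomial

lemma dd_add (e f : Fin 3 → ℝ) (P : MvPolynomial (Fin 3) ℝ) :
    dirDeriv (e + f) P = dirDeriv e P + dirDeriv f P := by
  simp [dirDeriv, add_mul, Finset.sum_add_distrib]

lemma dd_smul (r : ℝ) (e : Fin 3 → ℝ) (P : MvPolynomial (Fin 3) ℝ) :
    dirDeriv (r • e) P = C r * dirDeriv e P := by
  simp [dirDeriv, Finset.mul_sum, mul_assoc]

lemma dd_add' (e : Fin 3 → ℝ) (P R : MvPolynomial (Fin 3) ℝ) :
    dirDeriv e (P + R) = dirDeriv e P + dirDeriv e R := by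
  simp [dirDeriv, mul_add, Finset.sum_add_distrib]

lemma dd_smul' (r : ℝ) (e : Fin 3 → ℝ) (P : MvPolynomial (Fin 3) ℝ) :
    dirDeriv e (C r * P) = C r * dirDeriv e P := by
  simp only [dirDeriv, Finset.mul_sum, Derivation.map_smul, C_mul']
  refine Finset.sum_congr rfl fun i _ => ?_
  rw [smul_comm]

lemma dd_zero (e : Fin 3 → ℝ) : dirDeriv e 0 = 0 := by
  simp [dirDeriv]

lemma pderiv_swap (i j : Fin 3) (P : MvPolynomial (Fin 3) ℝ) :
    pderiv i (pderiv j P) = pderiv j (pderiv i P) := by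
  have h : ⁅pderiv (R := ℝ) i, pderiv (R := ℝ) j⁆ = 0 := by
    apply MvPolynomial.derivation_ext
    intro k
    rw [Derivation.commutator_apply]
    simp only [pderiv_X, Pi.single_apply]
    split_ifs <;> simp
  have h2 := congrArg (fun D => D P) h
  simp only [Derivation.commutator_apply] at h2
  exact sub_eq_zero.mp (by simpa using h2)

lemma dd_comm (e f : Fin 3 → ℝ) (P : MvPolynomial (Fin 3) ℝ) :
    dirDeriv e (dirDeriv f P) = dirDeriv f (dirDeriv e P) := by
  simp only [dirDeriv, Fin.sum_univ_three, map_add, Derivation.map_smul, C_mul', smul_add]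
  rw [pderiv_swap 1 0, pderiv_swap 2 0, pderiv_swap 2 1]
  simp only [smul_smul, mul_comm (f _) (e _)]
  abel

lemma dd_hom {n : ℕ} (e : Fin 3 → ℝ) {P : MvPolynomial (Fin 3) ℝ} (h : P.IsHomogeneous n) :
    (dirDeriv e P).IsHomogeneous (n - 1) := by
  unfold dirDeriv
  apply IsHomogeneous.sum
  intro i _
  exact (h.pderiv).C_mul _

/-- A homogeneous polynomial of positive degree killed by all derivatives is zero. -/
lemma hom_zero {n : ℕ} (hn : n ≠ 0) {P : MvPolynomial (Fin 3) ℝ} (h : P.IsHomogeneous n)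
    (hd : ∀ e, dirDeriv e P = 0) : P = 0 := by
  have hp : ∀ i, pderiv i P = 0 := by
    intro i
    have := hd (Pi.single i 1)
    fin_cases i <;> simpa [dirDeriv, Fin.sum_univ_three] using this
  have := h.sum_X_mul_pderiv
  simp only [hp, mul_zero, Finset.sum_const_zero] at this
  have h2 := this.symm
  rw [smul_eq_zero] at h2
  exact h2.resolve_left hn

lemma all_dirs {a b c : Fin 3 → ℝ} (h : ∀ e : Fin 3 → ℝ, ∃ x y z : ℝ, e = x • a + y • b + z • c)
    {P : MvPolynomial (Fin 3) ℝ} (ha : dirDeriv a P = 0) (hb : dirDeriv b P = 0)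
    (hc : dirDeriv c P = 0) (e : Fin 3 → ℝ) : dirDeriv e P = 0 := by
  obtain ⟨x, y, z, rfl⟩ := h e
  simp [dd_add, dd_smul, ha, hb, hc]

lemma exists_third {a b : Fin 3 → ℝ} (ha : ∑ i, a i ^ 2 = 1) (hb : ∑ i, b i ^ 2 = 1)
    (h1 : a ≠ b) (h2 : a ≠ -b) :
    (∀ x y : ℝ, x • a + y • b = 0 → x = 0 ∧ y = 0) ∧
    ∃ c : Fin 3 → ℝ, ∀ e : Fin 3 → ℝ, ∃ x y z : ℝ, e = x • a + y • b + z • c := by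
  simp only [Fin.sum_univ_three] at ha hb
  set d := a 0 * b 0 + a 1 * b 1 + a 2 * b 2 with hd
  have hd1 : 1 - d ≠ 0 := by
    intro h
    apply h1
    have hs : (a 0 - b 0)^2 + (a 1 - b 1)^2 + (a 2 - b 2)^2 = 0 := by nlinarith
    ext i
    have h0 := sq_nonneg (a 0 - b 0)
    have h1 := sq_nonneg (a 1 - b 1)
    have h2 := sq_nonneg (a 2 - b 2)
    have : (a i - b i)^2 = 0 := by fin_cases i <;> simp <;> nlinarith
    exact sub_eq_zero.mp (pow_eq_zero_iff (two_ne_zero) |>.mp this)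
  have hd2 : 1 + d ≠ 0 := by
    intro h
    apply h2
    have hs : (a 0 + b 0)^2 + (a 1 + b 1)^2 + (a 2 + b 2)^2 = 0 := by nlinarith
    ext i
    have h0 := sq_nonneg (a 0 + b 0)
    have h1 := sq_nonneg (a 1 + b 1)
    have h2 := sq_nonneg (a 2 + b 2)
    have : (a i + b i)^2 = 0 := by fin_cases i <;> simp <;> nlinarith
    have := (pow_eq_zero_iff (two_ne_zero)).mp this
    simp only [Pi.neg_apply]
    linarith
  have hN : 1 - d ^ 2 ≠ 0 := by
    have : 1 - d ^ 2 = (1 - d) * (1 + d) := by ring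
    rw [this]; exact mul_ne_zero hd1 hd2
  refine ⟨?_, ?_⟩
  · intro x y h
    have e0 := congrFun h 0
    have e1 := congrFun h 1
    have e2 := congrFun h 2
    simp only [Pi.add_apply, Pi.smul_apply, smul_eq_mul, Pi.zero_apply] at e0 e1 e2
    have f1 : x + y * d = 0 := by
      rw [hd]; linear_combination a 0 * e0 + a 1 * e1 + a 2 * e2 - x * ha
    have f2 : x * d + y = 0 := by
      rw [hd]; linear_combination b 0 * e0 + b 1 * e1 + b 2 * e2 - y * hb
    constructor
    · exact (mul_eq_zero.mp (show x * (1 - d^2) = 0 by linear_combination f1 - d * f2)).resolve_right hN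
    · exact (mul_eq_zero.mp (show y * (1 - d^2) = 0 by linear_combination f2 - d * f1)).resolve_right hN
  · set c0 := a 1 * b 2 - a 2 * b 1 with hc0
    set c1 := a 2 * b 0 - a 0 * b 2 with hc1
    set c2 := a 0 * b 1 - a 1 * b 0 with hc2
    have hNc : c0 ^ 2 + c1 ^ 2 + c2 ^ 2 ≠ 0 := by
      have : c0 ^ 2 + c1 ^ 2 + c2 ^ 2 = 1 - d ^ 2 := by
        rw [hc0, hc1, hc2, hd]
        linear_combination (b 0 ^ 2 + b 1 ^ 2 + b 2 ^ 2) * ha + hb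
      rw [this]; exact hN
    refine ⟨![c0, c1, c2], fun e => ⟨
      (e 0 * (b 1 * c2 - b 2 * c1) + e 1 * (b 2 * c0 - b 0 * c2) + e 2 * (b 0 * c1 - b 1 * c0)) / (c0 ^ 2 + c1 ^ 2 + c2 ^ 2),
      (e 0 * (c1 * a 2 - c2 * a 1) + e 1 * (c2 * a 0 - c0 * a 2) + e 2 * (c0 * a 1 - c1 * a 0)) / (c0 ^ 2 + c1 ^ 2 + c2 ^ 2),
      (e 0 * c0 + e 1 * c1 + e 2 * c2) / (c0 ^ 2 + c1 ^ 2 + c2 ^ 2), ?_⟩⟩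
    ext i
    fin_cases i <;> simp <;> field_simp <;> rw [hc0, hc1, hc2] <;> ring

/-- Limiting argument: the derivative vanishes also on the diagonal. -/
lemma diag_zero (Q : MvPolynomial (Fin 3) ℝ)
    (γ : ℝ → (Fin 3 → ℝ))
    (h_cont : ContinuousOn γ (Set.Icc 0 1))
    (h_inj : Set.InjOn γ (Set.Icc 0 1))
    (h_van : ∀ s ∈ Set.Icc (0 : ℝ) 1, ∀ t ∈ Set.Icc (0 : ℝ) 1, γ s ≠ γ t →
      dirDeriv (γ s) (dirDeriv (γ t) Q) = 0) (t : ℝ) (ht : t ∈ Set.Icc (0 : ℝ) 1) :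
    dirDeriv (γ t) (dirDeriv (γ t) Q) = 0 := by
  ext m
  rw [coeff_zero]
  set F : (Fin 3 → ℝ) → ℝ := fun e => coeff m (dirDeriv e (dirDeriv (γ t) Q)) with hF
  have hFc : Continuous F := by
    simp only [hF, dirDeriv, coeff_sum, coeff_C_mul]
    fun_prop
  have hc : ContinuousWithinAt (fun s => F (γ s)) (Set.Icc 0 1) t :=
    (hFc.comp_continuousOn h_cont) t ht
  have hcl : t ∈ closure (Set.Icc (0 : ℝ) 1 \ {t}) := by
    have h0 : (Set.Icc (0:ℝ) 1).Nontrivial := ⟨0, by simp, 1, by simp, by norm_num⟩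
    have := (isPreconnected_Icc (a := (0:ℝ)) (b := 1)).preperfect_of_nontrivial h0 t ht
    rwa [accPt_principal_iff_clusterPt, ← mem_closure_iff_clusterPt] at this
  have hc2 : ContinuousWithinAt (fun s => F (γ s)) (Set.Icc (0 : ℝ) 1 \ {t}) t :=
    hc.mono Set.sdiff_subset
  have := hc2.mem_closure (t := {0}) hcl (by
    intro s hs
    have hne : γ s ≠ γ t := fun h => hs.2 (h_inj hs.1 ht h)
    simp [hF, h_van s hs.1 t ht hne])
  simpa using this

/-- Lemma 4: let `Q` be a cubic form on `ℝ³` and let `C ⊆ S²` be a curve (image of a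
nonconstant continuous injective map `γ : [0,1] → S²`) such that for all `a ≠ b` on the
curve the linear form `Q_{ab} = ∂ₐ∂_b Q` vanishes identically. Then `Q` is a function
of two variables in suitable linear coordinates; equivalently, some nonzero directional
derivative of `Q` vanishes identically. -/
theorem cubic_form_second_derivatives_vanish_on_curve
    (Q : MvPolynomial (Fin 3) ℝ) (hQ : Q.IsHomogeneous 3)
    (γ : ℝ → (Fin 3 → ℝ))
    (h_cont : ContinuousOn γ (Set.Icc 0 1))
    (h_inj : Set.InjOn γ (Set.Icc 0 1))
    (h_sph : ∀ t ∈ Set.Icc (0 : ℝ) 1, ∑ i, γ t i ^ 2 = 1)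
    (h_van : ∀ s ∈ Set.Icc (0 : ℝ) 1, ∀ t ∈ Set.Icc (0 : ℝ) 1, γ s ≠ γ t →
      dirDeriv (γ s) (dirDeriv (γ t) Q) = 0) :
    ∃ w : Fin 3 → ℝ, w ≠ 0 ∧ dirDeriv w Q = 0 := by
  have hdiag := diag_zero Q γ h_cont h_inj h_van
  have m0 : (0 : ℝ) ∈ Set.Icc (0 : ℝ) 1 := by simp
  have m1 : (1 : ℝ) ∈ Set.Icc (0 : ℝ) 1 := by simp
  have mh : (1 / 2 : ℝ) ∈ Set.Icc (0 : ℝ) 1 := by constructor <;> norm_num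
  obtain ⟨t, ht, hne, hne'⟩ : ∃ t ∈ Set.Icc (0 : ℝ) 1, γ 0 ≠ γ t ∧ γ 0 ≠ -γ t := by
    by_cases h : γ 0 = -γ 1
    · refine ⟨1 / 2, mh, fun h' => ?_, fun h' => ?_⟩
      · have := h_inj m0 mh h'; norm_num at this
      · have := h_inj m1 mh (neg_injective (h.symm.trans h')); norm_num at this
    · exact ⟨1, m1, fun h' => by have := h_inj m0 m1 h'; norm_num at this, h⟩
  have haa := hdiag 0 m0
  have hbb := hdiag t ht
  have hab := h_van 0 m0 t ht hne
  obtain ⟨hli, c, hsp⟩ := exists_third (h_sph 0 m0) (h_sph t ht) hne hne'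
  generalize γ 0 = a at *
  generalize γ t = b at *
  have hba : dirDeriv b (dirDeriv a Q) = 0 := by rw [dd_comm]; exact hab
  have key : ∀ e, ∃ r : ℝ, dirDeriv c (dirDeriv c (dirDeriv e Q)) = C r := by
    intro e
    have h := dd_hom c (dd_hom c (dd_hom e hQ))
    exact ⟨_, totalDegree_eq_zero_iff_eq_C.mp ((totalDegree_zero_iff_isHomogeneous _).mpr h)⟩
  obtain ⟨r, hr⟩ := key a
  obtain ⟨s, hs⟩ := key b
  have fin : ∀ x y : ℝ, x * r + y * s = 0 → dirDeriv (x • a + y • b) Q = 0 := by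
    intro x y hxy
    set w := x • a + y • b with hw
    have hP := dd_hom w hQ
    have hPa : dirDeriv a (dirDeriv w Q) = 0 := by
      rw [hw, dd_add, dd_smul, dd_smul, dd_add', dd_smul', dd_smul', haa, hab]; simp
    have hPb : dirDeriv b (dirDeriv w Q) = 0 := by
      rw [hw, dd_add, dd_smul, dd_smul, dd_add', dd_smul', dd_smul', hba, hbb]; simp
    have hPcc : dirDeriv c (dirDeriv c (dirDeriv w Q)) = 0 := by
      rw [hw, dd_add, dd_smul, dd_smul]
      simp only [dd_add', dd_smul']
      rw [hr, hs, ← C_mul, ← C_mul, ← C_add, hxy, C_0]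
    have hPc : dirDeriv c (dirDeriv w Q) = 0 := by
      refine hom_zero (by norm_num) (dd_hom c hP) (all_dirs hsp ?_ ?_ hPcc)
      · rw [dd_comm, hPa, dd_zero]
      · rw [dd_comm, hPb, dd_zero]
    exact hom_zero (by norm_num) hP (all_dirs hsp hPa hPb hPc)
  by_cases h : r = 0 ∧ s = 0
  · refine ⟨(1 : ℝ) • a + (0 : ℝ) • b, fun h0 => ?_, fin 1 0 (by simp [h.1])⟩
    exact one_ne_zero (hli 1 0 h0).1
  · refine ⟨s • a + (-r) • b, fun h0 => h ?_, fin s (-r) (by ring)⟩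
    have := hli _ _ h0
    exact ⟨neg_eq_zero.mp this.2, this.1⟩
end

section
/- Let u : ℝ⁴ ∖ {0} → ℝ be real analytic and positively homogeneous of order 2. Let a, b ∈ S³ with a ≠ b, and suppose x ∈ S³ is a point at which the function u_{a,b}(y) = D²u(y)(a,b) attains its supremum over S³. Then D³u(x)(a,b,e) = 0 for every e ∈ ℝ⁴; that is, b is a zero eigenvector of the quadratic form v ↦ D³u(x)(a,v,v) (the cubic form of the Taylor expansion of u at x differentiated in direction a). -/
/-- Lemma 5: let `u` be real analytic and positively 2-homogeneous on `ℝ⁴ ∖ {0}`.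
If `a ≠ b` are unit vectors and the function `u_{a,b}(y) = D²u(y)(a,b)` attains its
supremum over the unit sphere `S³` at `x`, then `D³u(x)(a,b,e) = 0` for every `e`;
that is, `b` is a zero eigenvector of the quadratic form `v ↦ D³u(x)(a,v,v)`. -/
theorem zero_eigenvector_at_supremum_of_second_derivative
    (u : EuclideanSpace ℝ (Fin 4) → ℝ)
    (h_an : AnalyticOnNhd ℝ u {x | x ≠ 0})
    (h_hom : ∀ t : ℝ, 0 < t → ∀ x : EuclideanSpace ℝ (Fin 4), x ≠ 0 →
      u (t • x) = t ^ 2 * u x)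
    (a b : EuclideanSpace ℝ (Fin 4)) (ha : ‖a‖ = 1) (hb : ‖b‖ = 1) (hab : a ≠ b)
    (x : EuclideanSpace ℝ (Fin 4)) (hx : ‖x‖ = 1)
    (h_sup : ∀ y : EuclideanSpace ℝ (Fin 4), ‖y‖ = 1 →
      iteratedFDeriv ℝ 2 u y ![a, b] ≤ iteratedFDeriv ℝ 2 u x ![a, b]) :
    ∀ e : EuclideanSpace ℝ (Fin 4), iteratedFDeriv ℝ 3 u x ![a, b, e] = 0 := by
  have hx0 : x ≠ 0 := by
    rintro rfl
    simp at hx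
  have hcd : ∀ y : EuclideanSpace ℝ (Fin 4), y ≠ 0 → ContDiffAt ℝ 3 u y :=
    fun y hy => (h_an y hy).contDiffAt
  -- `u_{a,b}` is homogeneous of order `0`
  have h0 : ∀ t : ℝ, 0 < t → ∀ y : EuclideanSpace ℝ (Fin 4), y ≠ 0 →
      iteratedFDeriv ℝ 2 u (t • y) ![a, b] = iteratedFDeriv ℝ 2 u y ![a, b] := by
    intro t ht y hy
    let g : EuclideanSpace ℝ (Fin 4) ≃L[ℝ] EuclideanSpace ℝ (Fin 4) :=
      ContinuousLinearEquiv.smulLeft (Units.mk0 t ht.ne')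
    have hg : ∀ z, g z = t • z := fun z => rfl
    have h1 : iteratedFDeriv ℝ 2 (u ∘ g) y =
        (iteratedFDeriv ℝ 2 u (g y)).compContinuousLinearMap fun _ => g := by
      have := g.iteratedFDerivWithin_comp_right u uniqueDiffOn_univ (Set.mem_univ (g y)) 2
      simpa [iteratedFDerivWithin_univ] using this
    have h2 : (u ∘ g) =ᶠ[nhds y] (t ^ 2 • u) := by
      filter_upwards [isOpen_ne.mem_nhds hy] with z hz
      simp [hg, h_hom t ht z hz]
    have h3 := (h2.iteratedFDeriv ℝ 2).eq_of_nhds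
    rw [h1, iteratedFDeriv_const_smul_apply ((hcd y hy).of_le (by norm_num))] at h3
    have h4 := congrArg (fun m => m ![a, b]) h3
    have h5 : (fun i => g ((![a, b] : Fin 2 → EuclideanSpace ℝ (Fin 4)) i)) =
        fun i => t • (![a, b] : Fin 2 → EuclideanSpace ℝ (Fin 4)) i := rfl
    simp only [ContinuousMultilinearMap.compContinuousLinearMap_apply,
      ContinuousLinearEquiv.coe_coe, ContinuousMultilinearMap.smul_apply,
      ContinuousMultilinearMap.map_smul_univ, hg] at h4
    simp only [Finset.prod_const, Finset.card_univ, Fintype.card_fin, smul_eq_mul] at h4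
    exact mul_left_cancel₀ (by positivity) h4
  have hmax : IsLocalMax (fun y => iteratedFDeriv ℝ 2 u y ![a, b]) x := by
    filter_upwards [isOpen_ne.mem_nhds hx0] with y hy
    have hy' : 0 < ‖y‖ := norm_pos_iff.2 hy
    rw [← h0 ‖y‖⁻¹ (by positivity) y hy]
    exact h_sup _ (by rw [norm_smul, norm_inv, norm_norm, inv_mul_cancel₀ hy'.ne'])
  have hf := hmax.fderiv_eq_zero
  have hd : DifferentiableAt ℝ (iteratedFDeriv ℝ 2 u) x :=
    (hcd x hx0).differentiableAt_iteratedFDeriv (by norm_num)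
  intro e
  have h6 : iteratedFDeriv ℝ 3 u x ![e, a, b] = 0 := by
    have := hd.iteratedFDeriv_succ_apply_left' (m := ![e, a, b])
    rw [this]
    have ht : Fin.tail ![e, a, b] = ![a, b] := rfl
    rw [ht, hf]
    rfl
  let σ : Equiv.Perm (Fin 3) := finRotate 3
  have h7 := ((h_an x hx0).contDiffAt (n := ⊤)).iteratedFDeriv_comp_perm (n := 3) ![e, a, b] σ
  rw [← h6, ← h7]
  congr 1
  ext i
  fin_cases i <;> rfl
end

section
/- Let u : ℝ⁴ ∖ {0} → ℝ be real analytic, positively homogeneous of order 2, and a solution of F(D²u) = 0 on ℝ⁴ ∖ {0} with F a smooth uniformly elliptic function on symmetric 4×4 matrices. Let a, x, b₁, b₂, b₃ ∈ S³ with b₁, b₂, b₃ linearly independent, and suppose that for each i = 1, 2, 3 the function u_{a,b_i}(y) = D²u(y)(a,b_i) attains its supremum over S³ at x. Then D³u(x)(a,v,w) = 0 for all v, w ∈ ℝ⁴, i.e. the quadratic form v ↦ D³u(x)(a,v,v) is identically zero. -/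
/-- The Hessian matrix of `u` at `x`, with entries `∂²u/∂xᵢ∂xⱼ (x)`. -/
noncomputable def hessianMatrix (n : ℕ) (u : EuclideanSpace ℝ (Fin n) → ℝ)
    (x : EuclideanSpace ℝ (Fin n)) : Fin n → Fin n → ℝ :=
  fun i j => iteratedFDeriv ℝ 2 u x ![EuclideanSpace.single i 1, EuclideanSpace.single j 1]

/-- `F` is a smooth uniformly elliptic function on (symmetric) `n × n` matrices. -/
def UniformlyElliptic (n : ℕ) (F : (Fin n → Fin n → ℝ) → ℝ) : Prop :=
  ContDiff ℝ (⊤ : ℕ∞) F ∧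
  ∃ C : ℝ, 1 ≤ C ∧ ∀ M : Fin n → Fin n → ℝ, (∀ i j, M i j = M j i) →
    ∀ ξ : EuclideanSpace ℝ (Fin n),
      (1 / C) * ‖ξ‖ ^ 2 ≤
          ∑ i, ∑ j, fderiv ℝ F M (Pi.single i (Pi.single j 1)) * ξ i * ξ j ∧
      ∑ i, ∑ j, fderiv ℝ F M (Pi.single i (Pi.single j 1)) * ξ i * ξ j ≤ C * ‖ξ‖ ^ 2

open Filter Topology in
theorem aux_hess_homogeneous
    (u : EuclideanSpace ℝ (Fin 4) → ℝ)
    (h_an : AnalyticOnNhd ℝ u {x | x ≠ 0})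
    (h_hom : ∀ t : ℝ, 0 < t → ∀ x : EuclideanSpace ℝ (Fin 4), x ≠ 0 →
      u (t • x) = t ^ 2 * u x)
    (t : ℝ) (ht : 0 < t) (y : EuclideanSpace ℝ (Fin 4)) (hy : y ≠ 0)
    (p q : EuclideanSpace ℝ (Fin 4)) :
    iteratedFDeriv ℝ 2 u (t • y) ![p, q] = iteratedFDeriv ℝ 2 u y ![p, q] := by
  let g : EuclideanSpace ℝ (Fin 4) ≃L[ℝ] EuclideanSpace ℝ (Fin 4) :=
    ContinuousLinearEquiv.smulLeft (Units.mk0 t ht.ne')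
  have hg : ∀ z, g z = t • z := fun z => rfl
  have h1 : iteratedFDeriv ℝ 2 (u ∘ g) y =
      (iteratedFDeriv ℝ 2 u (g y)).compContinuousLinearMap fun _ => g := by
    have := g.iteratedFDerivWithin_comp_right u (s := Set.univ) uniqueDiffOn_univ
      (x := y) (Set.mem_univ _) 2
    simpa only [Set.preimage_univ, iteratedFDerivWithin_univ] using this
  have h2 : (u ∘ g) =ᶠ[𝓝 y] ((t ^ 2) • u) := by
    filter_upwards [isOpen_ne.mem_nhds hy] with z hz
    simp only [Function.comp, hg, Pi.smul_apply, smul_eq_mul]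
    exact h_hom t ht z hz
  have h3 : iteratedFDeriv ℝ 2 (u ∘ g) y = (t ^ 2) • iteratedFDeriv ℝ 2 u y := by
    rw [(h2.iteratedFDeriv ℝ 2).eq_of_nhds]
    exact iteratedFDeriv_const_smul_apply ((h_an y hy).contDiffAt)
  have h4 := congrArg (fun m => m ![p, q]) (h1.symm.trans h3)
  simp only [ContinuousMultilinearMap.compContinuousLinearMap_apply, ContinuousLinearEquiv.coe_coe,
    ContinuousMultilinearMap.map_smul_univ, smul_apply, hg,
    Finset.prod_const, Finset.card_univ, Fintype.card_fin, smul_eq_mul] at h4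
  exact mul_left_cancel₀ (by positivity) h4

theorem aux_normal (b : Fin 3 → EuclideanSpace ℝ (Fin 4)) (h_ind : LinearIndependent ℝ b) :
    ∃ n : EuclideanSpace ℝ (Fin 4), ‖n‖ = 1 ∧
      ∀ v, v - inner ℝ n v • n ∈ Submodule.span ℝ (Set.range b) := by
  have h3 : Module.finrank ℝ (Submodule.span ℝ (Set.range b)) = 3 := by
    rw [finrank_span_eq_card h_ind]; simp
  have h1 : Module.finrank ℝ (Submodule.span ℝ (Set.range b))ᗮ = 1 :=
    Submodule.finrank_add_finrank_orthogonal' (by rw [h3]; simp)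
  obtain ⟨m, hm0, hm⟩ := finrank_eq_one_iff'.1 h1
  have hm0' : (m : EuclideanSpace ℝ (Fin 4)) ≠ 0 := by simpa using hm0
  have hn : ‖(m : EuclideanSpace ℝ (Fin 4))‖ ≠ 0 := by simpa using hm0
  refine ⟨‖(m : EuclideanSpace ℝ (Fin 4))‖⁻¹ • (m : EuclideanSpace ℝ (Fin 4)), ?_, ?_⟩
  · rw [norm_smul, norm_inv, norm_norm, inv_mul_cancel₀ hn]
  · intro v
    refine (Submodule.orthogonal_orthogonal (Submodule.span ℝ (Set.range b))).le ?_
    rw [Submodule.mem_orthogonal]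
    intro z hz
    obtain ⟨c, hc⟩ := hm ⟨z, hz⟩
    have hc' : z = c • (m : EuclideanSpace ℝ (Fin 4)) := by
      have := congrArg Subtype.val hc
      simpa using this.symm
    rw [hc']
    simp only [inner_sub_right, inner_smul_left, inner_smul_right, real_inner_self_eq_norm_sq]
    simp
    field_simp
    simp

open scoped ContDiff in
/-- Lemma 6: let `u` be a real analytic, positively 2-homogeneous solution of a fully
nonlinear uniformly elliptic equation `F(D²u) = 0` on `ℝ⁴ ∖ {0}`. If `a, x, b₁, b₂, b₃`
are unit vectors with `b₁, b₂, b₃` linearly independent and each `u_{a,bᵢ}` attains its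
supremum over `S³` at `x`, then the cubic-term quadratic form `v ↦ D³u(x)(a,v,v)`
vanishes identically. -/
theorem cubic_term_vanishes_at_triple_supremum
    (u : EuclideanSpace ℝ (Fin 4) → ℝ)
    (h_an : AnalyticOnNhd ℝ u {x | x ≠ 0})
    (h_hom : ∀ t : ℝ, 0 < t → ∀ x : EuclideanSpace ℝ (Fin 4), x ≠ 0 →
      u (t • x) = t ^ 2 * u x)
    (F : (Fin 4 → Fin 4 → ℝ) → ℝ) (hF : UniformlyElliptic 4 F)
    (h_sol : ∀ x : EuclideanSpace ℝ (Fin 4), x ≠ 0 → F (hessianMatrix 4 u x) = 0)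
    (a x : EuclideanSpace ℝ (Fin 4)) (ha : ‖a‖ = 1) (hx : ‖x‖ = 1)
    (b : Fin 3 → EuclideanSpace ℝ (Fin 4)) (hb : ∀ i, ‖b i‖ = 1)
    (h_ind : LinearIndependent ℝ b)
    (h_sup : ∀ i : Fin 3, ∀ y : EuclideanSpace ℝ (Fin 4), ‖y‖ = 1 →
      iteratedFDeriv ℝ 2 u y ![a, b i] ≤ iteratedFDeriv ℝ 2 u x ![a, b i]) :
    ∀ v w : EuclideanSpace ℝ (Fin 4), iteratedFDeriv ℝ 3 u x ![a, v, w] = 0 := by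
  have hx0 : x ≠ 0 := by
    intro h; rw [h] at hx; simp at hx
  have hnhds : {y : EuclideanSpace ℝ (Fin 4) | y ≠ 0} ∈ nhds x := isOpen_ne.mem_nhds hx0
  have hω : ContDiffAt ℝ ω u x := (h_an x hx0).contDiffAt
  have hd : DifferentiableAt ℝ (iteratedFDeriv ℝ 2 u) x :=
    hω.differentiableAt_iteratedFDeriv (by exact_mod_cast WithTop.coe_lt_top _)
  obtain ⟨T, hT⟩ : ∃ T, T = fderiv ℝ (iteratedFDeriv ℝ 2 u) x := ⟨_, rfl⟩
  have hTd : HasFDerivAt (iteratedFDeriv ℝ 2 u) T x := hT ▸ hd.hasFDerivAt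
  have h3 : ∀ c p q, iteratedFDeriv ℝ 3 u x ![c, p, q] = T c ![p, q] := by
    intro c p q; rw [hT]; rfl
  have hg : ∀ p q : EuclideanSpace ℝ (Fin 4),
      HasFDerivAt (fun y => iteratedFDeriv ℝ 2 u y ![p, q])
        ((ContinuousMultilinearMap.apply ℝ (fun _ : Fin 2 => EuclideanSpace ℝ (Fin 4)) ℝ
          ![p, q]).comp T) x := by
    intro p q
    exact (ContinuousMultilinearMap.apply ℝ (fun _ : Fin 2 => EuclideanSpace ℝ (Fin 4)) ℝ
          ![p, q]).hasFDerivAt.comp x hTd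
  -- symmetry
  have s01 : ∀ c p q, T c ![p, q] = T p ![c, q] := by
    intro c p q
    rw [← h3, ← h3, ← hω.iteratedFDeriv_comp_perm ![c, p, q] (Equiv.swap 0 1)]
    congr 1; ext i : 1; fin_cases i <;> rfl
  have s02 : ∀ c p q, T c ![p, q] = T q ![p, c] := by
    intro c p q
    rw [← h3, ← h3, ← hω.iteratedFDeriv_comp_perm ![c, p, q] (Equiv.swap 0 2)]
    congr 1; ext i : 1; fin_cases i <;> rfl
  -- critical point
  have hcrit : ∀ i w, T w ![a, b i] = 0 := by
    intro i w
    have hmax : IsLocalMax (fun y => iteratedFDeriv ℝ 2 u y ![a, b i]) x := by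
      filter_upwards [hnhds] with y hy
      have hy' : 0 < ‖y‖ := norm_pos_iff.2 hy
      have := aux_hess_homogeneous u h_an h_hom ‖y‖⁻¹ (inv_pos.2 hy') y hy a (b i)
      rw [← this]
      exact h_sup i _ (by rw [norm_smul, norm_inv, norm_norm, inv_mul_cancel₀ hy'.ne'])
    have h0 := hmax.hasFDerivAt_eq_zero (hg a (b i))
    exact congrArg (fun L => L w) h0
  have hspan : ∀ v ∈ Submodule.span ℝ (Set.range b), ∀ w, T v ![a, w] = 0 := by
    intro v hv w
    induction hv using Submodule.span_induction with
    | mem v hv => obtain ⟨i, rfl⟩ := hv; rw [s02]; exact hcrit i w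
    | zero => simp
    | add p q _ _ hp hq => simp [hp, hq]
    | smul r p _ hp => simp [hp]
  obtain ⟨n, hn, hnv⟩ := aux_normal b h_ind
  have hred1 : ∀ v w, T v ![a, w] = inner ℝ n v * T n ![a, w] := by
    intro v w
    have := hspan _ (hnv v) w
    simp only [map_sub, map_smul, sub_apply,
      smul_apply, smul_eq_mul] at this
    linarith
  have hred : ∀ v w, T v ![a, w] = inner ℝ n v * inner ℝ n w * T n ![a, n] := by
    intro v w
    rw [hred1 v w, s02 n a w, hred1 w n]; ring
  -- linearised equation
  obtain ⟨hFs, C, hC, hell⟩ := hF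
  have hH : HasFDerivAt (hessianMatrix 4 u)
      (ContinuousLinearMap.pi fun i => ContinuousLinearMap.pi fun j =>
        (ContinuousMultilinearMap.apply ℝ (fun _ : Fin 2 => EuclideanSpace ℝ (Fin 4)) ℝ
          ![EuclideanSpace.single i 1, EuclideanSpace.single j 1]).comp T) x :=
    hasFDerivAt_pi.2 fun i => hasFDerivAt_pi.2 fun j => hg _ _
  have hFd : HasFDerivAt F (fderiv ℝ F (hessianMatrix 4 u x)) (hessianMatrix 4 u x) :=
    (hFs.differentiable (by simp) _).hasFDerivAt
  have hcomp := hFd.comp x hH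
  have hzero : HasFDerivAt (F ∘ hessianMatrix 4 u)
      (0 : EuclideanSpace ℝ (Fin 4) →L[ℝ] ℝ) x := by
    refine (hasFDerivAt_const (0 : ℝ) x).congr_of_eventuallyEq ?_
    filter_upwards [hnhds] with y hy
    exact h_sol y hy
  have hlin := congrArg (fun L => L a) (hcomp.unique hzero)
  have hlin2 : fderiv ℝ F (hessianMatrix 4 u x) (fun i j => n i * n j * T n ![a, n]) = 0 := by
    refine Eq.trans ?_ hlin
    simp only [ContinuousLinearMap.comp_apply]
    congr 1
    ext i j
    change _ = T a ![EuclideanSpace.single i 1, EuclideanSpace.single j 1]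
    rw [s01 a (EuclideanSpace.single i 1), hred (EuclideanSpace.single i 1)]
    simp [EuclideanSpace.inner_single_right]
  have hdec : (fun i j => n i * n j * T n ![a, n] : Fin 4 → Fin 4 → ℝ) =
      ∑ i, ∑ j, (n i * n j * T n ![a, n]) • (Pi.single i (Pi.single j 1) : Fin 4 → Fin 4 → ℝ) := by
    ext k l
    simp [Finset.sum_apply, Pi.single_apply, ite_apply]
  have hsymm : ∀ i j, hessianMatrix 4 u x i j = hessianMatrix 4 u x j i := by
    intro i j
    unfold hessianMatrix
    rw [← hω.iteratedFDeriv_comp_perm _ (Equiv.swap 0 1)]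
    congr 1; ext k : 1; fin_cases k <;> rfl
  have hpos := (hell _ hsymm n).1
  rw [hn] at hpos
  have hS : 0 < ∑ i, ∑ j, fderiv ℝ F (hessianMatrix 4 u x) (Pi.single i (Pi.single j 1))
      * n i * n j := lt_of_lt_of_le (by positivity) hpos
  have hprod : (∑ i, ∑ j, fderiv ℝ F (hessianMatrix 4 u x) (Pi.single i (Pi.single j 1))
      * n i * n j) * T n ![a, n] = 0 := by
    rw [hdec] at hlin2
    simp only [map_sum, map_smul, smul_eq_mul] at hlin2
    rw [← hlin2, Finset.sum_mul]
    refine Finset.sum_congr rfl fun i _ => ?_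
    rw [Finset.sum_mul]
    refine Finset.sum_congr rfl fun j _ => ?_
    ring
  have hQ : T n ![a, n] = 0 := (mul_eq_zero.1 hprod).resolve_left hS.ne'
  intro v w
  rw [h3, s01, hred, hQ, mul_zero]
end

section
/- Let w : ℝ⁴ ∖ {0} → ℝ be defined by w(x) = (x₁² + x₂² − x₃² − x₄²)/|x|. Then w is real analytic on ℝ⁴ ∖ {0}, positively homogeneous of order 1, at every point x ∈ ℝ⁴ ∖ {0} its Hessian D²w(x) is either zero or changes sign (is indefinite), and w is not a linear function. In particular, the analogue of Alexandrov's theorem fails in dimension 4. -/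
/-- The Lawson–Osserman type function `w(x) = (x₁² + x₂² − x₃² − x₄²)/|x|` on `ℝ⁴ ∖ {0}`. -/
noncomputable def wLO (x : EuclideanSpace ℝ (Fin 4)) : ℝ :=
  (x 0 ^ 2 + x 1 ^ 2 - x 2 ^ 2 - x 3 ^ 2) / ‖x‖

lemma wLO_analytic : AnalyticOnNhd ℝ wLO {x | x ≠ 0} := by
  intro x hx
  have hx' : x ≠ 0 := hx
  have hc : ∀ i : Fin 4, AnalyticAt ℝ (fun y : EuclideanSpace ℝ (Fin 4) => y i) x := fun i =>
    (EuclideanSpace.proj i : EuclideanSpace ℝ (Fin 4) →L[ℝ] ℝ).analyticAt x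
  have hn : AnalyticAt ℝ (fun y : EuclideanSpace ℝ (Fin 4) => ‖y‖) x :=
    (contDiffAt_norm (n := ⊤) ℝ hx').analyticAt
  have := ((((hc 0).pow 2).add ((hc 1).pow 2)).sub ((hc 2).pow 2)).sub ((hc 3).pow 2)
  exact this.div hn (norm_ne_zero_iff.mpr hx')

/-- The second derivative of `wLO` in a direction along which both quadratic forms
have no linear term. -/
lemma wLO_hess (x v : EuclideanSpace ℝ (Fin 4)) (hx : x ≠ 0) (Q m e : ℝ) (hm : 0 ≤ m)
    (hQ : ∀ s : ℝ, (x + s • v) 0 ^ 2 + (x + s • v) 1 ^ 2 - (x + s • v) 2 ^ 2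
      - (x + s • v) 3 ^ 2 = Q + e * m * s ^ 2)
    (hN : ∀ s : ℝ, ‖x + s • v‖ ^ 2 = ‖x‖ ^ 2 + m * s ^ 2) :
    iteratedFDeriv ℝ 2 wLO x ![v, v] = m * (2 * e * ‖x‖ ^ 2 - Q) / ‖x‖ ^ 3 := by
  have hr : 0 < ‖x‖ := norm_pos_iff.mpr hx
  have hpos : ∀ s : ℝ, 0 < ‖x‖ ^ 2 + m * s ^ 2 := fun s => by positivity
  have hne : ∀ s : ℝ, x + s • v ≠ 0 := by
    intro s h
    have h1 := hN s
    have h2 := hpos s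
    rw [h] at h1
    simp at h1
    linarith
  have hnorm : ∀ s : ℝ, ‖x + s • v‖ = √(‖x‖ ^ 2 + m * s ^ 2) := fun s => by
    rw [← hN s, Real.sqrt_sq (norm_nonneg _)]
  have hg : ∀ s : ℝ, wLO (x + s • v) = (Q + e * m * s ^ 2) / √(‖x‖ ^ 2 + m * s ^ 2) := fun s => by
    rw [wLO, hQ, hnorm]
  have hline : ∀ s : ℝ, HasDerivAt (fun s : ℝ => x + s • v) v s := fun s => by
    simpa using ((hasDerivAt_id s).smul_const v).const_add x
  have hsq : ∀ s : ℝ, HasDerivAt (fun s : ℝ => √(‖x‖ ^ 2 + m * s ^ 2))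
      ((m * (2 * s)) / (2 * √(‖x‖ ^ 2 + m * s ^ 2))) s := fun s => by
    have h1 : HasDerivAt (fun s : ℝ => ‖x‖ ^ 2 + m * s ^ 2) (m * (2 * s)) s := by
      simpa using ((hasDerivAt_pow 2 s).const_mul m).const_add (‖x‖ ^ 2)
    exact h1.sqrt (hpos s).ne'
  have hfd : ∀ s : ℝ, fderiv ℝ wLO (x + s • v) v =
      s * ((2 * e * m * (‖x‖ ^ 2 + m * s ^ 2) - (Q + e * m * s ^ 2) * m)
        / √(‖x‖ ^ 2 + m * s ^ 2) ^ 3) := by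
    intro s
    have h1 : HasDerivAt (fun s : ℝ => wLO (x + s • v)) (fderiv ℝ wLO (x + s • v) v) s :=
      HasFDerivAt.comp_hasDerivAt (l := wLO) s
        (wLO_analytic _ (hne s)).differentiableAt.hasFDerivAt (hline s)
    have h2 : HasDerivAt (fun s : ℝ => Q + e * m * s ^ 2) (e * m * (2 * s)) s := by
      simpa using ((hasDerivAt_pow 2 s).const_mul (e * m)).const_add Q
    have hs : 0 < √(‖x‖ ^ 2 + m * s ^ 2) := Real.sqrt_pos.mpr (hpos s)
    have h3 := h2.div (hsq s) hs.ne'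
    have h4 : (fun s : ℝ => wLO (x + s • v)) =
        (fun s : ℝ => Q + e * m * s ^ 2) / (fun s : ℝ => √(‖x‖ ^ 2 + m * s ^ 2)) := by
      funext s; simp [hg]
    rw [h4] at h1
    rw [h1.unique h3]
    have h5 := Real.sq_sqrt (hpos s).le
    rw [← h5]
    simp only [Real.sqrt_sq hs.le]
    generalize √(‖x‖ ^ 2 + m * s ^ 2) = ρ at *
    field_simp
  have hA : HasDerivAt (fun s : ℝ => fderiv ℝ wLO (x + s • v) v)
      (fderiv ℝ (fderiv ℝ wLO) x v v) 0 := by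
    have hx0 : x + (0 : ℝ) • v = x := by simp
    have h1 : HasFDerivAt (fderiv ℝ wLO) (fderiv ℝ (fderiv ℝ wLO) x) (x + (0 : ℝ) • v) := by
      rw [hx0]
      exact (wLO_analytic x hx).fderiv.differentiableAt.hasFDerivAt
    have h2 := h1.comp_hasDerivAt (0 : ℝ) (hline 0)
    simpa using h2.clm_apply (hasDerivAt_const (0 : ℝ) v)
  have hs0 : √(‖x‖ ^ 2 + m * 0 ^ 2) = ‖x‖ := by
    simp
  have hB : HasDerivAt (fun s : ℝ => fderiv ℝ wLO (x + s • v) v)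
      (m * (2 * e * ‖x‖ ^ 2 - Q) / ‖x‖ ^ 3) 0 := by
    simp only [hfd]
    have hd : DifferentiableAt ℝ (fun s : ℝ =>
      ((2 * e * m * (‖x‖ ^ 2 + m * s ^ 2) - (Q + e * m * s ^ 2) * m)
        / √(‖x‖ ^ 2 + m * s ^ 2) ^ 3)) 0 := by
      refine DifferentiableAt.div (by fun_prop) ((hsq 0).differentiableAt.pow 3) ?_
      rw [hs0]; positivity
    have h := (hasDerivAt_id (0 : ℝ)).mul hd.hasDerivAt
    refine h.congr_deriv ?_
    simp only [hs0, id]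
    ring
  rw [iteratedFDeriv_two_apply]
  exact hA.unique hB

lemma norm_sq4 (x : EuclideanSpace ℝ (Fin 4)) :
    ‖x‖ ^ 2 = x 0 ^ 2 + x 1 ^ 2 + x 2 ^ 2 + x 3 ^ 2 := by
  simp [EuclideanSpace.norm_sq_eq, Fin.sum_univ_four]

lemma exists_perp (a b : ℝ) : ∃ c d : ℝ, a * c + b * d = 0 ∧ 0 < c ^ 2 + d ^ 2 := by
  by_cases h : a = 0
  · exact ⟨1, 0, by simp [h], by norm_num⟩
  · exact ⟨-b, a, by ring, by positivity⟩

/-- The function `w(x) = (x₁² + x₂² − x₃² − x₄²)/|x|` is real analytic on `ℝ⁴ ∖ {0}`,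
positively 1-homogeneous, its Hessian at every point of `ℝ⁴ ∖ {0}` is either zero or
indefinite (changes sign), and yet `w` is not a linear function: the analogue of
Alexandrov's theorem fails in dimension 4. -/
theorem alexandrov_fails_in_dim4 :
    AnalyticOnNhd ℝ wLO {x | x ≠ 0} ∧
    (∀ t : ℝ, 0 < t → ∀ x : EuclideanSpace ℝ (Fin 4), x ≠ 0 →
      wLO (t • x) = t * wLO x) ∧
    (∀ x : EuclideanSpace ℝ (Fin 4), x ≠ 0 →
      (∀ v : EuclideanSpace ℝ (Fin 4), iteratedFDeriv ℝ 2 wLO x ![v, v] = 0) ∨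
      ((∃ v : EuclideanSpace ℝ (Fin 4), 0 < iteratedFDeriv ℝ 2 wLO x ![v, v]) ∧
       (∃ q : EuclideanSpace ℝ (Fin 4), iteratedFDeriv ℝ 2 wLO x ![q, q] < 0))) ∧
    ¬ ∃ ℓ : EuclideanSpace ℝ (Fin 4) →ₗ[ℝ] ℝ,
        ∀ x : EuclideanSpace ℝ (Fin 4), x ≠ 0 → wLO x = ℓ x := by
  refine ⟨wLO_analytic, ?_, ?_, ?_⟩
  · intro t ht x hx
    have hr : 0 < ‖x‖ := norm_pos_iff.mpr hx
    simp only [wLO, norm_smul, Real.norm_eq_abs, abs_of_pos ht, PiLp.smul_apply, smul_eq_mul]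
    field_simp
  · intro x hx
    right
    have hr : 0 < ‖x‖ := norm_pos_iff.mpr hx
    have hn := norm_sq4 x
    have hr2 : 0 < ‖x‖ ^ 2 := by positivity
    constructor
    · obtain ⟨c, d, h0, hm⟩ := exists_perp (x 0) (x 1)
      refine ⟨!₂[c, d, 0, 0], ?_⟩
      rw [wLO_hess x _ hx (x 0 ^ 2 + x 1 ^ 2 - x 2 ^ 2 - x 3 ^ 2) (c ^ 2 + d ^ 2) 1 hm.le]
      · have : 0 < 2 * 1 * ‖x‖ ^ 2 - (x 0 ^ 2 + x 1 ^ 2 - x 2 ^ 2 - x 3 ^ 2) := by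
          nlinarith [sq_nonneg (x 0), sq_nonneg (x 1), sq_nonneg (x 2), sq_nonneg (x 3)]
        positivity
      · intro s
        simp
        linear_combination 2 * s * h0
      · intro s
        rw [norm_sq4, norm_sq4]
        simp
        linear_combination 2 * s * h0
    · obtain ⟨c, d, h0, hm⟩ := exists_perp (x 2) (x 3)
      refine ⟨!₂[0, 0, c, d], ?_⟩
      rw [wLO_hess x _ hx (x 0 ^ 2 + x 1 ^ 2 - x 2 ^ 2 - x 3 ^ 2) (c ^ 2 + d ^ 2) (-1) hm.le]
      · have : 2 * (-1) * ‖x‖ ^ 2 - (x 0 ^ 2 + x 1 ^ 2 - x 2 ^ 2 - x 3 ^ 2) < 0 := by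
          nlinarith [sq_nonneg (x 0), sq_nonneg (x 1), sq_nonneg (x 2), sq_nonneg (x 3)]
        exact div_neg_of_neg_of_pos (mul_neg_of_pos_of_neg hm this) (by positivity)
      · intro s
        simp
        linear_combination (-2) * s * h0
      · intro s
        rw [norm_sq4, norm_sq4]
        simp
        linear_combination 2 * s * h0
  · rintro ⟨l, hl⟩
    have hne : (EuclideanSpace.single 0 1 : EuclideanSpace ℝ (Fin 4)) ≠ 0 := by simp
    have h1 := hl _ hne
    have h2 := hl _ (neg_ne_zero.mpr hne)
    rw [map_neg, ← h1] at h2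
    simp [wLO] at h2
    norm_num at h2
end

section
/- Let Q(x,y,z) = x³ + axyz + bxz² + cyz² + dz³ with a, b, c, d ∈ ℝ, and suppose that for every e ∈ ℝ³ the quadratic form Q_e = ∂_e Q is degenerate (its 3×3 symmetric matrix is singular). Then a = 0 and c = 0; in particular Q = x³ + bxz² + dz³ is a function of the two variables x and z. -/
open MvPolynomial

/-- If all the directional derivatives of the singular cubic
`Q = x³ + axyz + bxz² + cyz² + dz³` are degenerate quadratic forms, then `a = 0` and
`c = 0`, so `Q = x³ + bxz² + dz³` depends only on the two variables `x, z`. -/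
theorem singular_cubic_degenerate_implies_two_variables (a b c d : ℝ)
    (h_deg : ∀ e : Fin 3 → ℝ,
      hessDet (dirDeriv e
        (X 0 ^ 3 + C a * X 0 * X 1 * X 2 + C b * X 0 * X 2 ^ 2 +
          C c * X 1 * X 2 ^ 2 + C d * X 2 ^ 3)) = 0) :
    a = 0 ∧ c = 0 := by
  have key : ∀ x z : ℝ, (6 * x) * (a * x + 2 * c * z) ^ 2 +
      (a * z) ^ 2 * (2 * b * x + 6 * d * z)
      - 2 * (a * z) * (2 * b * z) * (a * x + 2 * c * z) = 0 := by
    intro x z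
    have h := h_deg ![x, 0, z]
    simp [hessDet, dirDeriv, Matrix.det_fin_three, Fin.sum_univ_three, pderiv_X,
      Derivation.leibniz, Derivation.leibniz_pow, Pi.single_apply] at h
    have h2 : (constantCoeff (2 : MvPolynomial (Fin 3) ℝ) : ℝ) = 2 := map_ofNat _ 2
    have h3 : (constantCoeff (3 : MvPolynomial (Fin 3) ℝ) : ℝ) = 3 := map_ofNat _ 3
    rw [h2, h3] at h
    linarith
  have ha : a = 0 := by
    have h := key 1 0
    have : a ^ 2 = 0 := by linarith
    exact pow_eq_zero_iff (two_ne_zero) |>.1 this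
  subst ha
  refine ⟨rfl, ?_⟩
  have h := key 1 1
  have : c ^ 2 = 0 := by linarith
  exact pow_eq_zero_iff (two_ne_zero) |>.1 this
end

section
/- Let Q(x,y,z) = z(x² + ay² + bz² + cxz + dyz) with a, b, c, d ∈ ℝ, and suppose that for every e ∈ ℝ³ the quadratic form Q_e = ∂_e Q is degenerate (its 3×3 symmetric matrix is singular). Then a = 0 and d = 0; in particular Q = z(x² + bz² + cxz) is a function of the two variables x and z. -/
open MvPolynomial

/-- If all the directional derivatives of the reducible cubic
`Q = z(x² + ay² + bz² + cxz + dyz)` are degenerate quadratic forms, then `a = 0` and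
`d = 0`, so `Q = z(x² + bz² + cxz)` depends only on the two variables `x, z`. -/
theorem reducible_cubic_degenerate_implies_two_variables (a b c d : ℝ)
    (h_deg : ∀ e : Fin 3 → ℝ,
      hessDet (dirDeriv e
        (X 2 * (X 0 ^ 2 + C a * X 1 ^ 2 + C b * X 2 ^ 2 +
          C c * X 0 * X 2 + C d * X 1 * X 2))) = 0) :
    a = 0 ∧ d = 0 := by
  have key : ∀ e : Fin 3 → ℝ,
      2 * e 2 * (2 * a * e 2 * (6 * b * e 2 + 2 * c * e 0 + 2 * d * e 1)
        - (2 * a * e 1 + 2 * d * e 2) ^ 2)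
        - (2 * e 0 + 2 * c * e 2) ^ 2 * (2 * a * e 2) = 0 := by
    intro e
    rw [← h_deg e]
    have h2 : (constantCoeff (2 : MvPolynomial (Fin 3) ℝ)) = 2 := map_ofNat _ 2
    simp [hessDet, dirDeriv, Matrix.det_fin_three, Fin.sum_univ_three, pderiv_X, Pi.single_apply,
      Derivation.leibniz_pow, h2]
    ring
  have h0 := key ![0, 0, 1]
  have h1 := key ![1, 0, 1]
  have h2 := key ![-1, 0, 1]
  simp at h0 h1 h2
  have ha : a = 0 := by linarith
  subst ha
  refine ⟨rfl, ?_⟩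
  have : d ^ 2 = 0 := by nlinarith
  exact pow_eq_zero_iff (two_ne_zero) |>.1 this
end

section
/- Let v : ℝⁿ ∖ {0} → ℝ (n ≥ 2) be real analytic and positively homogeneous of order 1, let l ⊂ ℝⁿ be an affine line not passing through the origin, and suppose the restriction of v to l is an affine function. Let p ⊆ ℝⁿ be the 2-dimensional linear subspace spanned by l. Then the restriction of v to p ∖ {0} is linear, i.e. agrees with the restriction of a linear functional on ℝⁿ. -/
/-- Let `v` be real analytic and positively 1-homogeneous on `ℝⁿ ∖ {0}` (`n ≥ 2`), let
`l = {x₀ + t•d : t ∈ ℝ}` be an affine line not passing through the origin, and suppose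
the restriction of `v` to `l` is affine. Then `v` is linear on `p ∖ {0}`, where
`p = span{x₀, d}` is the 2-dimensional subspace spanned by `l`. -/
theorem homogeneous_affine_on_line_is_linear_on_plane
    (n : ℕ) (hn : 2 ≤ n)
    (v : EuclideanSpace ℝ (Fin n) → ℝ)
    (h_an : AnalyticOnNhd ℝ v {x | x ≠ 0})
    (h_hom : ∀ t : ℝ, 0 < t → ∀ x : EuclideanSpace ℝ (Fin n), x ≠ 0 →
      v (t • x) = t * v x)
    (x₀ d : EuclideanSpace ℝ (Fin n)) (hd : d ≠ 0)
    (h_line : ∀ t : ℝ, x₀ + t • d ≠ 0)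
    (h_aff : ∃ α β : ℝ, ∀ t : ℝ, v (x₀ + t • d) = α * t + β) :
    ∃ ℓ : EuclideanSpace ℝ (Fin n) →ₗ[ℝ] ℝ,
      ∀ x ∈ Submodule.span ℝ {x₀, d}, x ≠ 0 → v x = ℓ x := by
  obtain ⟨α, β, h_aff⟩ := h_aff
  let L : ℝ × ℝ →ₗ[ℝ] EuclideanSpace ℝ (Fin n) :=
    (LinearMap.fst ℝ ℝ ℝ).smulRight x₀ + (LinearMap.snd ℝ ℝ ℝ).smulRight d
  have hL : ∀ q : ℝ × ℝ, L q = q.1 • x₀ + q.2 • d := fun q => rfl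
  have hfac : ∀ q : ℝ × ℝ, q.1 ≠ 0 → L q = q.1 • (x₀ + (q.2 / q.1) • d) := by
    intro q hq
    rw [hL, smul_add, smul_smul, mul_div_cancel₀ _ hq]
  have hker : LinearMap.ker L = ⊥ := by
    rw [LinearMap.ker_eq_bot']
    intro q hq
    by_cases h1 : q.1 = 0
    · rw [hL, h1, zero_smul, zero_add, smul_eq_zero] at hq
      exact Prod.ext h1 (hq.resolve_right hd)
    · rw [hfac q h1, smul_eq_zero] at hq
      exact absurd (hq.resolve_left h1) (h_line _)
  obtain ⟨M, hM⟩ := L.exists_leftInverse_of_injective hker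
  let G : ℝ × ℝ →ₗ[ℝ] ℝ := β • LinearMap.fst ℝ ℝ ℝ + α • LinearMap.snd ℝ ℝ ℝ
  have hG : ∀ q : ℝ × ℝ, G q = β * q.1 + α * q.2 := fun q => rfl
  have hLan : ∀ q, AnalyticAt ℝ (fun q => L q) q :=
    fun q => (LinearMap.toContinuousLinearMap L).analyticAt q
  have hGan : ∀ q, AnalyticAt ℝ (fun q => G q) q :=
    fun q => (LinearMap.toContinuousLinearMap G).analyticAt q
  have hinj : ∀ q : ℝ × ℝ, q ≠ 0 → L q ≠ 0 := fun q hq h =>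
    hq ((LinearMap.ker_eq_bot'.1 hker) q h)
  have key : Set.EqOn (fun q => v (L q)) (fun q => G q) ({0}ᶜ : Set (ℝ × ℝ)) := by
    refine AnalyticOnNhd.eqOn_of_preconnected_of_eventuallyEq (𝕜 := ℝ) (z₀ := ((1 : ℝ), (0 : ℝ)))
      ?_ (fun q _ => hGan q) ?_ (by simp) ?_
    · intro q hq
      exact (h_an (L q) (hinj q hq)).comp (hLan q)
    · refine (isConnected_compl_singleton_of_one_lt_rank ?_ _).isPreconnected
      rw [← Module.finrank_eq_rank]
      simp
    · have : {q : ℝ × ℝ | 0 < q.1} ∈ nhds ((1 : ℝ), (0 : ℝ)) :=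
        (isOpen_lt continuous_const continuous_fst).mem_nhds (by simp)
      filter_upwards [this] with q hq
      have hq : 0 < q.1 := hq
      rw [hfac q hq.ne', h_hom _ hq _ (h_line _), h_aff, hG]
      field_simp
      ring
  refine ⟨G ∘ₗ M, fun x hx hx0 => ?_⟩
  obtain ⟨a, b, rfl⟩ := Submodule.mem_span_pair.1 hx
  have hML : M (L (a, b)) = (a, b) := LinearMap.congr_fun hM (a, b)
  have hab : (a, b) ∈ ({0}ᶜ : Set (ℝ × ℝ)) := by
    intro h
    apply hx0
    have h' : (a, b) = (0 : ℝ × ℝ) := h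
    have := hL (a, b)
    rw [h', map_zero] at this
    rw [Prod.mk_eq_zero] at h'
    simp [h'.1, h'.2]
  have := key hab
  change v (L (a, b)) = G (M (L (a, b)))
  rw [hML]
  exact this
end

section
/- Let v : ℝ³ ∖ {0} → ℝ be real analytic and positively homogeneous of order 1, let p ⊂ ℝ³ be a 2-dimensional linear subspace with v ≡ 0 on p ∖ {0}, and suppose v satisfies a linear uniformly elliptic equation Σ_{i,j} a_{ij}(x) ∂²v/∂x_i∂x_j = 0 on ℝ³ ∖ p, where the coefficients a_{ij} are continuous on ℝ³ ∖ p and there is C ≥ 1 with (1/C)|ξ|² ≤ Σ a_{ij}(x)ξ_iξ_j ≤ C|ξ|² for all x ∈ ℝ³ ∖ p and ξ ∈ ℝ³. Then ∂_e v ≡ 0 for every vector e ∈ p, and consequently v is a linear function. -/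
open MeasureTheory in
lemma aux_integral_jacobian (F G : ℝ × ℝ → ℝ) (hF : ContDiff ℝ 1 F)
    (hFc : HasCompactSupport F) (hG : ContDiff ℝ 2 G) :
    ∫ z, (fderiv ℝ F z (1, 0) * fderiv ℝ G z (0, 1)
      - fderiv ℝ F z (0, 1) * fderiv ℝ G z (1, 0)) = 0 := by
  have hG' : ContDiff ℝ 1 (fderiv ℝ G) := hG.fderiv_right (by norm_num)
  have hF' : Continuous (fderiv ℝ F) := hF.continuous_fderiv (by norm_num)
  have hFc' : ∀ u, HasCompactSupport (fun z => fderiv ℝ F z u) := fun u =>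
    hFc.fderiv_apply ℝ u
  have hg : ∀ u, ContDiff ℝ 1 (fun z => fderiv ℝ G z u) := fun u =>
    hG'.clm_apply contDiff_const
  have hdG : ∀ z u w, fderiv ℝ (fun z => fderiv ℝ G z u) z w
      = fderiv ℝ (fderiv ℝ G) z w u := by
    intro z u w
    rw [fderiv_clm_apply (hG'.differentiable (by norm_num) z) (by fun_prop)]
    simp
  have hI1 : ∀ u w, Integrable (fun z => fderiv ℝ F z u * fderiv ℝ G z w) := fun u w =>
    Continuous.integrable_of_hasCompactSupport
      ((hF'.clm_apply continuous_const).mul (hg w).continuous) ((hFc' u).mul_right)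
  have key : ∀ u w, ∫ z, F z * fderiv ℝ (fun z => fderiv ℝ G z w) z u
      = - ∫ z, fderiv ℝ F z u * fderiv ℝ G z w := by
    intro u w
    apply integral_mul_fderiv_eq_neg_fderiv_mul_of_integrable (hI1 u w)
    · exact Continuous.integrable_of_hasCompactSupport
        (hF.continuous.mul (((hg w).continuous_fderiv (by norm_num)).clm_apply continuous_const))
        hFc.mul_right
    · exact Continuous.integrable_of_hasCompactSupport
        (hF.continuous.mul (hg w).continuous) hFc.mul_right
    · exact fun x _ => hF.differentiable (by norm_num) x
    · exact fun x _ => (hg w).differentiable (by norm_num) x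
  rw [integral_sub (hI1 _ _) (hI1 _ _)]
  have h1 := key (1, 0) (0, 1)
  have h2 := key (0, 1) (1, 0)
  have h3 : ∫ z, F z * fderiv ℝ (fun z => fderiv ℝ G z (0, 1)) z (1, 0)
      = ∫ z, F z * fderiv ℝ (fun z => fderiv ℝ G z (1, 0)) z (0, 1) := by
    congr 1
    ext z
    rw [hdG, hdG]
    rw [(hG.contDiffAt.isSymmSndFDerivAt (by simp) : IsSymmSndFDerivAt ℝ G z) (1, 0) (0, 1)]
  linarith

lemma aux_max_principle (W G : ℝ × ℝ → ℝ) (hW : ContDiff ℝ 1 W) (hG : ContDiff ℝ 2 G)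
    (hdet : ∀ z, fderiv ℝ W z (1, 0) * fderiv ℝ G z (0, 1)
      - fderiv ℝ W z (0, 1) * fderiv ℝ G z (1, 0) ≤ 0)
    (hdet0 : ∀ z, fderiv ℝ W z (1, 0) * fderiv ℝ G z (0, 1)
      - fderiv ℝ W z (0, 1) * fderiv ℝ G z (1, 0) = 0 →
      fderiv ℝ W z (1, 0) = 0 ∧ fderiv ℝ W z (0, 1) = 0)
    (hbd : ∀ k > 0, ∃ R, ∀ z, k < W z → ‖z‖ ≤ R) (z : ℝ × ℝ) : W z ≤ 0 := by
  apply le_of_forall_pos_le_add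
  intro k hk
  rw [zero_add]
  have hΦ : ContDiff ℝ 1 expNegInvGlue := expNegInvGlue.contDiff (n := 1)
  set F : ℝ × ℝ → ℝ := fun z => expNegInvGlue (W z - k) with hFdef
  have hF : ContDiff ℝ 1 F := hΦ.comp (hW.sub contDiff_const)
  obtain ⟨R, hR⟩ := hbd k hk
  have hFc : HasCompactSupport F := by
    apply HasCompactSupport.intro (isCompact_closedBall (0 : ℝ × ℝ) R)
    intro x hx
    apply expNegInvGlue.zero_of_nonpos
    by_contra h
    exact hx (by simpa using hR x (by linarith))
  have hFd : ∀ z u, fderiv ℝ F z u = deriv expNegInvGlue (W z - k) * fderiv ℝ W z u := by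
    intro z u
    have h1 : HasFDerivAt F (deriv expNegInvGlue (W z - k) • fderiv ℝ W z) z := by
      have h2 : HasFDerivAt (fun z => W z - k) (fderiv ℝ W z) z :=
        (hW.differentiable (by norm_num) z).hasFDerivAt.sub_const k
      have h3 : HasDerivAt expNegInvGlue (deriv expNegInvGlue (W z - k)) (W z - k) :=
        (hΦ.differentiable (by norm_num) _).hasDerivAt
      exact HasDerivAt.comp_hasFDerivAt (f := fun z => W z - k) z h3 h2
    rw [h1.fderiv]; simp
  have hpos : ∀ z, 0 ≤ deriv expNegInvGlue (W z - k) := fun z =>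
    expNegInvGlue.monotone.deriv_nonneg
  have hint := aux_integral_jacobian F G hF hFc hG
  have hF' : Continuous (fderiv ℝ F) := hF.continuous_fderiv (by norm_num)
  have hG' : Continuous (fderiv ℝ G) := hG.continuous_fderiv (by norm_num)
  set J : ℝ × ℝ → ℝ := fun z => - (fderiv ℝ F z (1, 0) * fderiv ℝ G z (0, 1)
      - fderiv ℝ F z (0, 1) * fderiv ℝ G z (1, 0)) with hJ
  have hJ' : ∀ z, J z = deriv expNegInvGlue (W z - k) *
      -(fderiv ℝ W z (1, 0) * fderiv ℝ G z (0, 1)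
      - fderiv ℝ W z (0, 1) * fderiv ℝ G z (1, 0)) := by
    intro z; simp only [hJ, hFd]; ring
  have hJnn : 0 ≤ J := fun z => by
    rw [hJ']; exact mul_nonneg (hpos z) (by have := hdet z; linarith)
  have hJc : Continuous J := by
    simp only [hJ]
    fun_prop
  have hJs : HasCompactSupport J := by
    have := ((hFc.fderiv_apply ℝ (1, 0)).mul_right (f' := fun z => fderiv ℝ G z (0, 1))).sub
      ((hFc.fderiv_apply ℝ (0, 1)).mul_right (f' := fun z => fderiv ℝ G z (1, 0)))
    exact this.neg
  have hJ0 : ∀ z, J z = 0 := by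
    intro z
    by_contra h
    have := hJc.integral_pos_of_hasCompactSupport_nonneg_nonzero (μ := MeasureTheory.volume)
      hJs hJnn h
    rw [hJ, MeasureTheory.integral_neg, hint] at this
    simp at this
  have hF0 : ∀ z, fderiv ℝ F z = 0 := by
    intro z
    have h10 : fderiv ℝ F z (1, 0) = 0 ∧ fderiv ℝ F z (0, 1) = 0 := by
      have := hJ0 z
      rw [hJ'] at this
      rw [hFd, hFd]
      rcases mul_eq_zero.1 this with h | h
      · simp [h]
      · have := hdet0 z (by linarith)
        simp [this.1, this.2]
    ext <;> simp [h10.1, h10.2]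
  have hconst := is_const_of_fderiv_eq_zero (hF.differentiable (by norm_num)) hF0
  have hz : F z = 0 := by
    rw [hconst z (|R| + 1, 0)]
    apply expNegInvGlue.zero_of_nonpos
    by_contra h
    have h1 := hR (|R| + 1, 0) (by linarith)
    have h2 := (norm_fst_le ((|R| + 1, 0) : ℝ × ℝ)).trans h1
    have h3 := (le_abs_self _).trans h2
    have := le_abs_self R
    simp at h3
    linarith
  have := expNegInvGlue.zero_iff_nonpos.1 hz
  linarith

lemma aux_algebra (A : Fin 3 → Fin 3 → ℝ)
    (hA : ∀ ξ : Fin 3 → ℝ, ξ ≠ 0 → 0 < ∑ i, ∑ j, A i j * ξ i * ξ j)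
    (α β : Fin 3 → ℝ) (hind : ∀ r s : ℝ, r • α + s • β = 0 → r = 0 ∧ s = 0)
    (H11 H12 H22 : ℝ)
    (heq : ∑ i, ∑ j, A i j * (H11 * (α i * α j) + H12 * (α i * β j + β i * α j)
      + H22 * (β i * β j)) = 0) :
    H11 * H22 - H12 * H12 ≤ 0 ∧ (H11 * H22 - H12 * H12 = 0 → H11 = 0 ∧ H12 = 0) := by
  set P := ∑ i, ∑ j, A i j * α i * α j with hP
  set Q := ∑ i, ∑ j, A i j * (α i * β j + β i * α j) with hQ
  set R := ∑ i, ∑ j, A i j * β i * β j with hR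
  have hq : ∀ r s : ℝ, (r ≠ 0 ∨ s ≠ 0) → 0 < r ^ 2 * P + r * s * Q + s ^ 2 * R := by
    intro r s hrs
    have := hA (r • α + s • β) (fun h => by
      obtain ⟨h1, h2⟩ := hind r s h
      simp [h1, h2] at hrs)
    convert this using 1
    simp only [hP, hQ, hR, Fin.sum_univ_three, Pi.add_apply, Pi.smul_apply, smul_eq_mul]
    ring
  have he : H11 * P + H12 * Q + H22 * R = 0 := by
    rw [← heq]
    simp only [hP, hQ, hR, Fin.sum_univ_three]
    ring
  have hPpos : 0 < P := by simpa using hq 1 0 (by simp)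
  have hid : P * (H11 * H22 - H12 * H12)
      = - (H12 ^ 2 * P + H12 * H22 * Q + H22 ^ 2 * R) := by
    linear_combination H22 * he
  by_cases h : H12 ≠ 0 ∨ H22 ≠ 0
  · have h1 := hq _ _ h
    have h2 : H11 * H22 - H12 * H12 < 0 := by
      by_contra h3
      have := mul_nonneg hPpos.le (not_lt.1 h3)
      linarith
    exact ⟨h2.le, fun h => absurd h h2.ne⟩
  · push Not at h
    obtain ⟨h1, h2⟩ := h
    rw [h1, h2] at he
    simp [hPpos.ne'] at he
    simp [h1, he]

lemma aux_fderiv_hom (v : EuclideanSpace ℝ (Fin 3) → ℝ)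
    (h_hom : ∀ t : ℝ, 0 < t → ∀ x : EuclideanSpace ℝ (Fin 3), x ≠ 0 →
      v (t • x) = t * v x) (t : ℝ) (ht : 0 < t) (x : EuclideanSpace ℝ (Fin 3)) (hx : x ≠ 0) :
    fderiv ℝ v (t • x) = fderiv ℝ v x := by
  have h1 : (fun y => v (t • y)) =ᶠ[nhds x] (t • v) := by
    filter_upwards [isOpen_ne.mem_nhds hx] with y hy
    simp [h_hom t ht y hy]
  have h2 := h1.fderiv_eq (𝕜 := ℝ)
  rw [fderiv_comp_smul, fderiv_const_smul_field] at h2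
  exact smul_right_injective _ ht.ne' h2

lemma aux_hess_ker (v : EuclideanSpace ℝ (Fin 3) → ℝ)
    (h_an : AnalyticOnNhd ℝ v {x | x ≠ 0})
    (h_hom : ∀ t : ℝ, 0 < t → ∀ x : EuclideanSpace ℝ (Fin 3), x ≠ 0 →
      v (t • x) = t * v x) (x : EuclideanSpace ℝ (Fin 3)) (hx : x ≠ 0) :
    fderiv ℝ (fderiv ℝ v) x x = 0 := by
  have hd : HasFDerivAt (fderiv ℝ v) (fderiv ℝ (fderiv ℝ v) x) ((1 : ℝ) • x) := by
    rw [one_smul]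
    exact (h_an.fderiv x hx).differentiableAt.hasFDerivAt
  have h1 : HasDerivAt (fun t : ℝ => t • x) x 1 := by
    simpa using (hasDerivAt_id (1 : ℝ)).smul_const x
  have h2 := hd.comp_hasDerivAt (1 : ℝ) h1
  have h3 : (fderiv ℝ v ∘ fun t : ℝ => t • x) =ᶠ[nhds 1] fun _ => fderiv ℝ v x := by
    filter_upwards [lt_mem_nhds (zero_lt_one (α := ℝ))] with t ht
    exact aux_fderiv_hom v h_hom t ht x hx
  exact (h2.congr_of_eventuallyEq h3.symm).unique (hasDerivAt_const _ _)

lemma aux_on_plane (v : EuclideanSpace ℝ (Fin 3) → ℝ)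
    (h_an : AnalyticOnNhd ℝ v {x | x ≠ 0})
    (p : Submodule ℝ (EuclideanSpace ℝ (Fin 3)))
    (h_van : ∀ x ∈ p, x ≠ 0 → v x = 0) (e x : EuclideanSpace ℝ (Fin 3)) (he : e ∈ p)
    (hxp : x ∈ p) (hx : x ≠ 0) : fderiv ℝ v x e = 0 := by
  have hd : HasFDerivAt v (fderiv ℝ v x) (x + (0 : ℝ) • e) := by
    rw [zero_smul, add_zero]
    exact (h_an x hx).differentiableAt.hasFDerivAt
  have h1 : HasDerivAt (fun t : ℝ => x + t • e) e 0 := by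
    simpa using ((hasDerivAt_id (0 : ℝ)).smul_const e).const_add x
  have h2 := hd.comp_hasDerivAt (0 : ℝ) h1
  have h3 : (v ∘ fun t : ℝ => x + t • e) =ᶠ[nhds 0] fun _ => 0 := by
    have hc : ContinuousAt (fun t : ℝ => x + t • e) 0 := h1.continuousAt
    have := hc.eventually (isOpen_ne.mem_nhds (by simpa using hx : x + (0 : ℝ) • e ≠ 0))
    filter_upwards [this] with t ht
    exact h_van _ (p.add_mem hxp (p.smul_mem t he)) ht
  exact (h2.congr_of_eventuallyEq h3.symm).unique (hasDerivAt_const _ _)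

lemma aux_main (v : EuclideanSpace ℝ (Fin 3) → ℝ)
    (h_an : AnalyticOnNhd ℝ v {x | x ≠ 0})
    (h_hom : ∀ t : ℝ, 0 < t → ∀ x : EuclideanSpace ℝ (Fin 3), x ≠ 0 →
      v (t • x) = t * v x)
    (p : Submodule ℝ (EuclideanSpace ℝ (Fin 3)))
    (h_van : ∀ x ∈ p, x ≠ 0 → v x = 0)
    (a : Fin 3 → Fin 3 → EuclideanSpace ℝ (Fin 3) → ℝ)
    (C : ℝ) (hC : 1 ≤ C)
    (h_ell : ∀ x : EuclideanSpace ℝ (Fin 3), x ∉ p →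
      ∀ ξ : EuclideanSpace ℝ (Fin 3),
        (1 / C) * ‖ξ‖ ^ 2 ≤ ∑ i, ∑ j, a i j x * ξ i * ξ j ∧
        ∑ i, ∑ j, a i j x * ξ i * ξ j ≤ C * ‖ξ‖ ^ 2)
    (h_eq : ∀ x : EuclideanSpace ℝ (Fin 3), x ∉ p →
      ∑ i, ∑ j, a i j x *
        iteratedFDeriv ℝ 2 v x ![EuclideanSpace.single i 1, EuclideanSpace.single j 1] = 0)
    (b : Module.Basis (Fin 3) ℝ (EuclideanSpace ℝ (Fin 3)))
    (hb0 : b 0 ∈ p) (hb1 : b 1 ∈ p) (hb2 : b 2 ∉ p) :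
    fderiv ℝ v (b 2) (b 0) ≤ 0 := by
  set e := b 0 with he
  set e' := b 1 with he'
  set n := b 2 with hn
  set c : Fin 3 → EuclideanSpace ℝ (Fin 3) →L[ℝ] ℝ :=
    fun i => LinearMap.toContinuousLinearMap (b.coord i) with hc
  have hcb : ∀ i j, c i (b j) = if j = i then 1 else 0 := by
    intro i j
    simp [hc, Finsupp.single_apply]
  have hdec : ∀ y, y = c 0 y • e + c 1 y • e' + c 2 y • n := by
    intro y
    have h := b.sum_repr y
    rw [Fin.sum_univ_three] at h
    exact h.symm
  set X : ℝ × ℝ → EuclideanSpace ℝ (Fin 3) := fun z => n + (z.1 • e + z.2 • e') with hX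
  have hXp : ∀ z, X z ∉ p := by
    intro z hz
    apply hb2
    have := p.sub_mem hz (p.add_mem (p.smul_mem z.1 hb0) (p.smul_mem z.2 hb1))
    simpa [hX] using this
  have hX0 : ∀ z, X z ≠ 0 := fun z h => hXp z (h ▸ p.zero_mem)
  have hc0 : ∀ z, c 0 (X z) = z.1 := by
    intro z; simp [hX, he, he', hn, hcb]
  have hc1 : ∀ z, c 1 (X z) = z.2 := by
    intro z; simp [hX, he, he', hn, hcb]
  have hc2 : ∀ z, c 2 (X z) = 1 := by
    intro z; simp [hX, he, he', hn, hcb]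
  have hXs : ContDiff ℝ 2 X := by
    simp only [hX]; fun_prop
  have hD : ∀ u : EuclideanSpace ℝ (Fin 3), ContDiff ℝ 2 (fun z => fderiv ℝ v (X z) u) := by
    intro u
    have h1 : ContDiff ℝ 2 (fun z => fderiv ℝ v (X z)) := by
      rw [contDiff_iff_contDiffAt]
      intro z
      exact ((h_an.fderiv (X z) (hX0 z)).contDiffAt).comp z hXs.contDiffAt
    exact h1.clm_apply contDiff_const
  have hDd : ∀ (u : EuclideanSpace ℝ (Fin 3)) z w, fderiv ℝ (fun z => fderiv ℝ v (X z) u) z w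
      = fderiv ℝ (fderiv ℝ v) (X z) (w.1 • e + w.2 • e') u := by
    intro u z w
    have hXd : HasFDerivAt X ((ContinuousLinearMap.fst ℝ ℝ ℝ).smulRight e
        + (ContinuousLinearMap.snd ℝ ℝ ℝ).smulRight e') z := by
      apply HasFDerivAt.const_add
      exact (hasFDerivAt_fst.smul_const e).add (hasFDerivAt_snd.smul_const e')
    have h1 := (h_an.fderiv (X z) (hX0 z)).differentiableAt.hasFDerivAt.comp z hXd
    have h2 := h1.clm_apply (hasFDerivAt_const u z)
    have h3 := h2.fderiv
    simp only [Function.comp_apply] at h3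
    rw [h3]
    simp
  have hsymm : ∀ z u w, fderiv ℝ (fderiv ℝ v) (X z) u w = fderiv ℝ (fderiv ℝ v) (X z) w u := by
    intro z u w
    exact ((h_an (X z) (hX0 z)).contDiffAt (n := 2)).isSymmSndFDerivAt (by simp) u w
  have hker : ∀ z, fderiv ℝ (fderiv ℝ v) (X z) (X z) = 0 := fun z =>
    aux_hess_ker v h_an h_hom _ (hX0 z)
  have halg : ∀ z, fderiv ℝ (fderiv ℝ v) (X z) e e * fderiv ℝ (fderiv ℝ v) (X z) e' e'
        - fderiv ℝ (fderiv ℝ v) (X z) e e' * fderiv ℝ (fderiv ℝ v) (X z) e e' ≤ 0 ∧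
      (fderiv ℝ (fderiv ℝ v) (X z) e e * fderiv ℝ (fderiv ℝ v) (X z) e' e'
        - fderiv ℝ (fderiv ℝ v) (X z) e e' * fderiv ℝ (fderiv ℝ v) (X z) e e' = 0 →
      fderiv ℝ (fderiv ℝ v) (X z) e e = 0 ∧ fderiv ℝ (fderiv ℝ v) (X z) e e' = 0) := by
    intro z
    set A : EuclideanSpace ℝ (Fin 3) →L[ℝ] ℝ := c 0 - z.1 • c 2 with hA
    set B : EuclideanSpace ℝ (Fin 3) →L[ℝ] ℝ := c 1 - z.2 • c 2 with hB
    have hdec' : ∀ y, y = A y • e + B y • e' + c 2 y • X z := by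
      intro y
      conv_lhs => rw [hdec y]
      simp only [hA, hB, hX, ContinuousLinearMap.sub_apply, ContinuousLinearMap.smul_apply,
        smul_eq_mul]
      module
    have hHe : ∀ y w, fderiv ℝ (fderiv ℝ v) (X z) y w
        = fderiv ℝ (fderiv ℝ v) (X z) e e * (A y * A w)
        + fderiv ℝ (fderiv ℝ v) (X z) e e' * (A y * B w + B y * A w)
        + fderiv ℝ (fderiv ℝ v) (X z) e' e' * (B y * B w) := by
      intro y w
      have h0 : ∀ y, fderiv ℝ (fderiv ℝ v) (X z) y (X z) = 0 := by
        intro y; rw [hsymm, hker]; simp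
      conv_lhs => rw [hdec' y, hdec' w]
      simp only [map_add, map_smul, ContinuousLinearMap.add_apply, ContinuousLinearMap.smul_apply,
        hker, h0, smul_eq_mul, ContinuousLinearMap.zero_apply]
      rw [hsymm z e' e]
      ring
    apply aux_algebra (fun i j => a i j (X z)) ?_
      (fun i => A (EuclideanSpace.single i 1)) (fun i => B (EuclideanSpace.single i 1))
    · intro r s hrs
      have hz : r • A + s • B = 0 := by
        apply ContinuousLinearMap.coe_injective
        apply (EuclideanSpace.basisFun (Fin 3) ℝ).toBasis.ext
        intro i
        simpa using congrFun hrs i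
      have h1 := congrArg (fun f => f e) hz
      have h2 := congrArg (fun f => f e') hz
      simp [hA, hB, he, he', hcb] at h1 h2
      exact ⟨h1, h2⟩
    · have := h_eq (X z) (hXp z)
      simp only [iteratedFDeriv_two_apply, Matrix.cons_val_zero, Matrix.cons_val_one] at this
      rw [← this]
      refine Finset.sum_congr rfl fun i _ => Finset.sum_congr rfl fun j _ => ?_
      rw [hHe (EuclideanSpace.single i 1)]
    · intro ξ hξ
      have h1 := (h_ell (X z) (hXp z) (WithLp.toLp 2 ξ)).1
      refine lt_of_lt_of_le ?_ h1
      have : 0 < ‖(WithLp.toLp 2 ξ : EuclideanSpace ℝ (Fin 3))‖ := by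
        rw [norm_pos_iff]
        simpa using hξ
      have : 0 < C := by linarith
      positivity
  have hfin := aux_max_principle (fun z => fderiv ℝ v (X z) e) (fun z => fderiv ℝ v (X z) e')
    ((hD e).of_le (by norm_num)) (hD e') ?_ ?_ ?_ (0, 0)
  · simpa [hX] using hfin
  · intro z
    simp only [hDd, one_smul, zero_smul, add_zero, zero_add]
    rw [hsymm z e' e]
    exact (halg z).1
  · intro z
    simp only [hDd, one_smul, zero_smul, add_zero, zero_add]
    rw [hsymm z e' e]
    exact (halg z).2
  · intro k hk
    have hcont : ContinuousOn (fun y => fderiv ℝ v y e)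
        (Metric.sphere (0 : EuclideanSpace ℝ (Fin 3)) 1) := by
      intro y hy
      have hy0 : y ≠ 0 := by rintro rfl; simp at hy
      exact ((h_an.fderiv y hy0).continuousAt.clm_apply continuousAt_const).continuousWithinAt
    have hK : IsCompact (Metric.sphere (0 : EuclideanSpace ℝ (Fin 3)) 1 ∩
        (fun y => fderiv ℝ v y e) ⁻¹' Set.Ici k) :=
      (isCompact_sphere _ _).of_isClosed_subset
        (hcont.preimage_isClosed_of_isClosed Metric.isClosed_sphere isClosed_Ici)
        Set.inter_subset_left
    obtain ⟨δ, hδ, hδK⟩ := hK.exists_forall_le' (f := fun y => |c 2 y|) (a := 0)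
      (by fun_prop) (by
        rintro y ⟨hy, hyk⟩
        apply abs_pos.2
        intro h0
        have hy0 : y ≠ 0 := by rintro rfl; simp at hy
        have hyp : y ∈ p := by
          rw [hdec y, h0, zero_smul, add_zero]
          exact p.add_mem (p.smul_mem _ hb0) (p.smul_mem _ hb1)
        have := aux_on_plane v h_an p h_van e y hb0 hyp hy0
        simp only [Set.mem_preimage, Set.mem_Ici, this] at hyk
        linarith)
    refine ⟨max (‖c 0‖ * (1 / δ)) (‖c 1‖ * (1 / δ)), fun z hz => ?_⟩
    have hpos : 0 < ‖X z‖ := norm_pos_iff.2 (hX0 z)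
    have hmem := hδK (‖X z‖⁻¹ • X z) ⟨by simp [norm_smul, hpos.ne'], by
      simp only [Set.mem_preimage, Set.mem_Ici]
      rw [aux_fderiv_hom v h_hom _ (inv_pos.2 hpos) _ (hX0 z)]
      exact hz.le⟩
    rw [map_smul, hc2, smul_eq_mul, mul_one, abs_of_pos (inv_pos.2 hpos)] at hmem
    have hle : ‖X z‖ ≤ 1 / δ := by
      rw [one_div]
      exact (le_inv_comm₀ hδ hpos).1 hmem
    rw [Prod.norm_def]
    apply max_le_max
    · rw [← hc0 z]
      exact ((c 0).le_opNorm _).trans (by gcongr)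
    · rw [← hc1 z]
      exact ((c 1).le_opNorm _).trans (by gcongr)

/-- Let `v` be real analytic and positively 1-homogeneous on `ℝ³ ∖ {0}`, vanishing on a
2-dimensional linear subspace `p`, and solving a linear uniformly elliptic equation
`Σ aᵢⱼ(x) ∂²v/∂xᵢ∂xⱼ = 0` on `ℝ³ ∖ p` with continuous coefficients. Then every
directional derivative `∂ₑv` with `e ∈ p` vanishes identically, and consequently `v`
is a linear function. -/
theorem homogeneous_vanishing_on_plane_is_linear
    (v : EuclideanSpace ℝ (Fin 3) → ℝ)
    (h_an : AnalyticOnNhd ℝ v {x | x ≠ 0})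
    (h_hom : ∀ t : ℝ, 0 < t → ∀ x : EuclideanSpace ℝ (Fin 3), x ≠ 0 →
      v (t • x) = t * v x)
    (p : Submodule ℝ (EuclideanSpace ℝ (Fin 3))) (hp : Module.finrank ℝ p = 2)
    (h_van : ∀ x ∈ p, x ≠ 0 → v x = 0)
    (a : Fin 3 → Fin 3 → EuclideanSpace ℝ (Fin 3) → ℝ)
    (h_cont : ∀ i j, ContinuousOn (a i j) {x | x ∉ p})
    (C : ℝ) (hC : 1 ≤ C)
    (h_ell : ∀ x : EuclideanSpace ℝ (Fin 3), x ∉ p →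
      ∀ ξ : EuclideanSpace ℝ (Fin 3),
        (1 / C) * ‖ξ‖ ^ 2 ≤ ∑ i, ∑ j, a i j x * ξ i * ξ j ∧
        ∑ i, ∑ j, a i j x * ξ i * ξ j ≤ C * ‖ξ‖ ^ 2)
    (h_eq : ∀ x : EuclideanSpace ℝ (Fin 3), x ∉ p →
      ∑ i, ∑ j, a i j x *
        iteratedFDeriv ℝ 2 v x ![EuclideanSpace.single i 1, EuclideanSpace.single j 1] = 0) :
    (∀ e ∈ p, ∀ x : EuclideanSpace ℝ (Fin 3), x ≠ 0 → fderiv ℝ v x e = 0) ∧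
    ∃ ℓ : EuclideanSpace ℝ (Fin 3) →ₗ[ℝ] ℝ,
      ∀ x : EuclideanSpace ℝ (Fin 3), x ≠ 0 → v x = ℓ x := by
  have hle : ∀ e ∈ p, ∀ n, n ∉ p → fderiv ℝ v n e ≤ 0 := by
    intro e he n hn
    by_cases he0 : e = 0
    · simp [he0]
    obtain ⟨e', he', hee'⟩ : ∃ e' ∈ p, e' ∉ Submodule.span ℝ {e} := by
      by_contra! h
      have h1 : p ≤ Submodule.span ℝ {e} := h
      have h2 := Submodule.finrank_mono h1
      rw [hp, finrank_span_singleton he0] at h2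
      omega
    have hli : LinearIndependent ℝ ![e, e', n] := by
      rw [Fintype.linearIndependent_iff]
      intro g hg
      simp only [Fin.sum_univ_three, Matrix.cons_val_zero, Matrix.cons_val_one,
        Matrix.cons_val] at hg
      have g2 : g 2 = 0 := by
        by_contra h
        apply hn
        have h1 : g 2 • n ∈ p := by
          have : g 2 • n = -(g 0 • e + g 1 • e') := by
            rw [eq_neg_iff_add_eq_zero, ← hg]; abel
          rw [this]
          exact p.neg_mem (p.add_mem (p.smul_mem _ he) (p.smul_mem _ he'))
        exact (p.smul_mem_iff h).1 h1
      rw [g2, zero_smul, add_zero] at hg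
      have g1 : g 1 = 0 := by
        by_contra h
        apply hee'
        have h1 : g 1 • e' ∈ Submodule.span ℝ {e} := by
          have : g 1 • e' = -(g 0 • e) := by
            rw [eq_neg_iff_add_eq_zero, ← hg]; abel
          rw [this]
          exact Submodule.neg_mem _ (Submodule.smul_mem _ _ (Submodule.mem_span_singleton_self e))
        exact (Submodule.smul_mem_iff _ h).1 h1
      rw [g1, zero_smul, add_zero] at hg
      have g0 : g 0 = 0 := (smul_eq_zero.1 hg).resolve_right he0
      intro i
      fin_cases i
      · exact g0
      · exact g1
      · exact g2
    let b := basisOfLinearIndependentOfCardEqFinrank hli (by simp)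
    have hb : ∀ i, b i = ![e, e', n] i := fun i => by simp [b]
    have h0 : b 0 = e := hb 0
    have h1 : b 1 = e' := hb 1
    have h2 : b 2 = n := hb 2
    have := aux_main v h_an h_hom p h_van a C hC h_ell h_eq b (h0 ▸ he) (h1 ▸ he') (h2 ▸ hn)
    rwa [h0, h2] at this
  have hfirst : ∀ e ∈ p, ∀ x : EuclideanSpace ℝ (Fin 3), x ≠ 0 → fderiv ℝ v x e = 0 := by
    intro e he x hx
    by_cases hxp : x ∈ p
    · exact aux_on_plane v h_an p h_van e x he hxp hx
    · apply le_antisymm (hle e he x hxp)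
      have := hle (-e) (p.neg_mem he) x hxp
      rw [map_neg] at this
      linarith
  refine ⟨hfirst, ?_⟩
  obtain ⟨q, hqp, hq0⟩ : ∃ q ∈ p, q ≠ 0 := by
    apply p.exists_mem_ne_zero_of_ne_bot
    rintro rfl
    simp at hp
  refine ⟨(fderiv ℝ v q : EuclideanSpace ℝ (Fin 3) →ₗ[ℝ] ℝ), fun x hx => ?_⟩
  by_cases hxp : x ∈ p
  · rw [h_van x hxp hx]
    exact (hfirst x hxp q hq0).symm
  have hcx : ∀ c : ℝ, 0 < c → v (q + c • x) = c * v x := by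
    intro c hc
    rw [← h_hom c hc x hx]
    have hne : ∀ s : ℝ, c • x + s • q ≠ 0 := by
      intro s h
      apply hxp
      rw [← p.smul_mem_iff hc.ne', eq_neg_of_add_eq_zero_left h]
      exact p.neg_mem (p.smul_mem _ hqp)
    have hder : ∀ s : ℝ, HasDerivAt (fun s : ℝ => v (c • x + s • q)) 0 s := by
      intro s
      have h1 : HasDerivAt (fun t : ℝ => c • x + t • q) q s := by
        simpa using ((hasDerivAt_id s).smul_const q).const_add (c • x)
      have h2 := (h_an _ (hne s)).differentiableAt.hasFDerivAt.comp_hasDerivAt s h1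
      rw [hfirst q hqp _ (hne s)] at h2
      exact h2
    have := is_const_of_deriv_eq_zero (fun s => (hder s).differentiableAt)
      (fun s => (hder s).deriv) 1 0
    simpa [add_comm] using this
  have hd : HasFDerivAt v (fderiv ℝ v q) (q + (0 : ℝ) • x) := by
    rw [zero_smul, add_zero]
    exact (h_an q hq0).differentiableAt.hasFDerivAt
  have h1 : HasDerivAt (fun t : ℝ => q + t • x) x 0 := by
    simpa using ((hasDerivAt_id (0 : ℝ)).smul_const x).const_add q
  have h2 : HasDerivWithinAt (v ∘ fun t : ℝ => q + t • x) (fderiv ℝ v q x) (Set.Ici 0) 0 :=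
    (hd.comp_hasDerivAt (0 : ℝ) h1).hasDerivWithinAt
  have h3 : HasDerivWithinAt (fun t : ℝ => t * v x) (v x) (Set.Ici 0) 0 := by
    simpa using ((hasDerivAt_id (0 : ℝ)).mul_const (v x)).hasDerivWithinAt
  have h4 : HasDerivWithinAt (v ∘ fun t : ℝ => q + t • x) (v x) (Set.Ici 0) 0 := by
    apply h3.congr
    · intro t ht
      rcases (Set.mem_Ici.1 ht).eq_or_lt with h | h
      · subst h
        simp [h_van q hqp hq0]
      · exact hcx t h
    · simp [h_van q hqp hq0]
  exact (uniqueDiffWithinAt_Ici (0 : ℝ)).eq_deriv _ h4 h2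
end
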